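/- Let n ≥ 2, let Ω ⊂ ℝⁿ be a bounded domain with C¹ boundary, and let 1 ≤ p < 2n/(n−2) (p ≥ 1 if n = 2). Let Ω* be the ball centered at the origin with |Ω*| = |Ω|, and let B* be the ball with C_p(B*) = C_p(Ω). Then B* ⊆ Ω*, with equality if and only if Ω = Ω* = B* (i.e., Ω is a ball). -/

import Mathlib

open MeasureTheory Metric Set
open scoped ENNReal NNReal Pointwise

noncomputable section

/-- A bounded set `Ω ⊆ ℝⁿ` has `C¹` boundary if every boundary point admits a local `C¹`
defining function with nonvanishing gradient. -/
def HasC1Boundary {n : ℕ} (Ω : Set (EuclideanSpace ℝ (Fin n))) : Prop :=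
  ∀ x ∈ frontier Ω, ∃ (U : Set (EuclideanSpace ℝ (Fin n)))
    (f : EuclideanSpace ℝ (Fin n) → ℝ),
      IsOpen U ∧ x ∈ U ∧ ContDiff ℝ 1 f ∧ (∀ y ∈ U, fderiv ℝ f y ≠ 0) ∧
      Ω ∩ U = {y | y ∈ U ∧ f y < 0}

/-- Admissible (nontrivial) test functions for the Sobolev quotient on `Ω`; these form a dense
subclass of `W₀^{1,2}(Ω) \ {0}`. -/
def Admissible {n : ℕ} (Ω : Set (EuclideanSpace ℝ (Fin n)))
    (f : EuclideanSpace ℝ (Fin n) → ℝ) : Prop :=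
  ContDiff ℝ 1 f ∧ HasCompactSupport f ∧ tsupport f ⊆ Ω ∧ ∃ x, f x ≠ 0

/-- The Sobolev quotient `Φ_p(f) = ∫_Ω |∇f|² dm / (∫_Ω |f|^p dm)^{2/p}`. -/
def sobolevQuotient {n : ℕ} (p : ℝ) (Ω : Set (EuclideanSpace ℝ (Fin n)))
    (f : EuclideanSpace ℝ (Fin n) → ℝ) : ℝ :=
  (∫ x in Ω, ‖fderiv ℝ f x‖ ^ 2) / (∫ x in Ω, |f x| ^ p) ^ (2 / p)

/-- The Sobolev constant `C_p(Ω)`. -/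
def sobolevConstant {n : ℕ} (p : ℝ) (Ω : Set (EuclideanSpace ℝ (Fin n))) : ℝ :=
  sInf (sobolevQuotient p Ω '' {f | Admissible Ω f})

/-- `u` is a positive extremal function realizing `C_p(Ω)`. -/
def IsExtremal {n : ℕ} (p : ℝ) (Ω : Set (EuclideanSpace ℝ (Fin n)))
    (u : EuclideanSpace ℝ (Fin n) → ℝ) : Prop :=
  Admissible Ω u ∧ (∀ x ∈ Ω, 0 < u x) ∧
    sobolevQuotient p Ω u = sobolevConstant p Ω

/-- The distribution function `μ(t) = |{x ∈ Ω : u(x) > t}|`. -/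
def distFun {n : ℕ} (Ω : Set (EuclideanSpace ℝ (Fin n)))
    (u : EuclideanSpace ℝ (Fin n) → ℝ) (t : ℝ) : ℝ :=
  (volume {x | x ∈ Ω ∧ t < u x}).toReal

/-- The decreasing rearrangement `u*(s) = inf{t ≥ 0 : μ(t) < s}`. -/
def decRearrangement {n : ℕ} (Ω : Set (EuclideanSpace ℝ (Fin n)))
    (u : EuclideanSpace ℝ (Fin n) → ℝ) (s : ℝ) : ℝ :=
  sInf {t : ℝ | 0 ≤ t ∧ distFun Ω u t < s}

/-- `ω_n`, the volume of the unit ball in `ℝⁿ`. -/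
def unitBallVol (n : ℕ) : ℝ :=
  (volume (ball (0 : EuclideanSpace ℝ (Fin n)) 1)).toReal

/-- The Laplacian `Δf = ∑ᵢ ∂²f/∂xᵢ²`. -/
def laplacian {n : ℕ} (f : EuclideanSpace ℝ (Fin n) → ℝ)
    (x : EuclideanSpace ℝ (Fin n)) : ℝ :=
  ∑ i : Fin n, fderiv ℝ (fun y => fderiv ℝ f y (EuclideanSpace.single i 1)) x
    (EuclideanSpace.single i 1)

open Filter Topology Module

/-!
Let `B_ρ` be a ball with `|B_ρ| = |Ω|`. Everything rests on the isoperimetric inequality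
`∫ (n / ρ) h ≤ ∫ |∇h|` for nonnegative `C¹` functions `h` supported in an open set of volume at
most `|B_ρ|`, which is proved by induction on the dimension. Split off a direction and transport the
slice volumes monotonically to the heights of the unit ball. The lower-dimensional inequality on the
slices and an integration by parts along the split direction bound `∫ |∇h|` from below by the
integral of `h` against a divergence, which AM–GM bounds below by `n / ρ`. If `n / ρ` cannot be
increased on any nonnull subset of `Ω`, equality in AM–GM makes the transport affine of slope
`1 / ρ` in every direction. The slices of `Ω` then have the volumes of the slices of a ball of
radius `ρ` centered at the barycenter, so `Ω` lies in that ball and, having the same volume, equals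
it.

Applied to the bands `{s < |f| < t}`, the isoperimetric inequality makes the radial rearrangement of
a test function `f` a competitor on `B_ρ`, whence `C_p(B_ρ) ≤ C_p(Ω)`. If `Ω` is not a ball, the
increased weight makes this strict uniformly in `f`. Let `m` be the `Lᵖ` mean of `f`. Either
`{|f| > θ m}` fits into a smaller ball `B_r`, and the truncation `(|f| - θ m)₊` is compared with
`C_p(B_r) > C_p(B_ρ)`; or it does not, and every band below `θ m` gains a fixed factor while
carrying an energy bounded from below. Since `r ↦ C_p(B_r)` is strictly decreasing by scaling,
comparing constants of balls is comparing radii.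
-/

local notation "𝔼" n:max => EuclideanSpace ℝ (Fin n)

/-! ### Orthogonal splittings and sections of the unit ball -/

section Splitting

variable {N : ℕ} {L : (ℝ × 𝔼 N) ≃L[ℝ] 𝔼(N + 1)}

/-- An identification of `ℝ × ℝᴺ` with `ℝᴺ⁺¹` carrying the two factors to orthogonal subspaces
isometrically. It is stated through norms because the product type carries the sup norm. -/
def IsOrthogonalSplitting (L : (ℝ × 𝔼 N) ≃L[ℝ] 𝔼(N + 1)) : Prop :=
  ∀ s y, ‖L (s, y)‖ ^ 2 = s ^ 2 + ‖y‖ ^ 2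

lemma exists_isOrthogonalSplitting {θ : 𝔼(N + 1)} (hθ : ‖θ‖ = 1) :
    ∃ L : (ℝ × 𝔼 N) ≃L[ℝ] 𝔼(N + 1), IsOrthogonalSplitting L ∧ L (1, 0) = θ := by
  let V := WithLp 2 (ℝ × 𝔼 N)
  have finrank_V : finrank ℝ V = N + 1 := by
    rw [(WithLp.linearEquiv 2 ℝ (ℝ × 𝔼 N)).finrank_eq]
    simp [finrank_prod, add_comm]
  let I : V ≃ₗᵢ[ℝ] 𝔼(N + 1) := ((stdOrthonormalBasis ℝ V).reindex (finCongr finrank_V)).repr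
  let e : V := WithLp.toLp 2 (1, 0)
  have norm_I_e : ‖I e‖ = ‖θ‖ := by
    rw [I.norm_map, hθ, ← sq_eq_sq₀ (norm_nonneg e) zero_le_one, WithLp.prod_norm_sq_eq_of_L2]
    simp [e]
  let J : V ≃ₗᵢ[ℝ] 𝔼(N + 1) := I.trans (ℝ ∙ (I e - θ))ᗮ.reflection
  refine ⟨(WithLp.prodContinuousLinearEquiv 2 ℝ ℝ (𝔼 N)).symm.trans J.toContinuousLinearEquiv,
    fun s y => ?_, Submodule.reflection_sub norm_I_e⟩
  change ‖J (WithLp.toLp 2 (s, y))‖ ^ 2 = _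
  rw [J.norm_map, WithLp.prod_norm_sq_eq_of_L2]
  simp

namespace IsOrthogonalSplitting

lemma measurePreserving (hL : IsOrthogonalSplitting L) : MeasurePreserving L := by
  let J : WithLp 2 (ℝ × 𝔼 N) ≃ₗᵢ[ℝ] 𝔼(N + 1) :=
    { (WithLp.linearEquiv 2 ℝ (ℝ × 𝔼 N)).trans L.toLinearEquiv with
      norm_map' := fun z => by
        rw [← sq_eq_sq₀ (norm_nonneg _) (norm_nonneg _), WithLp.prod_norm_sq_eq_of_L2,
          Real.norm_eq_abs, sq_abs]
        exact hL _ _ }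
  exact J.measurePreserving.comp (WithLp.volume_preserving_toLp ℝ (𝔼 N))

lemma volume_eq_lintegral_slices (hL : IsOrthogonalSplitting L) {U : Set (𝔼(N + 1))}
    (hU : MeasurableSet U) : volume U = ∫⁻ s, volume {y | L (s, y) ∈ U} := by
  rw [← hL.measurePreserving.measure_preimage hU.nullMeasurableSet, Measure.volume_eq_prod,
    Measure.prod_apply (hL.measurePreserving.measurable hU)]
  rfl

lemma integral_comp (hL : IsOrthogonalSplitting L) (f : 𝔼(N + 1) → ℝ) :
    ∫ z, f (L z) = ∫ x, f x :=
  hL.measurePreserving.integral_comp L.toHomeomorph.measurableEmbedding f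

lemma slice_ball (hL : IsOrthogonalSplitting L) {r : ℝ} (hr : 0 ≤ r) (s : ℝ) :
    {y | L (s, y) ∈ ball 0 r} = ball 0 √(r ^ 2 - s ^ 2) := by
  ext y
  rw [mem_ofPred_eq, mem_ball_zero_iff, mem_ball_zero_iff, Real.lt_sqrt (norm_nonneg y),
    ← pow_lt_pow_iff_left₀ (norm_nonneg _) hr two_ne_zero, hL, lt_sub_iff_add_lt']

end IsOrthogonalSplitting

end Splitting

lemma unitBallVol_pos (n : ℕ) : 0 < unitBallVol n :=
  ENNReal.toReal_pos (measure_ball_pos _ _ one_pos).ne' measure_ball_lt_top.ne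

lemma volume_ball_eq_unitBallVol {n : ℕ} (c : 𝔼 n) {r : ℝ} (hr : 0 < r) :
    volume (ball c r) = ENNReal.ofReal (unitBallVol n * r ^ n) := by
  rw [Measure.addHaar_ball_of_pos volume c hr, finrank_euclideanSpace_fin, unitBallVol, mul_comm,
    ENNReal.ofReal_mul ENNReal.toReal_nonneg, ENNReal.ofReal_toReal measure_ball_lt_top.ne]

section BallSection

variable (N : ℕ)

/-- The `N`-dimensional volume of the section at height `τ` of the unit ball of `ℝᴺ⁺¹`. It has
this meaning for `|τ| < 1`; for larger `|τ|` the square root vanishes, and `0 ^ 0 = 1`. -/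
def ballSection (τ : ℝ) : ℝ := unitBallVol N * √(1 - τ ^ 2) ^ N

lemma continuous_ballSection : Continuous (ballSection N) := by
  unfold ballSection
  fun_prop

lemma ballSection_nonneg (τ : ℝ) : 0 ≤ ballSection N τ := by
  have := (unitBallVol_pos N).le
  unfold ballSection
  positivity

lemma ballSection_pos {τ : ℝ} (hτ : |τ| < 1) : 0 < ballSection N τ := by
  have := unitBallVol_pos N
  have : 0 < √(1 - τ ^ 2) := Real.sqrt_pos.2 (sub_pos.2 ((sq_lt_one_iff_abs_lt_one τ).2 hτ))
  unfold ballSection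
  positivity

lemma intervalIntegrable_ballSection (x y : ℝ) :
    IntervalIntegrable (ballSection N) volume x y :=
  (continuous_ballSection N).intervalIntegrable x y

lemma integral_ballSection_lt {x y : ℝ} (hx : -1 ≤ x) (hxy : x < y) (hy : y ≤ 1) :
    ∫ τ in (-1)..x, ballSection N τ < ∫ τ in (-1)..y, ballSection N τ := by
  rw [← intervalIntegral.integral_add_adjacent_intervals (intervalIntegrable_ballSection N (-1) x)
    (intervalIntegrable_ballSection N x y), lt_add_iff_pos_right]
  refine intervalIntegral.intervalIntegral_pos_of_pos_on (intervalIntegrable_ballSection N x y)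
    (fun z hz => ballSection_pos N ?_) hxy
  exact abs_lt.2 ⟨hx.trans_lt hz.1, hz.2.trans_le hy⟩

lemma exists_pos_le_ballSection {a b : ℝ} (ha : -1 < a) (hb : b < 1) (hab : a ≤ b) :
    ∃ c > 0, ∀ τ ∈ Icc a b, c ≤ ballSection N τ := by
  obtain ⟨z, hz, z_min⟩ := isCompact_Icc.exists_isMinOn (nonempty_Icc.2 hab)
    (continuous_ballSection N).continuousOn
  exact ⟨_, ballSection_pos N (abs_lt.2 ⟨ha.trans_le hz.1, hz.2.trans_lt hb⟩), z_min⟩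

lemma integral_ballSection : ∫ τ in (-1)..1, ballSection N τ = unitBallVol (N + 1) := by
  obtain ⟨L, hL, -⟩ := exists_isOrthogonalSplitting (N := N) (θ := EuclideanSpace.single 0 1)
    (by simp)
  have volume_slice (s : ℝ) : volume {y | L (s, y) ∈ ball 0 1} =
      (Ioo (-1 : ℝ) 1).indicator (fun τ => ENNReal.ofReal (ballSection N τ)) s := by
    rw [hL.slice_ball zero_le_one, one_pow]
    by_cases hs : s ∈ Ioo (-1 : ℝ) 1
    · have : s ^ 2 < 1 := (sq_lt_one_iff_abs_lt_one s).2 (abs_lt.2 hs)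
      rw [indicator_of_mem hs, volume_ball_eq_unitBallVol _ (Real.sqrt_pos.2 (sub_pos.2 this)),
        ballSection]
    · have : 1 ≤ s ^ 2 := one_le_sq_iff_one_le_abs s |>.2 (not_lt.1 (mt abs_lt.1 hs))
      rw [indicator_of_notMem hs, Real.sqrt_eq_zero_of_nonpos (sub_nonpos.2 this), ball_zero,
        measure_empty]
  rw [unitBallVol, hL.volume_eq_lintegral_slices measurableSet_ball, lintegral_congr volume_slice,
    lintegral_indicator measurableSet_Ioo, intervalIntegral.integral_of_le (by norm_num),
    integral_Ioc_eq_integral_Ioo, integral_eq_lintegral_of_nonneg_ae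
      (Eventually.of_forall (ballSection_nonneg N))
      (continuous_ballSection N).aestronglyMeasurable]

end BallSection

/-! ### Monotone transport to the sections of the ball -/

/-- `T` is the monotone map pushing the measure with cumulative distribution function `κ F` to the
distribution of heights in the unit ball of `ℝᴺ⁺¹`. -/
structure IsBallTransport (N : ℕ) (κ : ℝ) (F T : ℝ → ℝ) : Prop where
  continuous : Continuous T
  monotone : Monotone T
  mem_Icc : ∀ s, T s ∈ Icc (-1 : ℝ) 1
  integral_eq : ∀ s, ∫ τ in (-1)..(T s), ballSection N τ = κ * F s

lemma exists_isBallTransport {N : ℕ} {κ : ℝ} {F : ℝ → ℝ} (hF : Continuous F)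
    (hF_mono : Monotone F) (hκ : 0 ≤ κ) (hF_nonneg : ∀ s, 0 ≤ F s)
    (hF_le : ∀ s, κ * F s ≤ unitBallVol (N + 1)) : ∃ T, IsBallTransport N κ F T := by
  let Φ : Icc (-1 : ℝ) 1 → ℝ := fun x => ∫ τ in (-1)..x, ballSection N τ
  have continuous_primitive : Continuous fun x : ℝ => ∫ τ in (-1)..x, ballSection N τ :=
    intervalIntegral.continuous_primitive (intervalIntegrable_ballSection N) (-1)
  have Φ_continuous : Continuous Φ := continuous_primitive.comp continuous_subtype_val
  have Φ_strictMono : StrictMono Φ := fun x y hxy => integral_ballSection_lt N x.2.1 hxy y.2.2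
  have exists_preimage (s : ℝ) : ∃ x, Φ x = κ * F s := by
    have mem_range : κ * F s ∈ Icc (∫ τ in (-1)..(-1), ballSection N τ)
        (∫ τ in (-1)..1, ballSection N τ) := by
      rw [intervalIntegral.integral_same, integral_ballSection]
      exact ⟨mul_nonneg hκ (hF_nonneg s), hF_le s⟩
    obtain ⟨x, hx, hxs⟩ :=
      intermediate_value_Icc (by norm_num) continuous_primitive.continuousOn mem_range
    exact ⟨⟨x, hx⟩, hxs⟩
  choose T hT using exists_preimage
  have T_continuous : Continuous T := by
    rw [(Φ_continuous.isClosedEmbedding Φ_strictMono.injective).isEmbedding.continuous_iff,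
      show Φ ∘ T = fun s => κ * F s from funext hT]
    fun_prop
  refine ⟨fun s => T s, continuous_subtype_val.comp T_continuous, fun s t hst => ?_,
    fun s => (T s).2, hT⟩
  refine Φ_strictMono.le_iff_le.1 ?_
  rw [hT, hT]
  exact mul_le_mul_of_nonneg_left (hF_mono hst) hκ

namespace IsBallTransport

variable {N : ℕ} {κ : ℝ} {F T : ℝ → ℝ}

lemma hasDerivAt (hT : IsBallTransport N κ F T) {s a : ℝ} (hs : |T s| < 1)
    (hF : HasDerivAt F a s) : HasDerivAt T (κ * a / ballSection N (T s)) s := by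
  let Φ : ℝ → ℝ := fun x => ∫ τ in (-1)..x, ballSection N τ
  have section_ne : ballSection N (T s) ≠ 0 := (ballSection_pos N hs).ne'
  have Φ_deriv : HasStrictDerivAt Φ (ballSection N (T s)) (T s) :=
    intervalIntegral.integral_hasStrictDerivAt_right (intervalIntegrable_ballSection N _ _)
      ((continuous_ballSection N).stronglyMeasurableAtFilter _ _)
      (continuous_ballSection N).continuousAt
  have inverse_deriv := (Φ_deriv.to_localInverse section_ne).hasDerivAt
  rw [show Φ (T s) = κ * F s from hT.integral_eq s] at inverse_deriv
  have left_inverse : ∀ᶠ x in 𝓝 (T s), Φ_deriv.localInverse Φ _ (T s) section_ne (Φ x) = x :=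
    HasStrictFDerivAt.eventually_left_inverse _
  rw [div_eq_inv_mul]
  refine (inverse_deriv.comp s (hF.const_mul κ)).congr_of_eventuallyEq ?_
  filter_upwards [hT.continuous.continuousAt.eventually left_inverse] with x hx
  rwa [show Φ (T x) = κ * F x from hT.integral_eq x, eq_comm] at hx

lemma lipschitzOnWith (hT : IsBallTransport N κ F T) (hκ : 0 ≤ κ) {K : ℝ≥0}
    (hF : LipschitzWith K F) {α β : ℝ} (hα : -1 < T α) (hβ : T β < 1) (hαβ : α ≤ β) :
    ∃ C, LipschitzOnWith C T (Icc α β) := by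
  obtain ⟨c, c_pos, c_le⟩ := exists_pos_le_ballSection N hα hβ (hT.monotone hαβ)
  refine ⟨(κ * K / c).toNNReal, LipschitzOnWith.of_le_add_mul _ fun x hx y hy => ?_⟩
  rw [Real.coe_toNNReal _ (by positivity)]
  rcases le_total x y with hxy | hyx
  · exact le_add_of_le_of_nonneg (hT.monotone hxy) (by positivity)
  have transported : ∫ τ in (T y)..(T x), ballSection N τ = κ * (F x - F y) := by
    rw [mul_sub, ← hT.integral_eq, ← hT.integral_eq, intervalIntegral.integral_interval_sub_left
      (intervalIntegrable_ballSection N _ _) (intervalIntegrable_ballSection N _ _)]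
  have lower_bound : (T x - T y) * c ≤ ∫ τ in (T y)..(T x), ballSection N τ := by
    rw [← smul_eq_mul, ← intervalIntegral.integral_const]
    exact intervalIntegral.integral_mono_on (hT.monotone hyx) intervalIntegrable_const
      (intervalIntegrable_ballSection N _ _)
      fun τ hτ => c_le _ ⟨(hT.monotone hy.1).trans hτ.1, hτ.2.trans (hT.monotone hx.2)⟩
  have upper_bound : κ * (F x - F y) ≤ κ * (K * dist x y) :=
    mul_le_mul_of_nonneg_left ((le_abs_self _).trans (hF.dist_le_mul x y)) hκ
  rw [← sub_le_iff_le_add', div_mul_eq_mul_div, le_div_iff₀ c_pos]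
  linarith

lemma integral_mul_deriv (hT : IsBallTransport N κ F T) (hκ : 0 ≤ κ) {K : ℝ≥0}
    (hF : LipschitzWith K F) {a : ℝ → ℝ} (hF_deriv : ∀ᵐ s, HasDerivAt F (a s) s) {α β : ℝ}
    (hα : -1 < T α) (hβ : T β < 1) (hαβ : α ≤ β) {H : ℝ → ℝ} (hH : ContDiff ℝ 1 H)
    (hH_supp : Function.support H ⊆ Ioo α β) :
    ∫ s, T s * deriv H s = - ∫ s, κ * a s / ballSection N (T s) * H s := by
  have H_eq_zero {s : ℝ} (hs : s ∉ Ioo α β) : H s = 0 :=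
    Function.notMem_support.1 fun h => hs (hH_supp h)
  have deriv_H_eq_zero {s : ℝ} (hs : s ∉ Icc α β) : deriv H s = 0 :=
    Function.notMem_support.1 fun h => hs <|
      closure_minimal (hH_supp.trans Ioo_subset_Icc_self) isClosed_Icc (support_deriv_subset h)
  obtain ⟨C, T_lipschitz⟩ := hT.lipschitzOnWith hκ hF hα hβ hαβ
  obtain ⟨D, H_lipschitz⟩ := hH.contDiffOn.exists_lipschitzOnWith (s := Icc α β) one_ne_zero
    (convex_Icc α β) isCompact_Icc
  rw [← uIcc_of_le hαβ] at T_lipschitz H_lipschitz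
  have by_parts := T_lipschitz.absolutelyContinuousOnInterval.integral_mul_deriv_eq_deriv_mul
    H_lipschitz.absolutelyContinuousOnInterval
  rw [H_eq_zero (s := α) (by simp), H_eq_zero (s := β) (by simp),
    intervalIntegral.integral_of_le hαβ, intervalIntegral.integral_of_le hαβ,
    ← integral_Icc_eq_integral_Ioc, ← integral_Icc_eq_integral_Ioc,
    setIntegral_eq_integral_of_forall_compl_eq_zero
      (fun s hs => by rw [deriv_H_eq_zero hs, mul_zero])] at by_parts
  rw [by_parts, mul_zero, mul_zero, sub_zero, zero_sub,
    ← setIntegral_eq_integral_of_forall_compl_eq_zero (s := Icc α β)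
      (f := fun s => κ * a s / ballSection N (T s) * H s) (fun s hs => by
        rw [H_eq_zero fun h => hs (Ioo_subset_Icc_self h), mul_zero])]
  refine congrArg Neg.neg (setIntegral_congr_ae (s := Icc α β) measurableSet_Icc ?_)
  filter_upwards [hF_deriv] with s hs hsαβ
  have : |T s| < 1 := abs_lt.2
    ⟨hα.trans_le (hT.monotone hsαβ.1), (hT.monotone hsαβ.2).trans_lt hβ⟩
  rw [(hT.hasDerivAt this hs).deriv]

end IsBallTransport

/-! ### Slices of a set along an orthogonal splitting -/

section Slices

variable {N : ℕ} {L : (ℝ × 𝔼 N) ≃L[ℝ] 𝔼(N + 1)} {U : Set (𝔼(N + 1))}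

/-- The `N`-dimensional volume of the slice of `U` at height `s`. -/
def sliceVolume (L : (ℝ × 𝔼 N) ≃L[ℝ] 𝔼(N + 1)) (U : Set (𝔼(N + 1))) (s : ℝ) : ℝ :=
  volume.real {y | L (s, y) ∈ U}

/-- The volume of the part of `U` at height at most `s`. -/
def cumulativeVolume (L : (ℝ × 𝔼 N) ≃L[ℝ] 𝔼(N + 1)) (U : Set (𝔼(N + 1))) (s : ℝ) : ℝ :=
  volume.real (U ∩ {x | (L.symm x).1 ≤ s})

lemma sliceVolume_nonneg (s : ℝ) : 0 ≤ sliceVolume L U s := measureReal_nonneg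

lemma IsOrthogonalSplitting.slice_subset_ball (hL : IsOrthogonalSplitting L) {D : ℝ}
    (hD : U ⊆ ball 0 D) (s : ℝ) : {y | L (s, y) ∈ U} ⊆ ball 0 D := fun y hy => by
  have norm_lt : ‖L (s, y)‖ < D := mem_ball_zero_iff.1 (hD hy)
  refine mem_ball_zero_iff.2 (lt_of_le_of_lt ?_ norm_lt)
  rw [← sq_le_sq₀ (norm_nonneg _) (norm_nonneg _), hL]
  exact le_add_of_nonneg_left (sq_nonneg s)

lemma IsOrthogonalSplitting.isBounded_slice (hL : IsOrthogonalSplitting L)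
    (hUb : Bornology.IsBounded U) (s : ℝ) : Bornology.IsBounded {y | L (s, y) ∈ U} := by
  obtain ⟨D, hD⟩ := hUb.subset_ball 0
  exact isBounded_ball.subset (hL.slice_subset_ball hD s)

lemma exists_sliceVolume_le (hL : IsOrthogonalSplitting L) (hUb : Bornology.IsBounded U) :
    ∃ C : ℝ≥0, ∀ s, sliceVolume L U s ≤ C := by
  obtain ⟨D, hD⟩ := hUb.subset_ball 0
  exact ⟨(volume (ball (0 : 𝔼 N) D)).toNNReal, fun s =>
    measureReal_mono (hL.slice_subset_ball hD s) measure_ball_lt_top.ne⟩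

lemma measurable_sliceVolume (hU : MeasurableSet U) : Measurable (sliceVolume L U) :=
  (measurable_measure_prodMk_left (L.continuous.measurable hU)).ennreal_toReal

lemma lintegral_sliceVolume (hL : IsOrthogonalSplitting L) (hU : MeasurableSet U)
    (hUb : Bornology.IsBounded U) : ∫⁻ s, ENNReal.ofReal (sliceVolume L U s) = volume U := by
  rw [hL.volume_eq_lintegral_slices hU]
  exact lintegral_congr fun s =>
    ENNReal.ofReal_toReal (hL.isBounded_slice hUb s).measure_lt_top.ne

lemma integrable_sliceVolume (hL : IsOrthogonalSplitting L) (hU : MeasurableSet U)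
    (hUb : Bornology.IsBounded U) : Integrable (sliceVolume L U) := by
  refine ⟨(measurable_sliceVolume hU).aestronglyMeasurable, ?_⟩
  rw [hasFiniteIntegral_iff_ofReal (Eventually.of_forall sliceVolume_nonneg),
    lintegral_sliceVolume hL hU hUb]
  exact hUb.measure_lt_top

lemma cumulativeVolume_eq_integral (hL : IsOrthogonalSplitting L) (hU : MeasurableSet U)
    (hUb : Bornology.IsBounded U) (s : ℝ) :
    cumulativeVolume L U s = ∫ t in Iic s, sliceVolume L U t := by
  have sublevel_measurable : MeasurableSet {x | (L.symm x).1 ≤ s} :=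
    (isClosed_le (by fun_prop) continuous_const).measurableSet
  have slice_sublevel (t : ℝ) : sliceVolume L (U ∩ {x | (L.symm x).1 ≤ s}) t =
      (Iic s).indicator (sliceVolume L U) t := by
    by_cases hts : t ≤ s <;> simp [sliceVolume, indicator, hts]
  rw [← integral_indicator measurableSet_Iic, ← integral_congr_ae (ae_of_all _ slice_sublevel),
    integral_eq_lintegral_of_nonneg_ae (ae_of_all _ sliceVolume_nonneg)
      (measurable_sliceVolume (hU.inter sublevel_measurable)).aestronglyMeasurable,
    lintegral_sliceVolume hL (hU.inter sublevel_measurable) (hUb.subset inter_subset_left)]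
  rfl

lemma cumulativeVolume_sub (hL : IsOrthogonalSplitting L) (hU : MeasurableSet U)
    (hUb : Bornology.IsBounded U) (x y : ℝ) :
    cumulativeVolume L U y - cumulativeVolume L U x = ∫ t in x..y, sliceVolume L U t := by
  rw [cumulativeVolume_eq_integral hL hU hUb, cumulativeVolume_eq_integral hL hU hUb]
  exact intervalIntegral.integral_Iic_sub_Iic (integrable_sliceVolume hL hU hUb).integrableOn
    (integrable_sliceVolume hL hU hUb).integrableOn

lemma monotone_cumulativeVolume (hUb : Bornology.IsBounded U) :
    Monotone (cumulativeVolume L U) := fun _ _ hxy =>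
  measureReal_mono (inter_subset_inter_right _ fun _ hx => le_trans hx hxy)
    (hUb.subset inter_subset_left).measure_lt_top.ne

lemma exists_lipschitzWith_cumulativeVolume (hL : IsOrthogonalSplitting L)
    (hU : MeasurableSet U) (hUb : Bornology.IsBounded U) :
    ∃ K, LipschitzWith K (cumulativeVolume L U) := by
  obtain ⟨C, hC⟩ := exists_sliceVolume_le hL hUb
  refine ⟨C, LipschitzWith.of_dist_le_mul fun x y => ?_⟩
  rw [Real.dist_eq, cumulativeVolume_sub hL hU hUb]
  refine intervalIntegral.norm_integral_le_of_norm_le_const (E := ℝ) fun t _ => ?_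
  rw [Real.norm_of_nonneg (sliceVolume_nonneg t)]
  exact hC t

lemma ae_hasDerivAt_cumulativeVolume (hL : IsOrthogonalSplitting L) (hU : MeasurableSet U)
    (hUb : Bornology.IsBounded U) :
    ∀ᵐ s, HasDerivAt (cumulativeVolume L U) (sliceVolume L U s) s := by
  have eq_primitive : cumulativeVolume L U =
      fun y => cumulativeVolume L U 0 + ∫ t in (0 : ℝ)..y, sliceVolume L U t := by
    ext y
    rw [← cumulativeVolume_sub hL hU hUb, add_sub_cancel]
  filter_upwards [LocallyIntegrable.ae_hasDerivAt_integral
    (integrable_sliceVolume hL hU hUb).locallyIntegrable] with s hs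
  rw [eq_primitive]
  exact (hs 0).const_add _

lemma cumulativeVolume_pos (hUo : IsOpen U) (hUb : Bornology.IsBounded U) {s : ℝ} {y : 𝔼 N}
    (hy : L (s, y) ∈ U) : 0 < cumulativeVolume L U s := by
  have near : ∀ᶠ t in 𝓝[<] s, L (t, y) ∈ U :=
    ((by fun_prop : Continuous fun t : ℝ => L (t, y)).continuousAt.eventually
      (hUo.mem_nhds hy)).filter_mono nhdsWithin_le_nhds
  obtain ⟨t, htU, hts⟩ := (near.and self_mem_nhdsWithin).exists
  have below_open : IsOpen (U ∩ {x | (L.symm x).1 < s}) :=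
    hUo.inter (isOpen_lt (by fun_prop) continuous_const)
  have below_pos := below_open.measure_pos volume ⟨L (t, y), htU, by simpa using hts⟩
  refine ENNReal.toReal_pos (below_pos.trans_le (measure_mono ?_)).ne'
    (hUb.subset inter_subset_left).measure_lt_top.ne
  exact inter_subset_inter_right _ fun _ hx => mem_ofPred.2 (le_of_lt hx)

lemma cumulativeVolume_lt (hUo : IsOpen U) (hUb : Bornology.IsBounded U) {s : ℝ} {y : 𝔼 N}
    (hy : L (s, y) ∈ U) : cumulativeVolume L U s < volume.real U := by
  have near : ∀ᶠ t in 𝓝[>] s, L (t, y) ∈ U :=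
    ((by fun_prop : Continuous fun t : ℝ => L (t, y)).continuousAt.eventually
      (hUo.mem_nhds hy)).filter_mono nhdsWithin_le_nhds
  obtain ⟨t, htU, hst⟩ := (near.and self_mem_nhdsWithin).exists
  have sublevel_closed : IsClosed {x | (L.symm x).1 ≤ s} :=
    isClosed_le (by fun_prop) continuous_const
  have above_pos : 0 < volume.real (U \ {x | (L.symm x).1 ≤ s}) :=
    ENNReal.toReal_pos ((hUo.sdiff sublevel_closed).measure_pos volume
      ⟨L (t, y), htU, by simpa using hst⟩).ne' (hUb.subset sdiff_subset).measure_lt_top.ne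
  rw [← measureReal_inter_add_sdiff sublevel_closed.measurableSet hUb.measure_lt_top.ne]
  exact lt_add_of_pos_right _ above_pos

lemma sliceVolume_pos (hL : IsOrthogonalSplitting L) (hUo : IsOpen U)
    (hUb : Bornology.IsBounded U) {s : ℝ} {y : 𝔼 N} (hy : L (s, y) ∈ U) :
    0 < sliceVolume L U s := by
  have slice_open : IsOpen {y | L (s, y) ∈ U} := hUo.preimage (by fun_prop)
  exact ENNReal.toReal_pos (slice_open.measure_pos volume ⟨y, hy⟩).ne'
    (hL.isBounded_slice hUb s).measure_lt_top.ne

/-- The radius of the ball of `ℝᴺ` with the volume of the slice of `U` at height `s`; it is `1`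
when `N = 0`. -/
def sliceRadius (L : (ℝ × 𝔼 N) ≃L[ℝ] 𝔼(N + 1)) (U : Set (𝔼(N + 1))) (s : ℝ) : ℝ :=
  (sliceVolume L U s / unitBallVol N) ^ (N : ℝ)⁻¹

lemma measurable_sliceRadius (hU : MeasurableSet U) : Measurable (sliceRadius L U) :=
  ((measurable_sliceVolume hU).div_const _).pow_const _

lemma sliceRadius_pos (hL : IsOrthogonalSplitting L) (hUo : IsOpen U)
    (hUb : Bornology.IsBounded U) {s : ℝ} {y : 𝔼 N} (hy : L (s, y) ∈ U) :
    0 < sliceRadius L U s :=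
  Real.rpow_pos_of_pos (div_pos (sliceVolume_pos hL hUo hUb hy) (unitBallVol_pos N)) _

lemma sliceVolume_eq_unitBallVol_mul {s : ℝ} {y : 𝔼 N} (hy : L (s, y) ∈ U) :
    sliceVolume L U s = unitBallVol N * sliceRadius L U s ^ N := by
  rcases N.eq_zero_or_pos with rfl | hN
  · have slice_eq : {y | L (s, y) ∈ U} = ball (0 : 𝔼 0) 1 := by
      ext z
      simpa [Subsingleton.elim z 0, Subsingleton.elim y 0] using hy
    simp [sliceVolume, slice_eq, unitBallVol, measureReal_def]
  · rw [sliceRadius, Real.rpow_inv_natCast_pow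
      (div_nonneg (sliceVolume_nonneg s) (unitBallVol_pos N).le) hN.ne',
      mul_div_cancel₀ _ (unitBallVol_pos N).ne']

lemma exists_isBallTransport_cumulativeVolume (hL : IsOrthogonalSplitting L)
    (hU : MeasurableSet U) (hUb : Bornology.IsBounded U) {ρ : ℝ} (hρ : 0 < ρ)
    (hv : volume.real U ≤ unitBallVol (N + 1) * ρ ^ (N + 1)) :
    ∃ T, IsBallTransport N (ρ ^ (N + 1))⁻¹ (cumulativeVolume L U) T := by
  obtain ⟨K, hK⟩ := exists_lipschitzWith_cumulativeVolume hL hU hUb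
  refine exists_isBallTransport hK.continuous (monotone_cumulativeVolume hUb) (by positivity)
    (fun s => measureReal_nonneg) fun s => ?_
  rw [inv_mul_le_iff₀ (by positivity), mul_comm]
  exact (measureReal_mono inter_subset_left hUb.measure_lt_top.ne).trans hv

lemma IsBallTransport.abs_lt_one (hUo : IsOpen U) (hUb : Bornology.IsBounded U) {ρ : ℝ}
    (hρ : 0 < ρ) (hv : volume.real U ≤ unitBallVol (N + 1) * ρ ^ (N + 1)) {T : ℝ → ℝ}
    (hT : IsBallTransport N (ρ ^ (N + 1))⁻¹ (cumulativeVolume L U) T) {s : ℝ} {y : 𝔼 N}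
    (hy : L (s, y) ∈ U) : |T s| < 1 := by
  have lower : (0 : ℝ) < ∫ τ in (-1)..(T s), ballSection N τ := by
    rw [hT.integral_eq]
    exact mul_pos (by positivity) (cumulativeVolume_pos hUo hUb hy)
  have upper : ∫ τ in (-1)..(T s), ballSection N τ < ∫ τ in (-1)..1, ballSection N τ := by
    rw [hT.integral_eq, integral_ballSection, inv_mul_lt_iff₀ (by positivity), mul_comm]
    exact (cumulativeVolume_lt hUo hUb hy).trans_le hv
  refine abs_lt.2 ⟨lt_of_le_of_ne (hT.mem_Icc s).1 fun h => ?_,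
    lt_of_le_of_ne (hT.mem_Icc s).2 fun h => ?_⟩
  · rw [← h, intervalIntegral.integral_same] at lower
    exact lower.false
  · rw [h] at upper
    exact upper.false

end Slices

/-! ### The functional isoperimetric inequality -/

section TestFunctions

variable {E : Type*} [NormedAddCommGroup E] [NormedSpace ℝ E]

/-- Nonnegative `C¹` functions compactly supported in `U`: the test functions of the functional
form of the isoperimetric inequality, in which they stand for smoothed indicator functions. -/
structure IsNonnegTest (U : Set E) (h : E → ℝ) : Prop where
  contDiff : ContDiff ℝ 1 h
  hasCompactSupport : HasCompactSupport h
  nonneg : ∀ x, 0 ≤ h x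
  tsupport_subset : tsupport h ⊆ U

namespace IsNonnegTest

variable {U : Set E} {h : E → ℝ}

lemma comp_continuousLinearEquiv {F : Type*} [NormedAddCommGroup F] [NormedSpace ℝ F]
    (hh : IsNonnegTest U h) (L : F ≃L[ℝ] E) : IsNonnegTest (L ⁻¹' U) (h ∘ L) where
  contDiff := hh.contDiff.comp L.contDiff
  hasCompactSupport := hh.hasCompactSupport.comp_homeomorph L.toHomeomorph
  nonneg x := hh.nonneg (L x)
  tsupport_subset :=
    (tsupport_comp_subset_preimage h L.continuous).trans (preimage_mono hh.tsupport_subset)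

lemma slice {U : Set (ℝ × E)} {g : ℝ × E → ℝ} (hg : IsNonnegTest U g) (s : ℝ) :
    IsNonnegTest {y | (s, y) ∈ U} fun y => g (s, y) where
  contDiff := hg.contDiff.comp (contDiff_const.prodMk contDiff_id)
  hasCompactSupport :=
    HasCompactSupport.intro (hg.hasCompactSupport.isCompact.image continuous_snd) fun _ hy =>
      image_eq_zero_of_notMem_tsupport fun hsy => hy ⟨_, hsy, rfl⟩
  nonneg _ := hg.nonneg _
  tsupport_subset :=
    (tsupport_comp_subset_preimage g (by fun_prop : Continuous fun y => (s, y))).trans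
      (preimage_mono hg.tsupport_subset)

variable [MeasurableSpace E] [BorelSpace E] {μ : Measure E} [IsFiniteMeasureOnCompacts μ]

lemma integrable (hh : IsNonnegTest U h) : Integrable h μ :=
  hh.contDiff.continuous.integrable_of_hasCompactSupport hh.hasCompactSupport

lemma integrable_norm_fderiv (hh : IsNonnegTest U h) :
    Integrable (fun x => ‖fderiv ℝ h x‖) μ :=
  (hh.contDiff.continuous_fderiv one_ne_zero).norm.integrable_of_hasCompactSupport
    (hh.hasCompactSupport.fderiv ℝ).norm

lemma integrable_mul (hh : IsNonnegTest U h) {φ : E → ℝ} (hφ : Measurable φ) {C : ℝ}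
    (hC : ∀ x ∈ tsupport h, |φ x| ≤ C) : Integrable (fun x => φ x * h x) μ := by
  refine (hh.integrable.const_mul C).mono'
    (hφ.mul hh.contDiff.continuous.measurable).aestronglyMeasurable (ae_of_all _ fun x => ?_)
  by_cases hx : x ∈ tsupport h
  · rw [norm_mul, Real.norm_of_nonneg (hh.nonneg x)]
    exact mul_le_mul_of_nonneg_right (hC x hx) (hh.nonneg x)
  · simp [image_eq_zero_of_notMem_tsupport hx]

end IsNonnegTest

end TestFunctions

section ProductTestFunctions

variable {N : ℕ} {U : Set (ℝ × 𝔼 N)} {g : ℝ × 𝔼 N → ℝ} {φ : ℝ → ℝ}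

lemma IsNonnegTest.integrable_mul_fderiv_fst (hg : IsNonnegTest U g) (hφ : Continuous φ) :
    Integrable fun z => φ z.1 * fderiv ℝ g z (1, 0) :=
  ((hφ.comp continuous_fst).mul ((hg.contDiff.continuous_fderiv one_ne_zero).clm_apply
    continuous_const)).integrable_of_hasCompactSupport
      (hg.hasCompactSupport.fderiv_apply ℝ (1, 0)).mul_left

lemma IsNonnegTest.integrable_mul_norm_fderiv_snd (hg : IsNonnegTest U g) (hφ : Continuous φ) :
    Integrable fun z =>
      φ z.1 * ‖(fderiv ℝ g z).comp (ContinuousLinearMap.inr ℝ ℝ (𝔼 N))‖ :=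
  ((hφ.comp continuous_fst).mul ((hg.contDiff.continuous_fderiv one_ne_zero).clm_comp
    continuous_const).norm).integrable_of_hasCompactSupport <|
      (hg.hasCompactSupport.fderiv ℝ).mono fun z hz h_fderiv => hz (by simp [h_fderiv])

end ProductTestFunctions

/-- `w` is an admissible lower bound for the ratio of perimeter to volume in `U`, tested against
functions: for `h` close to the indicator function of a set `A` the right-hand side is close to
the perimeter of `A`. -/
def IsIsoperimetricWeight {n : ℕ} (U : Set (𝔼 n)) (w : 𝔼 n → ℝ) : Prop :=
  ∀ h, IsNonnegTest U h → ∫ x, w x * h x ≤ ∫ x, ‖fderiv ℝ h x‖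

/-- The isoperimetric inequality in `ℝⁿ`: subsets of an open set with at most the volume of a ball
of radius `r` have perimeter at least `n / r` times their volume. -/
def IsoperimetricInequality (n : ℕ) : Prop :=
  ∀ (U : Set (𝔼 n)) (r : ℝ), IsOpen U → Bornology.IsBounded U → 0 < r →
    volume.real U ≤ unitBallVol n * r ^ n → IsIsoperimetricWeight U fun _ => n / r

section InductionStep

variable {N : ℕ} {L : (ℝ × 𝔼 N) ≃L[ℝ] 𝔼(N + 1)}

lemma IsOrthogonalSplitting.le_opNorm (hL : IsOrthogonalSplitting L) (ℓ : 𝔼(N + 1) →L[ℝ] ℝ)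
    {t : ℝ} (ht : |t| ≤ 1) :
    -t * ℓ.comp (L : (ℝ × 𝔼 N) →L[ℝ] 𝔼(N + 1)) (1, 0) + √(1 - t ^ 2) *
      ‖(ℓ.comp (L : (ℝ × 𝔼 N) →L[ℝ] 𝔼(N + 1))).comp (ContinuousLinearMap.inr ℝ ℝ (𝔼 N))‖ ≤
      ‖ℓ‖ := by
  set M : (ℝ × 𝔼 N) →L[ℝ] ℝ := ℓ.comp (L : (ℝ × 𝔼 N) →L[ℝ] 𝔼(N + 1)) with hM
  set w := √(1 - t ^ 2)
  have w_sq : w ^ 2 = 1 - t ^ 2 :=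
    Real.sq_sqrt (sub_nonneg.2 ((sq_le_one_iff_abs_le_one t).2 ht))
  have unit_bound (y : 𝔼 N) (hy : ‖y‖ ≤ 1) : -t * M (1, 0) + w * M (0, y) ≤ ‖ℓ‖ := by
    have norm_le_one : ‖L (-t, w • y)‖ ≤ 1 := by
      rw [← sq_le_one_iff₀ (norm_nonneg _), hL, norm_smul, mul_pow, Real.norm_eq_abs, sq_abs, w_sq]
      nlinarith [pow_le_one₀ (norm_nonneg y) hy (n := 2), w_sq, sq_nonneg w]
    calc -t * M (1, 0) + w * M (0, y) = M ((-t) • (1, 0) + w • (0, y)) := by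
          rw [map_add, map_smul, map_smul, smul_eq_mul, smul_eq_mul]
      _ = ℓ (L (-t, w • y)) := by simp [hM]
      _ ≤ ‖ℓ‖ * ‖L (-t, w • y)‖ := (le_abs_self _).trans (ℓ.le_opNorm _)
      _ ≤ ‖ℓ‖ := mul_le_of_le_one_right (norm_nonneg ℓ) norm_le_one
  have norm_bound : ‖w • M.comp (ContinuousLinearMap.inr ℝ ℝ (𝔼 N))‖ ≤ ‖ℓ‖ + t * M (1, 0) := by
    refine ContinuousLinearMap.opNorm_le_of_unit_norm ?_ fun y hy => abs_le'.2 ⟨?_, ?_⟩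
    · have := unit_bound 0 (by simp)
      rw [Prod.mk_zero_zero, map_zero] at this
      linarith
    · have := unit_bound y hy.le
      simp only [smul_apply, ContinuousLinearMap.comp_apply,
        ContinuousLinearMap.inr_apply, smul_eq_mul]
      linarith
    · have := unit_bound (-y) (by rw [norm_neg, hy])
      rw [← map_neg]
      simp only [smul_apply, ContinuousLinearMap.comp_apply,
        ContinuousLinearMap.inr_apply, smul_eq_mul]
      linarith
  rw [norm_smul, Real.norm_of_nonneg (Real.sqrt_nonneg _)] at norm_bound
  linarith

variable {U : Set (𝔼(N + 1))} {ρ : ℝ} {T : ℝ → ℝ} {g : ℝ × 𝔼 N → ℝ}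

/-- The slope at height `s` of the transport `T` from `U` to the unit ball, when the volume of `U`
is measured in units of `ρᴺ⁺¹`. -/
def transportSlope (L : (ℝ × 𝔼 N) ≃L[ℝ] 𝔼(N + 1)) (U : Set (𝔼(N + 1))) (ρ : ℝ) (T : ℝ → ℝ)
    (s : ℝ) : ℝ :=
  (ρ ^ (N + 1))⁻¹ * sliceVolume L U s / ballSection N (T s)

lemma measurable_transportSlope (hU : MeasurableSet U) (hT : Measurable T) :
    Measurable (transportSlope L U ρ T) :=
  ((measurable_sliceVolume hU).const_mul _).div ((continuous_ballSection N).measurable.comp hT)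

lemma exists_heights_subset_Ioo (hUo : IsOpen U) (hUb : Bornology.IsBounded U) (hρ : 0 < ρ)
    (hv : volume.real U ≤ unitBallVol (N + 1) * ρ ^ (N + 1))
    (hT : IsBallTransport N (ρ ^ (N + 1))⁻¹ (cumulativeVolume L U) T)
    {K : Set (ℝ × 𝔼 N)} (hK : IsCompact K) (hK_nonempty : K.Nonempty) (hKU : K ⊆ L ⁻¹' U) :
    ∃ α β, α ≤ β ∧ -1 < T α ∧ T β < 1 ∧ Prod.fst '' K ⊆ Ioo α β := by
  have heights_compact := hK.image continuous_fst
  obtain ⟨_, ⟨⟨s, y⟩, hsy, rfl⟩, s_least⟩ := heights_compact.exists_isLeast (hK_nonempty.image _)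
  obtain ⟨_, ⟨⟨t, z⟩, htz, rfl⟩, t_greatest⟩ :=
    heights_compact.exists_isGreatest (hK_nonempty.image _)
  have T_s := abs_lt.1 (hT.abs_lt_one hUo hUb hρ hv (hKU hsy))
  have T_t := abs_lt.1 (hT.abs_lt_one hUo hUb hρ hv (hKU htz))
  obtain ⟨α, hα, hαs⟩ := (((hT.continuous.continuousAt.eventually
    (lt_mem_nhds T_s.1)).filter_mono nhdsWithin_le_nhds).and
      (self_mem_nhdsWithin (s := Iio s))).exists
  obtain ⟨β, hβ, htβ⟩ := (((hT.continuous.continuousAt.eventually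
    (gt_mem_nhds T_t.2)).filter_mono nhdsWithin_le_nhds).and
      (self_mem_nhdsWithin (s := Ioi t))).exists
  have hst : s ≤ t := s_least ⟨_, htz, rfl⟩
  exact ⟨α, β, (le_of_lt hαs).trans (hst.trans (le_of_lt htβ)), hα, hβ, fun r hr =>
    ⟨lt_of_lt_of_le hαs (s_least hr), lt_of_le_of_lt (t_greatest hr) htβ⟩⟩

lemma integrable_transportSlope_mul (hL : IsOrthogonalSplitting L) (hUo : IsOpen U)
    (hUb : Bornology.IsBounded U) (hρ : 0 < ρ)
    (hv : volume.real U ≤ unitBallVol (N + 1) * ρ ^ (N + 1))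
    (hT : IsBallTransport N (ρ ^ (N + 1))⁻¹ (cumulativeVolume L U) T)
    (hg : IsNonnegTest (L ⁻¹' U) g) :
    Integrable fun z : ℝ × 𝔼 N => transportSlope L U ρ T z.1 * g z := by
  rcases (tsupport g).eq_empty_or_nonempty with empty | nonempty
  · simp [tsupport_eq_empty_iff.1 empty]
  obtain ⟨α, β, hαβ, hα, hβ, heights⟩ := exists_heights_subset_Ioo hUo hUb hρ hv hT
    hg.hasCompactSupport.isCompact nonempty hg.tsupport_subset
  obtain ⟨c, c_pos, c_le⟩ := exists_pos_le_ballSection N hα hβ (hT.monotone hαβ)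
  obtain ⟨C, slice_le⟩ := exists_sliceVolume_le hL hUb
  refine hg.integrable_mul (C := (ρ ^ (N + 1))⁻¹ * C / c)
    ((measurable_transportSlope hUo.measurableSet hT.continuous.measurable).comp measurable_fst)
    fun z hz => ?_
  have hz' := heights (mem_image_of_mem _ hz)
  have section_ge := c_le (T z.1) ⟨hT.monotone hz'.1.le, hT.monotone hz'.2.le⟩
  have slice_nonneg := sliceVolume_nonneg (L := L) (U := U) z.1
  rw [transportSlope, abs_of_nonneg
    (div_nonneg (by positivity) (ballSection_nonneg N _))]
  gcongr
  exact slice_le z.1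

lemma integral_transport_mul_fderiv (hL : IsOrthogonalSplitting L) (hUo : IsOpen U)
    (hUb : Bornology.IsBounded U) (hρ : 0 < ρ)
    (hv : volume.real U ≤ unitBallVol (N + 1) * ρ ^ (N + 1))
    (hT : IsBallTransport N (ρ ^ (N + 1))⁻¹ (cumulativeVolume L U) T)
    (hg : IsNonnegTest (L ⁻¹' U) g) :
    ∫ z, T z.1 * fderiv ℝ g z (1, 0) = - ∫ z, transportSlope L U ρ T z.1 * g z := by
  rcases (tsupport g).eq_empty_or_nonempty with empty | nonempty
  · simp [tsupport_eq_empty_iff.1 empty]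
  obtain ⟨α, β, hαβ, hα, hβ, heights⟩ := exists_heights_subset_Ioo hUo hUb hρ hv hT
    hg.hasCompactSupport.isCompact nonempty hg.tsupport_subset
  obtain ⟨K, F_lipschitz⟩ := exists_lipschitzWith_cumulativeVolume hL hUo.measurableSet hUb
  have deriv_line (y : 𝔼 N) (s : ℝ) : deriv (fun s => g (s, y)) s = fderiv ℝ g (s, y) (1, 0) :=
    ((hg.contDiff.differentiable one_ne_zero (s, y)).hasFDerivAt.comp_hasDerivAt s
      ((hasDerivAt_id s).prodMk (hasDerivAt_const s y))).deriv
  have line_by_parts (y : 𝔼 N) : ∫ s, T s * fderiv ℝ g (s, y) (1, 0) =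
      - ∫ s, transportSlope L U ρ T s * g (s, y) := by
    simp only [← deriv_line]
    exact hT.integral_mul_deriv (by positivity) F_lipschitz
      (ae_hasDerivAt_cumulativeVolume hL hUo.measurableSet hUb) hα hβ hαβ
      (hg.contDiff.comp (contDiff_id.prodMk contDiff_const))
      fun s hs => heights ⟨(s, y), subset_tsupport g hs, rfl⟩
  rw [Measure.volume_eq_prod, integral_prod_symm _
    (hg.integrable_mul_fderiv_fst hT.continuous), integral_prod_symm _
    (integrable_transportSlope_mul hL hUo hUb hρ hv hT hg), ← integral_neg]
  exact integral_congr_ae (ae_of_all _ line_by_parts)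

end InductionStep

/-! ### Isoperimetry by induction on the dimension -/

section InductionStep

variable {N : ℕ} {L : (ℝ × 𝔼 N) ≃L[ℝ] 𝔼(N + 1)} {U : Set (𝔼(N + 1))} {ρ : ℝ} {T q : ℝ → ℝ}
  {g : ℝ × 𝔼 N → ℝ}

/-- The divergence, at height `s`, of the transport of `U` to the unit ball that follows `T` in the
direction of the splitting and sends the slice at height `s`, as if it were a ball of radius
`sliceRadius L U s`, to a ball of radius `√(1 - T s ^ 2)`. -/
def transportDivergence (L : (ℝ × 𝔼 N) ≃L[ℝ] 𝔼(N + 1)) (U : Set (𝔼(N + 1))) (ρ : ℝ)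
    (T : ℝ → ℝ) (s : ℝ) : ℝ :=
  transportSlope L U ρ T s + √(1 - T s ^ 2) * (N / sliceRadius L U s)

lemma measurable_transportDivergence (hU : MeasurableSet U) (hT : Measurable T) :
    Measurable (transportDivergence L U ρ T) :=
  (measurable_transportSlope hU hT).add ((measurable_const.sub (hT.pow_const 2)).sqrt.mul
    (measurable_const.div (measurable_sliceRadius hU)))

lemma IsoperimetricInequality.mul_integral_slice_le (hN : IsoperimetricInequality N)
    (hL : IsOrthogonalSplitting L) (hUo : IsOpen U) (hUb : Bornology.IsBounded U) {s : ℝ}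
    {y : 𝔼 N} (hy : L (s, y) ∈ U) (hg : IsNonnegTest (L ⁻¹' U) g) :
    N / sliceRadius L U s * ∫ y, g (s, y) ≤
      ∫ y, ‖(fderiv ℝ g (s, y)).comp (ContinuousLinearMap.inr ℝ ℝ (𝔼 N))‖ := by
  have fderiv_slice (y : 𝔼 N) : fderiv ℝ (fun y => g (s, y)) y =
      (fderiv ℝ g (s, y)).comp (ContinuousLinearMap.inr ℝ ℝ (𝔼 N)) :=
    ((hg.contDiff.differentiable one_ne_zero (s, y)).hasFDerivAt.comp y
      (hasFDerivAt_prodMk_right s y)).fderiv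
  have slice_isoperimetry := hN {y | L (s, y) ∈ U} _ (hUo.preimage (by fun_prop))
    (hL.isBounded_slice hUb s) (sliceRadius_pos hL hUo hUb hy)
    (sliceVolume_eq_unitBallVol_mul hy).le _ (hg.slice s)
  simpa only [integral_const_mul, fderiv_slice] using slice_isoperimetry

lemma mul_integral_slice_le_of_le_transportDivergence (hN : IsoperimetricInequality N)
    (hL : IsOrthogonalSplitting L) (hUo : IsOpen U) (hUb : Bornology.IsBounded U)
    (hq : ∀ s y, L (s, y) ∈ U → q s ≤ transportDivergence L U ρ T s)
    (hg : IsNonnegTest (L ⁻¹' U) g) (s : ℝ) :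
    q s * ∫ y, g (s, y) ≤ transportSlope L U ρ T s * (∫ y, g (s, y)) + √(1 - T s ^ 2) *
      ∫ y, ‖(fderiv ℝ g (s, y)).comp (ContinuousLinearMap.inr ℝ ℝ (𝔼 N))‖ := by
  by_cases slice_nonempty : ∃ y, L (s, y) ∈ U
  · obtain ⟨y, hy⟩ := slice_nonempty
    have q_le := hq s y hy
    have slice_isoperimetry := hN.mul_integral_slice_le hL hUo hUb hy hg
    have g_nonneg : 0 ≤ ∫ y, g (s, y) := integral_nonneg fun y => hg.nonneg _
    calc q s * ∫ y, g (s, y)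
        ≤ transportDivergence L U ρ T s * ∫ y, g (s, y) := by
          gcongr
      _ = transportSlope L U ρ T s * (∫ y, g (s, y)) +
            √(1 - T s ^ 2) * (N / sliceRadius L U s * ∫ y, g (s, y)) := by
          rw [transportDivergence]; ring
      _ ≤ _ := by gcongr
  · have g_eq_zero (y : 𝔼 N) : g (s, y) = 0 := image_eq_zero_of_notMem_tsupport fun hy =>
      slice_nonempty ⟨y, hg.tsupport_subset hy⟩
    simp only [g_eq_zero, integral_zero, mul_zero, zero_add]
    positivity

lemma integral_mul_le_of_le_transportDivergence (hN : IsoperimetricInequality N)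
    (hL : IsOrthogonalSplitting L) (hUo : IsOpen U) (hUb : Bornology.IsBounded U) (hρ : 0 < ρ)
    (hv : volume.real U ≤ unitBallVol (N + 1) * ρ ^ (N + 1))
    (hT : IsBallTransport N (ρ ^ (N + 1))⁻¹ (cumulativeVolume L U) T)
    (hq : ∀ s y, L (s, y) ∈ U → q s ≤ transportDivergence L U ρ T s)
    (hg : IsNonnegTest (L ⁻¹' U) g) (hqg : Integrable fun z : ℝ × 𝔼 N => q z.1 * g z) :
    ∫ z : ℝ × 𝔼 N, q z.1 * g z ≤ (∫ z : ℝ × 𝔼 N, transportSlope L U ρ T z.1 * g z) +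
      ∫ z : ℝ × 𝔼 N,
        √(1 - T z.1 ^ 2) * ‖(fderiv ℝ g z).comp (ContinuousLinearMap.inr ℝ ℝ (𝔼 N))‖ := by
  have slope_integrable := integrable_transportSlope_mul hL hUo hUb hρ hv hT hg
  have hg₂ := hg.integrable_mul_norm_fderiv_snd (φ := fun s => √(1 - T s ^ 2))
    (continuous_const.sub (hT.continuous.pow 2)).sqrt
  rw [Measure.volume_eq_prod, integral_prod _ hqg, integral_prod _ slope_integrable,
    integral_prod _ hg₂, ← integral_add slope_integrable.integral_prod_left hg₂.integral_prod_left]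
  refine integral_mono hqg.integral_prod_left
    (slope_integrable.integral_prod_left.add hg₂.integral_prod_left) fun s => ?_
  simp only [integral_const_mul]
  exact mul_integral_slice_le_of_le_transportDivergence hN hL hUo hUb hq hg s

lemma isIsoperimetricWeight_of_le_transportDivergence (hN : IsoperimetricInequality N)
    (hL : IsOrthogonalSplitting L) (hUo : IsOpen U) (hUb : Bornology.IsBounded U) (hρ : 0 < ρ)
    (hv : volume.real U ≤ unitBallVol (N + 1) * ρ ^ (N + 1))
    (hT : IsBallTransport N (ρ ^ (N + 1))⁻¹ (cumulativeVolume L U) T)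
    (hq : ∀ s y, L (s, y) ∈ U → q s ≤ transportDivergence L U ρ T s)
    (hq_meas : Measurable q) {B : ℝ}
    (hqB : ∀ s, |q s| ≤ B) : IsIsoperimetricWeight U fun x => q (L.symm x).1 := by
  intro h hh
  have hg := hh.comp_continuousLinearEquiv L
  have fderiv_g (z : ℝ × 𝔼 N) : fderiv ℝ (h ∘ L) z = (fderiv ℝ h (L z)).comp
      (L : (ℝ × 𝔼 N) →L[ℝ] 𝔼(N + 1)) := L.comp_right_fderiv
  have hTg := (hg.integrable_mul_fderiv_fst hT.continuous).fun_neg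
  have hg₂ := hg.integrable_mul_norm_fderiv_snd (φ := fun s => √(1 - T s ^ 2))
    (continuous_const.sub (hT.continuous.pow 2)).sqrt
  have norm_integrable : Integrable fun z => ‖fderiv ℝ h (L z)‖ :=
    hL.measurePreserving.integrable_comp_of_integrable hh.integrable_norm_fderiv
  rw [← hL.integral_comp, ← hL.integral_comp fun x => ‖fderiv ℝ h x‖]
  simp only [ContinuousLinearEquiv.symm_apply_apply]
  refine (integral_mul_le_of_le_transportDivergence hN hL hUo hUb hρ hv hT hq hg
    (hg.integrable_mul (hq_meas.comp measurable_fst) fun z _ => hqB z.1)).trans ?_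
  rw [← neg_eq_iff_eq_neg.2 (integral_transport_mul_fderiv hL hUo hUb hρ hv hT hg),
    ← integral_neg, ← integral_add hTg hg₂]
  refine integral_mono (hTg.add hg₂) norm_integrable fun z => ?_
  have := hL.le_opNorm (fderiv ℝ h (L z)) (abs_le.2 (hT.mem_Icc z.1))
  simp only [fderiv_g]
  rwa [← neg_mul]

end InductionStep

section ArithmeticGeometricMean

variable {N : ℕ} {k y : ℝ}

lemma mul_le_pow_div_pow_add (N : ℕ) (hk : 0 < k) (hy : 0 < y) :
    (N + 1) * k ≤ k ^ (N + 1) / y ^ N + N * y := by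
  obtain ⟨u, rfl⟩ : ∃ u, k = y * u := ⟨k / y, by field_simp⟩
  have u_pos : 0 < u := pos_of_mul_pos_right hk hy.le
  have bernoulli := one_add_mul_sub_le_pow (by linarith : -1 ≤ u) (N + 1)
  have ratio : (y * u) ^ (N + 1) / y ^ N = y * u ^ (N + 1) := by
    rw [mul_pow, pow_succ y]; field_simp
  rw [ratio]
  push_cast at bernoulli
  nlinarith

lemma eq_of_pow_div_pow_add_le (hN : 1 ≤ N) (hk : 0 < k) (hy : 0 < y)
    (h : k ^ (N + 1) / y ^ N + N * y ≤ (N + 1) * k) : y = k := by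
  obtain ⟨u, rfl⟩ : ∃ u, k = y * u := ⟨k / y, by field_simp⟩
  have u_pos : 0 < u := pos_of_mul_pos_right hk hy.le
  have bernoulli : (1 + N * (u - 1)) * u ≤ u ^ N * u := by
    gcongr
    exact one_add_mul_sub_le_pow (by linarith) N
  have ratio : (y * u) ^ (N + 1) / y ^ N = y * (u ^ N * u) := by
    rw [mul_pow, pow_succ y, pow_succ u]; field_simp
  rw [ratio] at h
  have square_nonpos : y * N * (u - 1) ^ 2 ≤ 0 := by nlinarith
  have yN_pos : 0 < y * N := mul_pos hy (by exact_mod_cast hN)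
  have : (u - 1) ^ 2 = 0 := le_antisymm (nonpos_of_mul_nonpos_right square_nonpos yN_pos)
    (sq_nonneg _)
  rw [sub_eq_zero.1 (pow_eq_zero_iff two_ne_zero |>.1 this), mul_one]

end ArithmeticGeometricMean

section Isoperimetry

variable {N : ℕ} {L : (ℝ × 𝔼 N) ≃L[ℝ] 𝔼(N + 1)} {U : Set (𝔼(N + 1))} {ρ : ℝ} {T : ℝ → ℝ}

lemma sqrt_one_sub_sq_pos {t : ℝ} (ht : |t| < 1) : 0 < √(1 - t ^ 2) :=
  Real.sqrt_pos.2 (sub_pos.2 ((sq_lt_one_iff_abs_lt_one t).2 ht))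

lemma transportSlope_eq (hL : IsOrthogonalSplitting L) (hUo : IsOpen U)
    (hUb : Bornology.IsBounded U) (hρ : 0 < ρ) {s : ℝ} {y : 𝔼 N} (hy : L (s, y) ∈ U)
    (ht : |T s| < 1) :
    transportSlope L U ρ T s =
      (1 / ρ) ^ (N + 1) / (√(1 - T s ^ 2) / sliceRadius L U s) ^ N := by
  have := sqrt_one_sub_sq_pos ht
  have := unitBallVol_pos N
  have := sliceRadius_pos hL hUo hUb hy
  rw [transportSlope, sliceVolume_eq_unitBallVol_mul hy, ballSection, div_pow, div_pow, one_pow]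
  field_simp

-- The slope of `T` times the `N` slice dilations is `(1 / ρ) ^ (N + 1)`, so this is the inequality
-- between the arithmetic and the geometric mean.
lemma div_le_transportDivergence (hL : IsOrthogonalSplitting L) (hUo : IsOpen U)
    (hUb : Bornology.IsBounded U) (hρ : 0 < ρ) {s : ℝ} {y : 𝔼 N} (hy : L (s, y) ∈ U)
    (ht : |T s| < 1) : ((N + 1 : ℕ) : ℝ) / ρ ≤ transportDivergence L U ρ T s := by
  rw [transportDivergence, transportSlope_eq hL hUo hUb hρ hy ht]
  calc ((N + 1 : ℕ) : ℝ) / ρ = (N + 1) * (1 / ρ) := by push_cast; ring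
    _ ≤ _ := mul_le_pow_div_pow_add N (by positivity)
        (div_pos (sqrt_one_sub_sq_pos ht) (sliceRadius_pos hL hUo hUb hy))
    _ = _ := by ring

theorem isoperimetricInequality (n : ℕ) : IsoperimetricInequality n := by
  induction n with
  | zero =>
    intro U r _ _ _ _ h _
    simp
  | succ N ih =>
    intro U r hUo hUb hr hv
    obtain ⟨L, hL, -⟩ := exists_isOrthogonalSplitting (N := N) (θ := EuclideanSpace.single 0 1)
      (by simp)
    obtain ⟨T, hT⟩ := exists_isBallTransport_cumulativeVolume hL hUo.measurableSet hUb hr hv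
    exact isIsoperimetricWeight_of_le_transportDivergence ih hL hUo hUb hr hv hT
      (fun s y hy => div_le_transportDivergence hL hUo hUb hr hy
        (hT.abs_lt_one hUo hUb hr hv hy)) measurable_const fun _ => le_rfl

end Isoperimetry

/-! ### Sets without improved isoperimetry are balls -/

/-- The perimeter-to-volume ratio `n / ρ` of the ball of radius `ρ` can be increased on a nonnull
subset of `U`. -/
def HasImprovedIsoperimetry {n : ℕ} (U : Set (𝔼 n)) (ρ : ℝ) : Prop :=
  ∃ δ > 0, ∃ E ⊆ U, MeasurableSet E ∧ 0 < volume E ∧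
    IsIsoperimetricWeight U fun x => n / ρ + E.indicator (fun _ => δ) x

lemma IsIsoperimetricWeight.congr {n : ℕ} {U : Set (𝔼 n)} {w w' : 𝔼 n → ℝ}
    (hw : IsIsoperimetricWeight U w) (h : EqOn w w' U) : IsIsoperimetricWeight U w' := by
  intro g hg
  refine (integral_congr_ae (ae_of_all _ fun x => ?_)).trans_le (hw g hg)
  by_cases hx : x ∈ U
  · simp only [h hx]
  · simp [image_eq_zero_of_notMem_tsupport fun hx' => hx (hg.tsupport_subset hx')]

section SliceRigidity

variable {N : ℕ} {L : (ℝ × 𝔼 N) ≃L[ℝ] 𝔼(N + 1)} {U : Set (𝔼(N + 1))} {ρ : ℝ} {T : ℝ → ℝ}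

/-- The heights at which `U` has a nonempty slice. -/
def heights (L : (ℝ × 𝔼 N) ≃L[ℝ] 𝔼(N + 1)) (U : Set (𝔼(N + 1))) : Set ℝ :=
  (fun x => (L.symm x).1) '' U

lemma mem_heights {s : ℝ} : s ∈ heights L U ↔ ∃ y, L (s, y) ∈ U := by
  refine ⟨?_, fun ⟨y, hy⟩ => ⟨L (s, y), hy, by simp⟩⟩
  rintro ⟨x, hx, rfl⟩
  exact ⟨(L.symm x).2, by simpa using hx⟩

lemma isOpen_heights (hUo : IsOpen U) : IsOpen (heights L U) := by
  have : heights L U = Prod.fst '' (L.symm '' U) := by simp only [heights, image_image]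
  rw [this]
  exact isOpenMap_fst _ (L.symm.toHomeomorph.isOpenMap _ hUo)

lemma isPreconnected_heights (hUc : IsPreconnected U) : IsPreconnected (heights L U) :=
  hUc.image _ (by fun_prop)

lemma sliceVolume_eq_zero_of_notMem_heights {s : ℝ} (hs : s ∉ heights L U) :
    sliceVolume L U s = 0 := by
  have slice_empty : {y | L (s, y) ∈ U} = ∅ :=
    eq_empty_of_forall_notMem fun y hy => hs (mem_heights.2 ⟨y, hy⟩)
  rw [sliceVolume, slice_empty, measureReal_empty]

/-- The part of `U` lying at heights where the transport divergence exceeds its minimal value by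
at least `δ`. -/
def excessDivergenceSet (L : (ℝ × 𝔼 N) ≃L[ℝ] 𝔼(N + 1)) (U : Set (𝔼(N + 1))) (ρ : ℝ)
    (T : ℝ → ℝ) (δ : ℝ) : Set (𝔼(N + 1)) :=
  U ∩ (fun x => (L.symm x).1) ⁻¹' {s | ((N + 1 : ℕ) : ℝ) / ρ + δ ≤ transportDivergence L U ρ T s}

lemma measurableSet_excessDivergenceSet (hU : MeasurableSet U) (hT : Measurable T) (δ : ℝ) :
    MeasurableSet (excessDivergenceSet L U ρ T δ) :=
  hU.inter ((by fun_prop : Measurable fun x => (L.symm x).1)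
    (measurableSet_le measurable_const (measurable_transportDivergence hU hT)))

lemma isIsoperimetricWeight_excessDivergenceSet (hL : IsOrthogonalSplitting L) (hUo : IsOpen U)
    (hUb : Bornology.IsBounded U) (hρ : 0 < ρ)
    (hv : volume.real U ≤ unitBallVol (N + 1) * ρ ^ (N + 1))
    (hT : IsBallTransport N (ρ ^ (N + 1))⁻¹ (cumulativeVolume L U) T) {δ : ℝ} (hδ : 0 < δ) :
    IsIsoperimetricWeight U fun x => ((N + 1 : ℕ) : ℝ) / ρ +
      (excessDivergenceSet L U ρ T δ).indicator (fun _ => δ) x := by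
  set S : Set ℝ := {s | ((N + 1 : ℕ) : ℝ) / ρ + δ ≤ transportDivergence L U ρ T s}
  have S_measurable : MeasurableSet S := measurableSet_le measurable_const
    (measurable_transportDivergence hUo.measurableSet hT.continuous.measurable)
  have weight_le (s : ℝ) (y : 𝔼 N) (hy : L (s, y) ∈ U) :
      ((N + 1 : ℕ) : ℝ) / ρ + S.indicator (fun _ => δ) s ≤ transportDivergence L U ρ T s := by
    by_cases hs : s ∈ S
    · rw [indicator_of_mem hs]
      exact hs
    · rw [indicator_of_notMem hs, add_zero]
      exact div_le_transportDivergence hL hUo hUb hρ hy (hT.abs_lt_one hUo hUb hρ hv hy)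
  have weight_bounded (s : ℝ) : |((N + 1 : ℕ) : ℝ) / ρ + S.indicator (fun _ => δ) s| ≤
      ((N + 1 : ℕ) : ℝ) / ρ + δ := by
    have indicator_nonneg : 0 ≤ S.indicator (fun _ => δ) s := indicator_nonneg (fun _ _ => hδ.le) s
    rw [abs_of_nonneg (by positivity)]
    gcongr
    exact indicator_le_self' (fun _ _ => hδ.le) s
  refine (isIsoperimetricWeight_of_le_transportDivergence (isoperimetricInequality N) hL hUo hUb hρ
    hv hT weight_le (measurable_const.add (measurable_const.indicator S_measurable))
    weight_bounded).congr fun x hx => ?_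
  have mem_iff : x ∈ excessDivergenceSet L U ρ T δ ↔ (L.symm x).1 ∈ S := and_iff_right hx
  by_cases hS : (L.symm x).1 ∈ S
  · simp only [indicator_of_mem hS, indicator_of_mem (mem_iff.2 hS)]
  · simp only [indicator_of_notMem hS, indicator_of_notMem (mem_iff.not.2 hS)]

lemma ae_transportDivergence_le (hL : IsOrthogonalSplitting L) (hUo : IsOpen U)
    (hUb : Bornology.IsBounded U) (hρ : 0 < ρ)
    (hv : volume.real U ≤ unitBallVol (N + 1) * ρ ^ (N + 1))
    (hT : IsBallTransport N (ρ ^ (N + 1))⁻¹ (cumulativeVolume L U) T)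
    (h_not : ¬ HasImprovedIsoperimetry U ρ) :
    ∀ᵐ s, s ∈ heights L U → transportDivergence L U ρ T s ≤ ((N + 1 : ℕ) : ℝ) / ρ := by
  have excess_measurable (δ : ℝ) := measurableSet_excessDivergenceSet (L := L) (ρ := ρ)
    hUo.measurableSet hT.continuous.measurable δ
  have excess_null (k : ℕ) : volume (excessDivergenceSet L U ρ T (1 / ((k : ℝ) + 1))) = 0 :=
    nonpos_iff_eq_zero.1 <| not_lt.1 fun excess_pos => h_not
      ⟨_, by positivity, _, inter_subset_left, excess_measurable _, excess_pos,
        isIsoperimetricWeight_excessDivergenceSet hL hUo hUb hρ hv hT (by positivity)⟩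
  have slices_null : ∀ᵐ s, ∀ k : ℕ,
      volume {y | L (s, y) ∈ excessDivergenceSet L U ρ T (1 / ((k : ℝ) + 1))} = 0 := by
    refine ae_all_iff.2 fun k => ?_
    have integral_eq_zero := excess_null k
    rw [hL.volume_eq_lintegral_slices (excess_measurable _)] at integral_eq_zero
    exact (lintegral_eq_zero_iff (measurable_measure_prodMk_left
      (L.continuous.measurable (excess_measurable _)))).1 integral_eq_zero
  filter_upwards [slices_null] with s hs hsU
  obtain ⟨y, hy⟩ := mem_heights.1 hsU
  by_contra! lt_divergence
  obtain ⟨k, hk⟩ := exists_nat_one_div_lt (sub_pos.2 lt_divergence)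
  have slice_eq : {y | L (s, y) ∈ excessDivergenceSet L U ρ T (1 / ((k : ℝ) + 1))} =
      {y | L (s, y) ∈ U} := by
    ext y
    simp only [excessDivergenceSet, mem_inter_iff, mem_preimage, mem_ofPred_eq,
      ContinuousLinearEquiv.symm_apply_apply, and_iff_left_iff_imp]
    intro
    linarith
  have slice_open : IsOpen {y | L (s, y) ∈ U} := hUo.preimage (by fun_prop)
  exact (slice_open.measure_pos volume ⟨y, hy⟩).ne' (slice_eq ▸ hs k)

-- Equality in the inequality between the arithmetic and the geometric mean.
lemma sliceVolume_eq_of_transportDivergence_le (hN : 1 ≤ N) (hL : IsOrthogonalSplitting L)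
    (hUo : IsOpen U) (hUb : Bornology.IsBounded U) (hρ : 0 < ρ) {s : ℝ} {y : 𝔼 N}
    (hy : L (s, y) ∈ U) (ht : |T s| < 1)
    (h : transportDivergence L U ρ T s ≤ ((N + 1 : ℕ) : ℝ) / ρ) :
    sliceVolume L U s = ρ ^ N * ballSection N (T s) := by
  have r_pos := sliceRadius_pos hL hUo hUb hy
  have sqrt_pos := sqrt_one_sub_sq_pos ht
  rw [transportDivergence, transportSlope_eq hL hUo hUb hρ hy ht] at h
  have dilation_eq : √(1 - T s ^ 2) / sliceRadius L U s = 1 / ρ := by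
    refine eq_of_pow_div_pow_add_le hN (by positivity) (by positivity) ?_
    convert h using 1
    · ring
    · push_cast; ring
  have radius_eq : sliceRadius L U s = ρ * √(1 - T s ^ 2) := by
    field_simp at dilation_eq
    linarith
  rw [sliceVolume_eq_unitBallVol_mul hy, radius_eq, ballSection, mul_pow]
  ring

lemma ae_sliceVolume_eq_ballSection_transport (hN : 1 ≤ N) (hL : IsOrthogonalSplitting L)
    (hUo : IsOpen U) (hUb : Bornology.IsBounded U) (hρ : 0 < ρ)
    (hv : volume.real U ≤ unitBallVol (N + 1) * ρ ^ (N + 1))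
    (hT : IsBallTransport N (ρ ^ (N + 1))⁻¹ (cumulativeVolume L U) T)
    (h_not : ¬ HasImprovedIsoperimetry U ρ) :
    ∀ᵐ s, s ∈ heights L U → sliceVolume L U s = ρ ^ N * ballSection N (T s) := by
  filter_upwards [ae_transportDivergence_le hL hUo hUb hρ hv hT h_not] with s hs hsU
  obtain ⟨y, hy⟩ := mem_heights.1 hsU
  exact sliceVolume_eq_of_transportDivergence_le hN hL hUo hUb hρ hy
    (hT.abs_lt_one hUo hUb hρ hv hy) (hs hsU)

lemma hasDerivAt_cumulativeVolume (hL : IsOrthogonalSplitting L) (hUo : IsOpen U)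
    (hUb : Bornology.IsBounded U) (hUc : IsPreconnected U) {a : ℝ → ℝ} (ha : Continuous a)
    (hae : ∀ᵐ s, s ∈ heights L U → sliceVolume L U s = a s) {s : ℝ} (hs : s ∈ heights L U) :
    HasDerivAt (cumulativeVolume L U) (a s) s := by
  have integral_deriv : HasDerivAt (fun u => cumulativeVolume L U s + ∫ t in s..u, a t) (a s) s :=
    (intervalIntegral.integral_hasDerivAt_right (ha.intervalIntegrable _ _)
      (ha.stronglyMeasurableAtFilter _ _) ha.continuousAt).const_add _
  refine integral_deriv.congr_of_eventuallyEq ?_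
  filter_upwards [(isOpen_heights hUo).mem_nhds hs] with u hu
  have integral_eq : ∫ t in s..u, sliceVolume L U t = ∫ t in s..u, a t := by
    refine intervalIntegral.integral_congr_ae ?_
    filter_upwards [hae] with t ht htu
    exact ht ((isPreconnected_heights hUc).ordConnected.uIcc_subset hs hu (uIoc_subset_uIcc htu))
  rw [← integral_eq, ← cumulativeVolume_sub hL hUo.measurableSet hUb]
  ring

lemma exists_transport_eq_affine (hL : IsOrthogonalSplitting L) (hUo : IsOpen U)
    (hUb : Bornology.IsBounded U) (hUc : IsConnected U) (hρ : 0 < ρ)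
    (hv : volume.real U ≤ unitBallVol (N + 1) * ρ ^ (N + 1))
    (hT : IsBallTransport N (ρ ^ (N + 1))⁻¹ (cumulativeVolume L U) T)
    (hae : ∀ᵐ s, s ∈ heights L U → sliceVolume L U s = ρ ^ N * ballSection N (T s)) :
    ∃ m, ∀ s ∈ heights L U, T s = (s - m) / ρ := by
  have T_deriv (s : ℝ) (hs : s ∈ heights L U) : HasDerivAt T (1 / ρ) s := by
    obtain ⟨y, hy⟩ := mem_heights.1 hs
    have T_lt := hT.abs_lt_one hUo hUb hρ hv hy
    have section_pos := ballSection_pos N T_lt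
    have section_continuous : Continuous fun s => ρ ^ N * ballSection N (T s) :=
      ((continuous_ballSection N).comp hT.continuous).const_mul _
    convert hT.hasDerivAt T_lt (hasDerivAt_cumulativeVolume hL hUo hUb hUc.isPreconnected
      section_continuous hae hs) using 1
    rw [pow_succ]
    field_simp
  have difference_deriv (s : ℝ) (hs : s ∈ heights L U) :
      HasDerivAt (fun s => T s - s / ρ) 0 s := by
    simpa using (T_deriv s hs).fun_sub ((hasDerivAt_id' s).div_const ρ)
  obtain ⟨x, hx⟩ := hUc.nonempty
  refine ⟨(L.symm x).1 - ρ * T (L.symm x).1, fun s hs => ?_⟩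
  have difference_eq := (isOpen_heights hUo).is_const_of_deriv_eq_zero
    (isPreconnected_heights hUc.isPreconnected)
    (fun t ht => (difference_deriv t ht).differentiableAt.differentiableWithinAt)
    (fun t ht => (difference_deriv t ht).deriv) hs (mem_image_of_mem _ hx)
  field_simp at difference_eq ⊢
  linarith

end SliceRigidity

section Rigidity

variable {N : ℕ} {L : (ℝ × 𝔼 N) ≃L[ℝ] 𝔼(N + 1)} {U : Set (𝔼(N + 1))} {ρ : ℝ}

lemma ballSection_eq_zero (hN : 1 ≤ N) {τ : ℝ} (hτ : 1 ≤ |τ|) : ballSection N τ = 0 := by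
  rw [ballSection, Real.sqrt_eq_zero_of_nonpos
    (sub_nonpos.2 ((one_le_sq_iff_one_le_abs τ).2 hτ)), zero_pow (by lia), mul_zero]

lemma integrable_ballSection (hN : 1 ≤ N) : Integrable (ballSection N) := by
  refine (continuous_ballSection N).integrable_of_hasCompactSupport
    (HasCompactSupport.intro (isCompact_Icc (a := -1) (b := 1)) fun τ hτ => ?_)
  exact ballSection_eq_zero hN (not_le.1 (mt abs_le.1 hτ)).le

lemma integral_ballSection_univ (hN : 1 ≤ N) : ∫ τ, ballSection N τ = unitBallVol (N + 1) := by
  rw [← integral_ballSection, intervalIntegral.integral_of_le (by norm_num),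
    integral_Ioc_eq_integral_Ioo]
  exact (setIntegral_eq_integral_of_forall_compl_eq_zero fun τ hτ =>
    ballSection_eq_zero hN (not_lt.1 (mt abs_lt.1 hτ))).symm

lemma integrable_scaled_ballSection (hN : 1 ≤ N) (hρ : 0 < ρ) (m : ℝ) :
    Integrable fun s => ρ ^ N * ballSection N ((s - m) / ρ) :=
  (((integrable_ballSection hN).comp_div hρ.ne').comp_sub_right m).const_mul _

lemma integral_scaled_ballSection (hN : 1 ≤ N) (hρ : 0 < ρ) (m : ℝ) :
    ∫ s, ρ ^ N * ballSection N ((s - m) / ρ) = unitBallVol (N + 1) * ρ ^ (N + 1) := by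
  rw [integral_const_mul, integral_sub_right_eq_self (fun s => ballSection N (s / ρ)),
    Measure.integral_comp_div, integral_ballSection_univ hN, abs_of_pos hρ, smul_eq_mul, pow_succ]
  ring

lemma integral_sub_mul_scaled_ballSection (N : ℕ) (ρ m : ℝ) :
    ∫ s, (s - m) * (ρ ^ N * ballSection N ((s - m) / ρ)) = 0 := by
  rw [integral_sub_right_eq_self (fun s => s * (ρ ^ N * ballSection N (s / ρ)))]
  have integrand_odd (s : ℝ) : -s * (ρ ^ N * ballSection N (-s / ρ)) =
      -(s * (ρ ^ N * ballSection N (s / ρ))) := by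
    rw [ballSection, ballSection, neg_div, neg_sq]
    ring
  have integral_eq_neg := integral_neg_eq_self (fun s => s * (ρ ^ N * ballSection N (s / ρ))) volume
  simp only [integrand_odd, integral_neg] at integral_eq_neg
  linarith

lemma integral_sliceVolume (hL : IsOrthogonalSplitting L) (hU : MeasurableSet U)
    (hUb : Bornology.IsBounded U) : ∫ s, sliceVolume L U s = volume.real U := by
  rw [integral_eq_lintegral_of_nonneg_ae (ae_of_all _ sliceVolume_nonneg)
    (measurable_sliceVolume hU).aestronglyMeasurable, lintegral_sliceVolume hL hU hUb]
  rfl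

lemma setIntegral_comp_height (hL : IsOrthogonalSplitting L) (hU : MeasurableSet U) {g : ℝ → ℝ}
    (hg : IntegrableOn (fun x => g (L.symm x).1) U) :
    ∫ x in U, g (L.symm x).1 = ∫ s, g s * sliceVolume L U s := by
  have inner_integral (s : ℝ) :
      ∫ y, U.indicator (fun x => g (L.symm x).1) (L (s, y)) = g s * sliceVolume L U s := by
    have slice_measurable : MeasurableSet {y | L (s, y) ∈ U} :=
      (by fun_prop : Measurable fun y => L (s, y)) hU
    have integrand_eq : (fun y => U.indicator (fun x => g (L.symm x).1) (L (s, y))) =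
        {y | L (s, y) ∈ U}.indicator fun _ => g s := by
      ext y
      simp [indicator]
    rw [integrand_eq, integral_indicator_const _ slice_measurable, smul_eq_mul, mul_comm]
    rfl
  rw [← integral_indicator hU, ← hL.integral_comp, Measure.volume_eq_prod, integral_prod]
  · simp only [inner_integral]
  · exact (hL.measurePreserving.integrable_comp_emb L.toHomeomorph.measurableEmbedding).2
      ((integrable_indicator_iff hU).2 hg)

lemma exists_ae_sliceVolume_eq_scaled_ballSection (hN : 1 ≤ N) (hL : IsOrthogonalSplitting L)
    (hUo : IsOpen U) (hUb : Bornology.IsBounded U) (hUc : IsConnected U) (hρ : 0 < ρ)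
    (hv : volume.real U = unitBallVol (N + 1) * ρ ^ (N + 1))
    (h_not : ¬ HasImprovedIsoperimetry U ρ) :
    ∃ m, (∀ s ∈ heights L U, |s - m| < ρ) ∧
      ∀ᵐ s, sliceVolume L U s = ρ ^ N * ballSection N ((s - m) / ρ) := by
  obtain ⟨T, hT⟩ := exists_isBallTransport_cumulativeVolume hL hUo.measurableSet hUb hρ hv.le
  have ae_eq_transport := ae_sliceVolume_eq_ballSection_transport hN hL hUo hUb hρ hv.le hT h_not
  obtain ⟨m, hm⟩ := exists_transport_eq_affine hL hUo hUb hUc hρ hv.le hT ae_eq_transport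
  refine ⟨m, fun s hs => ?_, ?_⟩
  · obtain ⟨y, hy⟩ := mem_heights.1 hs
    have T_lt := hT.abs_lt_one hUo hUb hρ hv.le hy
    rwa [hm s hs, abs_div, abs_of_pos hρ, div_lt_one hρ] at T_lt
  have ae_le : sliceVolume L U ≤ᵐ[volume] fun s => ρ ^ N * ballSection N ((s - m) / ρ) := by
    filter_upwards [ae_eq_transport] with s hs
    by_cases hsU : s ∈ heights L U
    · rw [hs hsU, hm s hsU]
    · rw [sliceVolume_eq_zero_of_notMem_heights hsU]
      exact mul_nonneg (by positivity) (ballSection_nonneg N _)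
  refine (integral_eq_iff_of_ae_le (integrable_sliceVolume hL hUo.measurableSet hUb)
    (integrable_scaled_ballSection hN hρ m) ae_le).1 ?_
  rw [integral_sliceVolume hL hUo.measurableSet hUb, integral_scaled_ballSection hN hρ, hv]

lemma height_average_eq (hU : MeasurableSet U) (hUb : Bornology.IsBounded U)
    (hU_pos : 0 < volume.real U) {m : ℝ} (h : ∫ x in U, ((L.symm x).1 - m) = 0) :
    (L.symm (⨍ x in U, x)).1 = m := by
  let height : 𝔼(N + 1) →L[ℝ] ℝ :=
    (ContinuousLinearMap.fst ℝ ℝ (𝔼 N)).comp (L.symm : 𝔼(N + 1) →L[ℝ] (ℝ × 𝔼 N))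
  have integrable_id : IntegrableOn (fun x : 𝔼(N + 1) => x) U := by
    obtain ⟨D, hD⟩ := hUb.exists_norm_le
    exact Measure.integrableOn_of_bounded (M := D) hUb.measure_lt_top.ne (by fun_prop)
      ((ae_restrict_iff' hU).2 (ae_of_all _ hD))
  change ∫ x in U, (height x - m) = 0 at h
  rw [integral_sub (height.integrable_comp integrable_id)
    (integrableOn_const hUb.measure_lt_top.ne), height.integral_comp_comm integrable_id,
    setIntegral_const, smul_eq_mul, sub_eq_zero] at h
  change height (⨍ x in U, x) = m
  rw [setAverage_eq, map_smul, smul_eq_mul, h, inv_mul_cancel_left₀ hU_pos.ne']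

lemma abs_height_sub_average_lt (hN : 1 ≤ N) (hL : IsOrthogonalSplitting L)
    (hUo : IsOpen U) (hUb : Bornology.IsBounded U) (hUc : IsConnected U) (hρ : 0 < ρ)
    (hv : volume.real U = unitBallVol (N + 1) * ρ ^ (N + 1))
    (h_not : ¬ HasImprovedIsoperimetry U ρ) {x : 𝔼(N + 1)} (hx : x ∈ U) :
    |(L.symm x).1 - (L.symm (⨍ z in U, z)).1| < ρ := by
  obtain ⟨m, heights_close, slices_eq⟩ :=
    exists_ae_sliceVolume_eq_scaled_ballSection hN hL hUo hUb hUc hρ hv h_not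
  have U_pos : 0 < volume.real U := by
    rw [hv]
    exact mul_pos (unitBallVol_pos _) (by positivity)
  have close (z : 𝔼(N + 1)) (hz : z ∈ U) : |(L.symm z).1 - m| < ρ :=
    heights_close _ (mem_image_of_mem _ hz)
  have integrable_height : IntegrableOn (fun z => (L.symm z).1 - m) U :=
    Measure.integrableOn_of_bounded (M := ρ) hUb.measure_lt_top.ne (by fun_prop)
      ((ae_restrict_iff' hUo.measurableSet).2 (ae_of_all _ fun z hz => (close z hz).le))
  rw [height_average_eq hUo.measurableSet hUb U_pos (m := m)]
  · exact close x hx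
  rw [setIntegral_comp_height hL hUo.measurableSet (g := fun s => s - m) integrable_height,
    ← integral_sub_mul_scaled_ballSection N ρ m]
  refine integral_congr_ae ?_
  filter_upwards [slices_eq] with s hs
  rw [hs]

-- Splitting off the direction `x - c` through the barycenter `c` of `U` gives `‖x - c‖ < ρ`.
lemma subset_ball_average_of_not_hasImprovedIsoperimetry (hN : 1 ≤ N) (hUo : IsOpen U)
    (hUb : Bornology.IsBounded U) (hUc : IsConnected U) (hρ : 0 < ρ)
    (hv : volume.real U = unitBallVol (N + 1) * ρ ^ (N + 1))
    (h_not : ¬ HasImprovedIsoperimetry U ρ) : U ⊆ ball (⨍ x in U, x) ρ := by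
  intro x hx
  set c : 𝔼(N + 1) := ⨍ x in U, x
  rw [mem_ball, dist_eq_norm]
  rcases eq_or_ne x c with rfl | hxc
  · simpa using hρ
  have norm_pos : 0 < ‖x - c‖ := norm_pos_iff.2 (sub_ne_zero.2 hxc)
  obtain ⟨L, hL, L_one⟩ := exists_isOrthogonalSplitting (θ := ‖x - c‖⁻¹ • (x - c))
    (by rw [norm_smul, norm_inv, norm_norm, inv_mul_cancel₀ norm_pos.ne'])
  have sub_eq : L.symm (x - c) = (‖x - c‖, 0) := by
    rw [L.symm_apply_eq, ← mul_one ‖x - c‖, ← smul_eq_mul, ← smul_zero ‖x - c‖, ← Prod.smul_mk,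
      map_smul, L_one, smul_smul, mul_inv_cancel₀ norm_pos.ne', one_smul]
  have height_lt := abs_height_sub_average_lt hN hL hUo hUb hUc hρ hv h_not hx
  rwa [← Prod.fst_sub, ← map_sub, sub_eq, abs_of_pos norm_pos] at height_lt

end Rigidity

lemma eq_ball_of_subset_of_volume_le {n : ℕ} {Ω : Set (𝔼 n)} (hΩ : interior (closure Ω) = Ω)
    {c : 𝔼 n} {ρ : ℝ} (hsub : Ω ⊆ ball c ρ) (hv : volume (ball c ρ) ≤ volume Ω) :
    Ω = ball c ρ := by
  have Ω_measurable : MeasurableSet Ω := hΩ ▸ isOpen_interior.measurableSet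
  have sdiff_null : volume (ball c ρ \ Ω) = 0 := by
    rw [measure_sdiff hsub Ω_measurable.nullMeasurableSet
      ((measure_mono hsub).trans_lt measure_ball_lt_top).ne]
    exact tsub_eq_zero_of_le hv
  have sdiff_empty : ball c ρ \ closure Ω = ∅ :=
    (isOpen_ball.sdiff isClosed_closure).eq_empty_of_measure_zero
      (measure_mono_null (sdiff_subset_sdiff_right subset_closure) sdiff_null)
  exact hsub.antisymm
    ((interior_maximal (sdiff_eq_empty.1 sdiff_empty) isOpen_ball).trans hΩ.subset)

theorem exists_eq_ball_or_hasImprovedIsoperimetry {n : ℕ} (hn : 2 ≤ n) {Ω : Set (𝔼 n)}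
    (hΩ : interior (closure Ω) = Ω) (hΩb : Bornology.IsBounded Ω) (hΩc : IsConnected Ω)
    {ρ : ℝ} (hρ : 0 < ρ) (hv : volume.real Ω = unitBallVol n * ρ ^ n) :
    (∃ c, Ω = ball c ρ) ∨ HasImprovedIsoperimetry Ω ρ := by
  refine or_iff_not_imp_right.2 fun h_not => ⟨⨍ x in Ω, x, ?_⟩
  obtain ⟨N, rfl⟩ : ∃ N, n = N + 1 := ⟨n - 1, by lia⟩
  have Ω_open : IsOpen Ω := hΩ ▸ isOpen_interior
  refine eq_ball_of_subset_of_volume_le hΩ (subset_ball_average_of_not_hasImprovedIsoperimetry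
    (by lia) Ω_open hΩb hΩc hρ hv h_not) ?_
  rw [volume_ball_eq_unitBallVol _ hρ, ← hv, Measure.real,
    ENNReal.ofReal_toReal hΩb.measure_lt_top.ne]

-- Where `x ∉ Ω` lies in the interior of the closure, the defining function has a local maximum.
lemma HasC1Boundary.interior_closure_eq {n : ℕ} {Ω : Set (𝔼 n)} (hΩ : HasC1Boundary Ω)
    (hΩo : IsOpen Ω) : interior (closure Ω) = Ω := by
  refine Subset.antisymm (fun x hx => ?_) (interior_maximal subset_closure hΩo)
  by_contra hxΩ
  obtain ⟨V, f, V_open, hxV, hf, fderiv_ne, hV⟩ := hΩ x (hΩo.frontier_eq ▸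
    ⟨interior_subset hx, hxΩ⟩)
  have f_nonneg : 0 ≤ f x := not_lt.1 fun hfx => hxΩ (hV ▸ ⟨hxV, hfx⟩ : x ∈ Ω ∩ V).1
  have f_nonpos : ∀ z ∈ V ∩ interior (closure Ω), f z ≤ 0 := by
    intro z hz
    by_contra! f_pos
    obtain ⟨w, ⟨f_pos_w, hwV⟩, hwΩ⟩ := mem_closure_iff.1 (interior_subset hz.2)
      ({y | 0 < f y} ∩ V) ((isOpen_lt continuous_const hf.continuous).inter V_open) ⟨f_pos, hz.1⟩
    have f_neg_w : w ∈ {y | y ∈ V ∧ f y < 0} := hV ▸ ⟨hwΩ, hwV⟩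
    exact lt_asymm f_pos_w f_neg_w.2
  have local_max : IsLocalMax f x := by
    filter_upwards [(V_open.inter isOpen_interior).mem_nhds ⟨hxV, hx⟩] with z hz
    exact (f_nonpos z hz).trans f_nonneg
  exact fderiv_ne x hxV local_max.fderiv_eq_zero

/-! ### From isoperimetric weights to gradient bounds on level bands -/

/-- `Ψ` is an approximate version of `u ↦ min (max (|u| - s) 0) (t - s)`: a nonnegative `C¹`
function, supported in `{s < |u|}`, at least `c` on `{t ≤ |u|}`, with slope at most `1` that
vanishes on `{t ≤ |u|}`. -/
structure IsLevelCutoff (s t c : ℝ) (Ψ : ℝ → ℝ) : Prop where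
  contDiff : ContDiff ℝ 1 Ψ
  nonneg : ∀ u, 0 ≤ Ψ u
  tsupport_subset : tsupport Ψ ⊆ {u | s < |u|}
  le_of_le_abs : ∀ u, t ≤ |u| → c ≤ Ψ u
  abs_deriv_le : ∀ u, |deriv Ψ u| ≤ 1
  deriv_eq_zero : ∀ u, t ≤ |u| → deriv Ψ u = 0

lemma contDiff_one_integral {η : ℝ → ℝ} (hη : Continuous η) (a : ℝ) :
    ContDiff ℝ 1 fun u => ∫ v in a..u, η v := by
  have primitive (u : ℝ) := hη.integral_hasStrictDerivAt a u
  refine contDiff_one_iff_deriv.2 ⟨fun u => (primitive u).hasDerivAt.differentiableAt, ?_⟩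
  rwa [funext fun u => (primitive u).hasDerivAt.deriv]

lemma exists_bump_integral {s t c : ℝ} (hc : 0 < c) (hct : c < t - s) :
    ∃ η : ℝ → ℝ, ∃ s' > s, Continuous η ∧ (∀ v, η v ∈ Icc 0 1) ∧ (∀ v ≤ s', η v = 0) ∧
      (∀ v, t ≤ v → η v = 0) ∧ ∀ u, t ≤ u → c ≤ ∫ v in s..u, η v := by
  let bump : ContDiffBump ((s + t) / 2) :=
    ⟨c / 2, (c + (t - s)) / 4, by linarith, by linarith⟩
  have bump_nonneg (v : ℝ) : 0 ≤ bump v := bump.nonneg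
  have bump_eq_zero (v : ℝ) (hv : (c + (t - s)) / 4 ≤ |v - (s + t) / 2|) : bump v = 0 :=
    bump.zero_of_le_dist hv
  refine ⟨bump, (s + t) / 2 - (c + (t - s)) / 4, by linarith, bump.continuous,
    fun v => ⟨bump_nonneg v, bump.le_one⟩, fun v hv => bump_eq_zero v ?_,
    fun v hv => bump_eq_zero v ?_, fun u hu => ?_⟩
  · exact le_abs.2 (Or.inr (by linarith))
  · exact le_abs.2 (Or.inl (by linarith))
  have plateau : ∫ v in (s + t) / 2 - c / 2..(s + t) / 2 + c / 2, bump v = c := by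
    rw [intervalIntegral.integral_congr (g := fun _ => (1 : ℝ))]
    · simp
    · intro v hv
      rw [uIcc_of_le (by linarith), ← Real.closedBall_eq_Icc] at hv
      exact bump.one_of_mem_closedBall hv
  rw [← plateau]
  exact intervalIntegral.integral_mono_interval (by linarith) (by linarith) (by linarith)
    (ae_of_all _ bump_nonneg) (bump.continuous.intervalIntegrable _ _)

lemma exists_isLevelCutoff {s t c : ℝ} (hs : 0 ≤ s) (hc : 0 < c) (hct : c < t - s) :
    ∃ Ψ, IsLevelCutoff s t c Ψ := by
  obtain ⟨η, s', hs', η_cont, η_mem, η_eq_zero, η_eq_zero', le_integral⟩ :=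
    exists_bump_integral hc hct
  let ψ : ℝ → ℝ := fun u => ∫ v in s..u, η v
  have ψ_eq_zero (u : ℝ) (hu : u ≤ s') : ψ u = 0 :=
    intervalIntegral.integral_zero_ae (ae_of_all _ fun v hv => η_eq_zero v
      ((uIoc_subset_uIcc hv).2.trans (max_le hs'.le hu)))
  have ψ_nonneg (u : ℝ) : 0 ≤ ψ u := by
    rcases le_total s u with hu | hu
    · exact intervalIntegral.integral_nonneg hu fun v _ => (η_mem v).1
    · exact (ψ_eq_zero u (hu.trans hs'.le)).ge
  have ψ_contDiff : ContDiff ℝ 1 ψ := contDiff_one_integral η_cont s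
  have deriv_eq (u : ℝ) : deriv (fun u => ψ u + ψ (-u)) u = η u - η (-u) := by
    have ψ_deriv (v : ℝ) : HasDerivAt ψ (η v) v := (η_cont.integral_hasStrictDerivAt s v).hasDerivAt
    have := ((ψ_deriv u).add ((ψ_deriv (-u)).comp u (hasDerivAt_neg u))).deriv
    rwa [mul_neg_one, ← sub_eq_add_neg] at this
  refine ⟨fun u => ψ u + ψ (-u), ψ_contDiff.add (ψ_contDiff.comp contDiff_neg),
    fun u => add_nonneg (ψ_nonneg u) (ψ_nonneg (-u)), ?_, fun u hu => ?_, fun u => ?_,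
    fun u hu => ?_⟩
  · refine (closure_minimal (fun u hu => ?_) (isClosed_le continuous_const continuous_abs)).trans
      fun u (hu : s' ≤ |u|) => hs'.trans_le hu
    by_contra habs
    rw [mem_ofPred_eq, not_le] at habs
    obtain ⟨neg_lt, lt⟩ := abs_lt.1 habs
    exact hu (by simp only [ψ_eq_zero u lt.le, ψ_eq_zero (-u) (by linarith), add_zero])
  · rcases le_abs.1 hu with hu | hu
    · exact (le_integral u hu).trans (le_add_of_nonneg_right (ψ_nonneg _))
    · exact (le_integral (-u) hu).trans (le_add_of_nonneg_left (ψ_nonneg _))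
  · rw [deriv_eq, abs_le]
    constructor <;> linarith [(η_mem u).1, (η_mem u).2, (η_mem (-u)).1, (η_mem (-u)).2]
  · rw [deriv_eq, sub_eq_zero]
    rcases le_abs.1 hu with hu | hu
    · rw [η_eq_zero' u hu, η_eq_zero (-u) (by linarith)]
    · rw [η_eq_zero' (-u) hu, η_eq_zero u (by linarith)]

section Band

variable {n : ℕ} {f : 𝔼 n → ℝ} {s t c : ℝ} {Ψ : ℝ → ℝ}

lemma superlevelSet_subset_tsupport (f : 𝔼 n → ℝ) (hs : 0 ≤ s) :
    {x | s < |f x|} ⊆ tsupport f := fun _ hx =>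
  subset_tsupport f (abs_pos.1 (hs.trans_lt hx))

lemma volume_superlevelSet_ne_top (hf : HasCompactSupport f) (hs : 0 ≤ s) :
    volume {x | s < |f x|} ≠ ⊤ :=
  ((measure_mono (superlevelSet_subset_tsupport f hs)).trans_lt hf.isCompact.measure_lt_top).ne

namespace IsLevelCutoff

lemma isNonnegTest_comp (hΨ : IsLevelCutoff s t c Ψ) (hf : ContDiff ℝ 1 f)
    (hfc : HasCompactSupport f) (hs : 0 ≤ s) : IsNonnegTest {x | s < |f x|} (Ψ ∘ f) where
  contDiff := hΨ.contDiff.comp hf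
  hasCompactSupport := hfc.comp_left <|
    image_eq_zero_of_notMem_tsupport fun h => by simpa using hs.trans_lt (hΨ.tsupport_subset h)
  nonneg x := hΨ.nonneg _
  tsupport_subset := (tsupport_comp_subset_preimage Ψ hf.continuous).trans
    fun _ hx => hΨ.tsupport_subset hx

lemma norm_fderiv_comp_le (hΨ : IsLevelCutoff s t c Ψ) (hf : ContDiff ℝ 1 f) (x : 𝔼 n) :
    ‖fderiv ℝ (Ψ ∘ f) x‖ ≤
      {x | s < |f x| ∧ |f x| < t}.indicator (fun x => ‖fderiv ℝ f x‖) x := by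
  have chain : fderiv ℝ (Ψ ∘ f) x = deriv Ψ (f x) • fderiv ℝ f x :=
    ((hΨ.contDiff.differentiable one_ne_zero _).hasDerivAt.comp_hasFDerivAt x
      (hf.differentiable one_ne_zero x).hasFDerivAt).fderiv
  rw [chain, norm_smul, Real.norm_eq_abs]
  by_cases hx : x ∈ {x | s < |f x| ∧ |f x| < t}
  · rw [indicator_of_mem hx]
    exact mul_le_of_le_one_left (norm_nonneg _) (hΨ.abs_deriv_le _)
  rw [indicator_of_notMem hx]
  have deriv_zero : deriv Ψ (f x) = 0 := by
    by_contra h_ne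
    have s_lt : s < |f x| := hΨ.tsupport_subset (support_deriv_subset h_ne)
    exact h_ne (hΨ.deriv_eq_zero _ (not_lt.1 fun lt_t => hx ⟨s_lt, lt_t⟩))
  rw [deriv_zero, abs_zero, zero_mul]

end IsLevelCutoff

lemma measurableSet_band (hf : Continuous f) (s t : ℝ) :
    MeasurableSet {x | s < |f x| ∧ |f x| < t} :=
  ((isOpen_lt continuous_const hf.abs).inter (isOpen_lt hf.abs continuous_const)).measurableSet

lemma IsIsoperimetricWeight.mul_setIntegral_le_band_of_cutoff {w : 𝔼 n → ℝ}
    (hiso : IsIsoperimetricWeight {x | s < |f x|} w) (hΨ : IsLevelCutoff s t c Ψ)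
    (hf : ContDiff ℝ 1 f) (hfc : HasCompactSupport f) (hw : Measurable w) (hw0 : ∀ x, 0 ≤ w x)
    {B : ℝ} (hwB : ∀ x, w x ≤ B) (hs : 0 ≤ s) (hst : s < t) :
    c * ∫ x in {x | t ≤ |f x|}, w x ≤ ∫ x in {x | s < |f x| ∧ |f x| < t}, ‖fderiv ℝ f x‖ := by
  have test := hΨ.isNonnegTest_comp hf hfc hs
  have w_norm_le (x : 𝔼 n) : ‖w x‖ ≤ B := (Real.norm_of_nonneg (hw0 x)).trans_le (hwB x)
  have weighted_integrable : Integrable fun x => w x * (Ψ ∘ f) x :=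
    test.integrable_mul hw fun x _ => w_norm_le x
  have level_finite : volume {x | t ≤ |f x|} ≠ ⊤ :=
    ne_top_of_le_ne_top (volume_superlevelSet_ne_top hfc hs) (measure_mono fun _ => hst.trans_le)
  have w_integrable : IntegrableOn w {x | t ≤ |f x|} :=
    Measure.integrableOn_of_bounded level_finite hw.aestronglyMeasurable (ae_of_all _ w_norm_le)
  have grad_integrable : Integrable fun x => ‖fderiv ℝ f x‖ :=
    (hf.continuous_fderiv one_ne_zero).norm.integrable_of_hasCompactSupport (hfc.fderiv ℝ).norm
  have band_measurable := measurableSet_band hf.continuous s t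
  calc c * ∫ x in {x | t ≤ |f x|}, w x
      = ∫ x in {x | t ≤ |f x|}, c * w x := (integral_const_mul _ _).symm
    _ ≤ ∫ x in {x | t ≤ |f x|}, w x * (Ψ ∘ f) x := by
      refine setIntegral_mono_on (w_integrable.const_mul _) weighted_integrable.integrableOn
        (isClosed_le continuous_const hf.continuous.abs).measurableSet fun x hx => ?_
      rw [mul_comm]
      exact mul_le_mul_of_nonneg_left (hΨ.le_of_le_abs _ hx) (hw0 x)
    _ ≤ ∫ x, w x * (Ψ ∘ f) x := setIntegral_le_integral weighted_integrable
      (ae_of_all _ fun x => mul_nonneg (hw0 x) (test.nonneg x))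
    _ ≤ ∫ x, ‖fderiv ℝ (Ψ ∘ f) x‖ := hiso _ test
    _ ≤ ∫ x, {x | s < |f x| ∧ |f x| < t}.indicator (fun x => ‖fderiv ℝ f x‖) x :=
      integral_mono test.integrable_norm_fderiv (grad_integrable.indicator band_measurable)
        (hΨ.norm_fderiv_comp_le hf)
    _ = ∫ x in {x | s < |f x| ∧ |f x| < t}, ‖fderiv ℝ f x‖ := integral_indicator band_measurable

lemma IsIsoperimetricWeight.mul_setIntegral_le_band {w : 𝔼 n → ℝ}
    (hiso : IsIsoperimetricWeight {x | s < |f x|} w) (hf : ContDiff ℝ 1 f)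
    (hfc : HasCompactSupport f) (hw : Measurable w) (hw0 : ∀ x, 0 ≤ w x) {B : ℝ}
    (hwB : ∀ x, w x ≤ B) (hs : 0 ≤ s) (hst : s < t) :
    (t - s) * ∫ x in {x | t ≤ |f x|}, w x ≤
      ∫ x in {x | s < |f x| ∧ |f x| < t}, ‖fderiv ℝ f x‖ := by
  have limit : Tendsto (fun c => c * ∫ x in {x | t ≤ |f x|}, w x) (𝓝[<] (t - s))
      (𝓝 ((t - s) * ∫ x in {x | t ≤ |f x|}, w x)) :=
    (Continuous.tendsto (by fun_prop) _).mono_left nhdsWithin_le_nhds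
  refine le_of_tendsto limit ?_
  filter_upwards [Ioo_mem_nhdsLT (sub_pos.2 hst)] with c hc
  obtain ⟨Ψ, hΨ⟩ := exists_isLevelCutoff hs hc.1 hc.2
  exact hiso.mul_setIntegral_le_band_of_cutoff hΨ hf hfc hw hw0 hwB hs hst

lemma mul_volume_le_band {r : ℝ} (hf : ContDiff ℝ 1 f) (hfc : HasCompactSupport f) (hs : 0 ≤ s)
    (hst : s < t) (hr : 0 < r) (hv : volume.real {x | s < |f x|} ≤ unitBallVol n * r ^ n) :
    n / r * (t - s) * volume.real {x | t ≤ |f x|} ≤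
      ∫ x in {x | s < |f x| ∧ |f x| < t}, ‖fderiv ℝ f x‖ := by
  have weight : IsIsoperimetricWeight {x | s < |f x|} fun _ => n / r :=
    isoperimetricInequality n _ r (isOpen_lt continuous_const hf.continuous.abs)
      (hfc.isCompact.isBounded.subset (superlevelSet_subset_tsupport f hs)) hr hv
  refine Eq.trans_le ?_ (weight.mul_setIntegral_le_band hf hfc measurable_const
    (fun _ => by positivity) (fun _ => le_rfl) hs hst)
  rw [setIntegral_const, smul_eq_mul]
  ring

end Band

/-! ### The radial profile of the symmetric decreasing rearrangement -/

section SuperlevelMeasure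

variable {α : Type*} [MeasurableSpace α] {μ : Measure α} {f : α → ℝ} {s t : ℝ} {c : ℝ≥0∞}

lemma sq_integral_le_measureReal_mul [IsFiniteMeasure μ] (hf : MemLp f 2 μ) :
    (∫ x, f x ∂μ) ^ 2 ≤ μ.real univ * ∫ x, f x ^ 2 ∂μ := by
  have quadratic_nonneg (l : ℝ) :
      0 ≤ μ.real univ * (l * l) + -2 * (∫ x, f x ∂μ) * l + ∫ x, f x ^ 2 ∂μ := by
    have f_int : Integrable f μ := hf.integrable one_le_two
    have expand : ∫ x, (f x - l) ^ 2 ∂μ =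
        μ.real univ * (l * l) + -2 * (∫ x, f x ∂μ) * l + ∫ x, f x ^ 2 ∂μ := by
      simp_rw [show ∀ x, (f x - l) ^ 2 = l * l + -2 * l * f x + f x ^ 2 from fun x => by ring]
      rw [integral_add ((integrable_const _).fun_add (f_int.const_mul _)) hf.integrable_sq,
        integral_add (integrable_const _) (f_int.const_mul _), integral_const, smul_eq_mul,
        integral_const_mul]
      ring
    exact expand ▸ integral_nonneg fun x => sq_nonneg _
  have := discrim_le_zero quadratic_nonneg
  rw [discrim] at this
  linarith

lemma measure_superlevel_le_of_forall_gt (h : ∀ s > t, μ {x | s < f x} ≤ c) :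
    μ {x | t < f x} ≤ c := by
  obtain ⟨u, u_anti, lt_u, u_tendsto⟩ := exists_seq_strictAnti_tendsto t
  have mono : Monotone fun k => {x | u k < f x} :=
    fun i j hij x hx => (u_anti.antitone hij).trans_lt hx
  have cover : {x | t < f x} ⊆ ⋃ k, {x | u k < f x} := fun x hx =>
    mem_iUnion.2 (u_tendsto.eventually (gt_mem_nhds hx)).exists
  calc μ {x | t < f x} ≤ ⨆ k, μ {x | u k < f x} := mono.measure_iUnion ▸ measure_mono cover
    _ ≤ c := iSup_le fun k => h _ (lt_u k)

lemma le_measure_superlevel_of_forall_lt (hf : Measurable f) (hst : s < t)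
    (hs : μ {x | s < f x} ≠ ⊤) (h : ∀ u ∈ Ioo s t, c ≤ μ {x | u < f x}) :
    c ≤ μ {x | t ≤ f x} := by
  obtain ⟨u, u_mono, u_mem, u_tendsto⟩ := exists_seq_strictMono_tendsto' hst
  have anti : Antitone fun k => {x | u k < f x} :=
    fun i j hij x hx => (u_mono.monotone hij).trans_lt hx
  have cover : ⋂ k, {x | u k < f x} ⊆ {x | t ≤ f x} := fun x hx =>
    le_of_tendsto u_tendsto (Eventually.of_forall fun k => (mem_iInter.1 hx k).le)
  calc c ≤ ⨅ k, μ {x | u k < f x} := le_iInf fun k => h _ (u_mem k)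
    _ = μ (⋂ k, {x | u k < f x}) := (anti.measure_iInter
        (fun k => (measurableSet_lt measurable_const hf).nullMeasurableSet)
        ⟨0, measure_ne_top_of_subset (fun x hx => (u_mem 0).1.trans hx) hs⟩).symm
    _ ≤ μ {x | t ≤ f x} := measure_mono cover

end SuperlevelMeasure

section RadialProfile

variable {n : ℕ} {f : 𝔼 n → ℝ} {a r t ρ : ℝ}

lemma volume_real_ball (c : 𝔼 n) (hr : 0 < r) :
    volume.real (ball c r) = unitBallVol n * r ^ n := by
  rw [Measure.real, volume_ball_eq_unitBallVol c hr,
    ENNReal.toReal_ofReal (mul_nonneg (unitBallVol_pos n).le (pow_nonneg hr.le n))]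

/-- The profile `f*` of the symmetric decreasing rearrangement `x ↦ f*(‖x‖)` of `f`: the smallest
level `t ≥ 0` at which `{t < f}` fits into a ball of radius `r`. It is the unnormalised version
of `decRearrangement`, parametrised by the radius instead of the volume. -/
def radialProfile (f : 𝔼 n → ℝ) (r : ℝ) : ℝ :=
  sInf {t | 0 ≤ t ∧ volume {x | t < f x} ≤ volume (ball (0 : 𝔼 n) r)}

/-- The level band `{f*(b) < f < f*(a)}` between the levels of `f` of radii `a ≤ b`. -/
def profileBand (f : 𝔼 n → ℝ) (a b : ℝ) : Set (𝔼 n) :=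
  {x | radialProfile f b < f x ∧ f x < radialProfile f a}

lemma radialProfile_nonneg (f : 𝔼 n → ℝ) (r : ℝ) : 0 ≤ radialProfile f r :=
  Real.sInf_nonneg fun _ ht => ht.1

lemma radialProfile_le (ht : 0 ≤ t) (hv : volume {x | t < f x} ≤ volume (ball (0 : 𝔼 n) r)) :
    radialProfile f r ≤ t :=
  csInf_le ⟨0, fun _ hs => hs.1⟩ ⟨ht, hv⟩

lemma radialProfile_le_of_forall_le (ht : 0 ≤ t) (hf : ∀ x, f x ≤ t) (r : ℝ) :
    radialProfile f r ≤ t := by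
  refine radialProfile_le ht ?_
  rw [show {x | t < f x} = ∅ from eq_empty_of_forall_notMem fun x hx => (hf x).not_gt hx,
    measure_empty]
  exact zero_le

lemma radialProfile_eq_zero (hv : volume {x | 0 < f x} ≤ volume (ball (0 : 𝔼 n) ρ))
    (hr : ρ ≤ r) : radialProfile f r = 0 :=
  (radialProfile_le le_rfl (hv.trans (measure_mono (ball_subset_ball hr)))).antisymm
    (radialProfile_nonneg f r)

lemma exists_volume_superlevel_le (hf : BddAbove (range f)) (r : ℝ) :
    {t | 0 ≤ t ∧ volume {x | t < f x} ≤ volume (ball (0 : 𝔼 n) r)}.Nonempty := by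
  obtain ⟨D, hD⟩ := hf
  refine ⟨max D 0, le_max_right _ _, ?_⟩
  have empty : {x | max D 0 < f x} = ∅ := eq_empty_of_forall_notMem fun x hx =>
    ((hD (mem_range_self x)).trans (le_max_left D 0)).not_gt hx
  rw [empty, measure_empty]
  exact zero_le

lemma radialProfile_antitone (hf : BddAbove (range f)) : Antitone (radialProfile f) :=
  fun a _ hab => csInf_le_csInf ⟨0, fun _ ht => ht.1⟩ (exists_volume_superlevel_le hf a)
    fun _ ht => ⟨ht.1, ht.2.trans (measure_mono (ball_subset_ball hab))⟩

lemma volume_superlevel_radialProfile_le (hf : BddAbove (range f)) (r : ℝ) :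
    volume {x | radialProfile f r < f x} ≤ volume (ball (0 : 𝔼 n) r) := by
  refine measure_superlevel_le_of_forall_gt fun s hs => ?_
  obtain ⟨t, ⟨-, vol_le⟩, ht⟩ := exists_lt_of_csInf_lt (exists_volume_superlevel_le hf r) hs
  exact (measure_mono fun x hx => ht.trans hx).trans vol_le

lemma lt_radialProfile_iff (hf : BddAbove (range f)) (ht : 0 ≤ t) :
    t < radialProfile f r ↔ volume (ball (0 : 𝔼 n) r) < volume {x | t < f x} := by
  refine ⟨fun hlt => not_le.1 fun hv => (radialProfile_le ht hv).not_gt hlt,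
    fun hlt => not_le.1 fun hle => hlt.not_ge ?_⟩
  exact (measure_mono fun x hx => hle.trans_lt hx).trans (volume_superlevel_radialProfile_le hf r)

lemma volume_ball_le_volume_radialProfile_le (hf : Measurable f)
    (hfin : volume {x | 0 < f x} ≠ ⊤) (ha : 0 < radialProfile f a) :
    volume (ball (0 : 𝔼 n) a) ≤ volume {x | radialProfile f a ≤ f x} :=
  le_measure_superlevel_of_forall_lt hf ha hfin fun _ hu =>
    (not_le.1 fun hv => (radialProfile_le hu.1.le hv).not_gt hu.2).le

end RadialProfile

/-- `f` is a continuous compactly supported nonnegative function and `G` controls its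
variation across level bands as strongly as the isoperimetric inequality predicts for `G = ‖∇f‖`.
Allowing other `G` is what makes strict inequalities accessible. -/
structure HasBandIsoperimetry {n : ℕ} (f G : 𝔼 n → ℝ) : Prop where
  continuous : Continuous f
  nonneg : ∀ x, 0 ≤ f x
  hasCompactSupport : HasCompactSupport f
  memLp_bound : MemLp G 2 volume
  band_le : ∀ r s t : ℝ, 0 < r → 0 ≤ s → s < t →
    volume {x | s < f x} ≤ volume (ball (0 : 𝔼 n) r) →
    n / r * (t - s) * volume.real {x | t ≤ f x} ≤ ∫ x in {x | s < f x ∧ f x < t}, G x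

namespace HasBandIsoperimetry

variable {n : ℕ} {f G : 𝔼 n → ℝ} {a b : ℝ}

lemma bddAbove_range (h : HasBandIsoperimetry f G) : BddAbove (range f) :=
  h.hasCompactSupport.isCompact_range h.continuous |>.bddAbove

lemma antitone_radialProfile (h : HasBandIsoperimetry f G) : Antitone (radialProfile f) :=
  radialProfile_antitone h.bddAbove_range

lemma volume_pos_superlevel_ne_top (h : HasBandIsoperimetry f G) :
    volume {x | 0 < f x} ≠ ⊤ :=
  measure_ne_top_of_subset (fun _ hx => subset_tsupport f hx.ne')
    h.hasCompactSupport.isCompact.measure_ne_top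

lemma volume_superlevel_ne_top (h : HasBandIsoperimetry f G) (a : ℝ) :
    volume {x | radialProfile f a < f x} ≠ ⊤ :=
  measure_ne_top_of_subset (fun _ hx => (radialProfile_nonneg f a).trans_lt hx)
    h.volume_pos_superlevel_ne_top

lemma integrable_sq (h : HasBandIsoperimetry f G) : Integrable fun x => G x ^ 2 :=
  h.memLp_bound.integrable_sq

lemma profileBand_eq_empty (h : radialProfile f a ≤ radialProfile f b) :
    profileBand f a b = ∅ :=
  eq_empty_of_forall_notMem fun _ hx => (hx.1.trans (hx.2.trans_le h)).false

lemma mul_volume_ball_le_integral (h : HasBandIsoperimetry f G) (ha : 0 < a) (hab : a ≤ b) :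
    n / b * (radialProfile f a - radialProfile f b) * volume.real (ball (0 : 𝔼 n) a) ≤
      ∫ x in profileBand f a b, G x := by
  rcases (h.antitone_radialProfile hab).eq_or_lt with heq | hlt
  · simp [heq, profileBand_eq_empty]
  have pos := (radialProfile_nonneg f b).trans_lt hlt
  have volume_le : volume.real (ball (0 : 𝔼 n) a) ≤ volume.real {x | radialProfile f a ≤ f x} :=
    ENNReal.toReal_mono
      (measure_ne_top_of_subset (fun _ hx => pos.trans_le hx) h.volume_pos_superlevel_ne_top)
      (volume_ball_le_volume_radialProfile_le h.continuous.measurable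
        h.volume_pos_superlevel_ne_top pos)
  calc _ ≤ n / b * (radialProfile f a - radialProfile f b) *
        volume.real {x | radialProfile f a ≤ f x} := by
        have := sub_pos.2 hlt
        have := ha.trans_le hab
        gcongr
    _ ≤ _ := h.band_le b _ _ (ha.trans_le hab) (radialProfile_nonneg f b) hlt
        (volume_superlevel_radialProfile_le h.bddAbove_range b)

lemma volume_profileBand_le (h : HasBandIsoperimetry f G) (hab : a ≤ b) :
    volume.real (profileBand f a b) ≤
      volume.real (ball (0 : 𝔼 n) b) - volume.real (ball (0 : 𝔼 n) a) := by
  have ball_le : volume.real (ball (0 : 𝔼 n) a) ≤ volume.real (ball (0 : 𝔼 n) b) :=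
    measureReal_mono (ball_subset_ball hab) measure_ball_lt_top.ne
  rcases (h.antitone_radialProfile hab).eq_or_lt with heq | hlt
  · simpa [heq, profileBand_eq_empty] using ball_le
  have pos := (radialProfile_nonneg f b).trans_lt hlt
  have band_eq : profileBand f a b =
      {x | radialProfile f b < f x} \ {x | radialProfile f a ≤ f x} := by
    ext x
    simp [profileBand]
  have subset : {x | radialProfile f a ≤ f x} ⊆ {x | radialProfile f b < f x} :=
    fun x hx => hlt.trans_le hx
  rw [band_eq, measureReal_sdiff subset
    (measurableSet_le measurable_const h.continuous.measurable) (h.volume_superlevel_ne_top b)]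
  exact sub_le_sub
    (ENNReal.toReal_mono measure_ball_lt_top.ne
      (volume_superlevel_radialProfile_le h.bddAbove_range b))
    (ENNReal.toReal_mono (measure_ne_top_of_subset subset (h.volume_superlevel_ne_top b))
      (volume_ball_le_volume_radialProfile_le h.continuous.measurable
        h.volume_pos_superlevel_ne_top pos))

lemma sq_integral_profileBand_le (h : HasBandIsoperimetry f G) (ha : 0 < a) (hab : a ≤ b) :
    (∫ x in profileBand f a b, G x) ^ 2 ≤
      unitBallVol n * (n * b ^ (n - 1) * (b - a)) * ∫ x in profileBand f a b, G x ^ 2 := by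
  have : IsFiniteMeasure (volume.restrict (profileBand f a b)) :=
    ⟨by simpa using (measure_ne_top_of_subset (fun _ hx => hx.1)
      (h.volume_superlevel_ne_top b)).lt_top⟩
  refine (sq_integral_le_measureReal_mul (h.memLp_bound.restrict _)).trans ?_
  rw [measureReal_restrict_apply_univ]
  gcongr
  refine (h.volume_profileBand_le hab).trans ?_
  rw [volume_real_ball 0 (ha.trans_le hab), volume_real_ball 0 ha, ← mul_sub]
  refine mul_le_mul_of_nonneg_left ?_ (unitBallVol_pos n).le
  calc b ^ n - a ^ n ≤ |b - a| * n * max |b| |a| ^ (n - 1) :=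
        (le_abs_self _).trans (abs_pow_sub_pow_le b a n)
    _ = n * b ^ (n - 1) * (b - a) := by
        rw [abs_of_nonneg (sub_nonneg.2 hab), abs_of_pos ha, abs_of_pos (ha.trans_le hab),
          max_eq_left hab]
        ring

lemma mul_sq_sub_radialProfile_le (h : HasBandIsoperimetry f G) (hn : 0 < n) (ha : 0 < a)
    (hab : a ≤ b) :
    n * unitBallVol n * a ^ (2 * n) * (radialProfile f a - radialProfile f b) ^ 2 ≤
      b ^ (n + 1) * (b - a) * ∫ x in profileBand f a b, G x ^ 2 := by
  have hb := ha.trans_le hab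
  have hω := unitBallVol_pos n
  have drop_nonneg := sub_nonneg.2 (h.antitone_radialProfile hab)
  have chain : (n / b * (radialProfile f a - radialProfile f b) * (unitBallVol n * a ^ n)) ^ 2 ≤
      unitBallVol n * (n * b ^ (n - 1) * (b - a)) * ∫ x in profileBand f a b, G x ^ 2 := by
    refine le_trans ?_ (h.sq_integral_profileBand_le ha hab)
    have := h.mul_volume_ball_le_integral ha hab
    rw [volume_real_ball 0 ha] at this
    gcongr
  obtain ⟨k, rfl⟩ : ∃ k, n = k + 1 := ⟨n - 1, by omega⟩
  rw [Nat.add_sub_cancel] at chain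
  refine le_of_mul_le_mul_left ((Eq.le ?_).trans (chain.trans_eq ?_))
    (show 0 < (k + 1 : ℕ) * unitBallVol (k + 1) / b ^ 2 by positivity)
  · rw [pow_mul' a 2 (k + 1)]
    field_simp
  · field_simp
    ring

lemma continuousAt_radialProfile (h : HasBandIsoperimetry f G) (hn : 0 < n) (ha : 0 < a) :
    ContinuousAt (radialProfile f) a := by
  have hω := unitBallVol_pos n
  let modulus : ℝ → ℝ := fun b => (max a b) ^ (n + 1) * (max a b - min a b) *
    (∫ x, G x ^ 2) / (n * unitBallVol n * min a b ^ (2 * n))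
  have modulus_tendsto : Tendsto (fun b => √(modulus b)) (𝓝 a) (𝓝 0) := by
    have cont : ContinuousAt (fun b => √(modulus b)) a := by
      have : n * unitBallVol n * min a a ^ (2 * n) ≠ 0 := by
        rw [min_self]
        positivity
      fun_prop (disch := assumption)
    simpa [modulus] using cont.tendsto
  have ordered_bound {c d : ℝ} (hc : 0 < c) (hcd : c ≤ d) :
      (radialProfile f c - radialProfile f d) ^ 2 ≤
        d ^ (n + 1) * (d - c) * (∫ x, G x ^ 2) / (n * unitBallVol n * c ^ (2 * n)) := by
    rw [le_div_iff₀' (by positivity)]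
    refine (h.mul_sq_sub_radialProfile_le hn hc hcd).trans ?_
    have := hc.trans_le hcd
    have := sub_nonneg.2 hcd
    gcongr
    exacts [Eventually.of_forall fun x => sq_nonneg _, h.integrable_sq, Measure.restrict_le_self]
  refine tendsto_iff_norm_sub_tendsto_zero.2 (squeeze_zero' (Eventually.of_forall fun _ =>
    norm_nonneg _) ?_ modulus_tendsto)
  filter_upwards [lt_mem_nhds ha] with b hb
  refine Real.abs_le_sqrt ?_
  rcases le_total a b with hab | hab
  · simpa only [modulus, max_eq_right hab, min_eq_left hab, sub_sq_comm]
      using ordered_bound ha hab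
  · simpa only [modulus, max_eq_left hab, min_eq_right hab] using ordered_bound hb hab

end HasBandIsoperimetry

lemma volume_antitone_band_le {V : ℝ → ℝ} (hV : Antitone V) (τ c : ℝ) :
    volume {y | V (y + τ) < c ∧ c < V y} ≤ ENNReal.ofReal τ := by
  have sub_le {y z : ℝ} (hy : c < V y) (hz : V (z + τ) < c) : y - z ≤ τ := by
    by_contra! hlt
    exact (hz.trans (hy.trans_le (hV (by linarith)))).false
  refine (Real.volume_le_diam _).trans (Metric.ediam_le fun y hy z hz => ?_)
  rw [edist_dist, Real.dist_eq]
  exact ENNReal.ofReal_le_ofReal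
    (abs_le.2 ⟨by linarith [sub_le hz.2 hy.1], sub_le hy.2 hz.1⟩)

lemma lintegral_lintegral_antitone_band_le {α : Type*} [MeasurableSpace α] {μ : Measure α}
    [SFinite μ] {V : ℝ → ℝ} (hV : Antitone V) (hV0 : ∀ r, 0 ≤ V r) {f : α → ℝ} (hf : Measurable f)
    {g : α → ℝ≥0∞} (hg : AEMeasurable g μ) (τ : ℝ) :
    ∫⁻ y, ∫⁻ x in {x | V (y + τ) < f x ∧ f x < V y}, g x ∂μ ≤
      ENNReal.ofReal τ * ∫⁻ x in {x | 0 < f x}, g x ∂μ := by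
  let S : Set (ℝ × α) := {z | V (z.1 + τ) < f z.2 ∧ f z.2 < V z.1}
  have S_meas : MeasurableSet S :=
    (measurableSet_lt (hV.measurable.comp (measurable_fst.add_const τ))
      (hf.comp measurable_snd)).inter
    (measurableSet_lt (hf.comp measurable_snd) (hV.measurable.comp measurable_fst))
  have fibre_le (x : α) : ∫⁻ y, S.indicator (fun z => g z.2) (y, x) ≤
      {x | 0 < f x}.indicator (fun x => ENNReal.ofReal τ * g x) x := by
    have fibre_eq : ∫⁻ y, S.indicator (fun z => g z.2) (y, x) =
        g x * volume {y | V (y + τ) < f x ∧ f x < V y} := by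
      rw [← setLIntegral_const]
      exact lintegral_indicator (S_meas.preimage measurable_prodMk_right) _
    rw [fibre_eq]
    by_cases hx : 0 < f x
    · rw [indicator_of_mem (show x ∈ {x | 0 < f x} from hx), mul_comm]
      gcongr
      exact volume_antitone_band_le hV τ (f x)
    · have empty : {y | V (y + τ) < f x ∧ f x < V y} = ∅ :=
        eq_empty_of_forall_notMem fun y hy => hx ((hV0 _).trans_lt hy.1)
      rw [empty, measure_empty, mul_zero]
      exact zero_le
  calc ∫⁻ y, ∫⁻ x in {x | V (y + τ) < f x ∧ f x < V y}, g x ∂μ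
      = ∫⁻ y, ∫⁻ x, S.indicator (fun z => g z.2) (y, x) ∂μ := lintegral_congr fun y =>
        (lintegral_indicator (S_meas.preimage (measurable_prodMk_left (x := y))) g).symm
    _ = ∫⁻ x, (∫⁻ y, S.indicator (fun z => g z.2) (y, x)) ∂μ :=
        lintegral_lintegral_swap (f := fun y x => S.indicator (fun z => g z.2) (y, x))
          (hg.comp_snd.indicator S_meas)
    _ ≤ ∫⁻ x, {x | 0 < f x}.indicator (fun x => ENNReal.ofReal τ * g x) x ∂μ :=
        lintegral_mono fibre_le
    _ = ENNReal.ofReal τ * ∫⁻ x in {x | 0 < f x}, g x ∂μ := by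
        rw [lintegral_indicator (measurableSet_lt measurable_const hf),
          lintegral_const_mul' _ _ ENNReal.ofReal_ne_top]

section RadialFunction

variable {E : Type*} [NormedAddCommGroup E] {φ : ℝ → ℝ} {c δ : ℝ}

lemma comp_norm_eventuallyEq_const (hδ : 0 < δ) (hconst : ∀ r < δ, φ r = c) :
    (fun x : E => φ ‖x‖) =ᶠ[𝓝 0] fun _ => c := by
  filter_upwards [ball_mem_nhds (0 : E) hδ] with x hx
  exact hconst _ (mem_ball_zero_iff.1 hx)

variable [InnerProductSpace ℝ E]

lemma contDiff_comp_norm (hφ : ContDiff ℝ 1 φ) (hδ : 0 < δ) (hconst : ∀ r < δ, φ r = c) :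
    ContDiff ℝ 1 fun x : E => φ ‖x‖ := by
  refine contDiff_iff_contDiffAt.2 fun x => ?_
  rcases eq_or_ne x 0 with rfl | hx
  · exact contDiffAt_const.congr_of_eventuallyEq (comp_norm_eventuallyEq_const hδ hconst)
  · exact hφ.contDiffAt.comp x (contDiffAt_norm ℝ hx)

lemma norm_fderiv_comp_norm_le (hφ : ContDiff ℝ 1 φ) (hδ : 0 < δ) (hconst : ∀ r < δ, φ r = c)
    (x : E) : ‖fderiv ℝ (fun x : E => φ ‖x‖) x‖ ≤ |deriv φ ‖x‖| := by
  rcases eq_or_ne x 0 with rfl | hx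
  · rw [(comp_norm_eventuallyEq_const hδ hconst).fderiv_eq, fderiv_fun_const]
    simp
  have norm_diff : DifferentiableAt ℝ (fun x : E => ‖x‖) x :=
    (contDiffAt_norm ℝ hx (n := 1)).differentiableAt one_ne_zero
  have chain : fderiv ℝ (fun x : E => φ ‖x‖) x = deriv φ ‖x‖ • fderiv ℝ (fun x : E => ‖x‖) x :=
    ((hφ.differentiable one_ne_zero _).hasDerivAt.comp_hasFDerivAt x norm_diff.hasFDerivAt).fderiv
  rw [chain, norm_smul, Real.norm_eq_abs]
  exact mul_le_of_le_one_right (abs_nonneg _)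
    (norm_fderiv_le_of_lipschitz ℝ (lipschitzWith_one_norm (E := E)))

end RadialFunction

section SmoothedProfile

variable {n : ℕ} {f G : 𝔼 n → ℝ} {ε τ ρ r : ℝ}

/-- A `C¹` approximation of `radialProfile f`: the profile is frozen on `[0, ε]`, so that the
result is constant near the origin, and averaged over `[r + τ, r + 2τ]`, so that the result is
supported strictly inside any ball carrying the rearrangement. -/
def smoothedProfile (f : 𝔼 n → ℝ) (ε τ r : ℝ) : ℝ :=
  (∫ u in r + τ..r + τ + τ, radialProfile f (max u ε)) / τ

/-- The derivative of `smoothedProfile f ε τ`. -/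
def smoothedSlope (f : 𝔼 n → ℝ) (ε τ r : ℝ) : ℝ :=
  (radialProfile f (max (r + τ + τ) ε) - radialProfile f (max (r + τ) ε)) / τ

lemma smoothedSlope_eq_zero (hv : volume {x | 0 < f x} ≤ volume (ball (0 : 𝔼 n) ρ))
    (hτ : 0 < τ) (hr : ρ ≤ r) : smoothedSlope f ε τ r = 0 := by
  rw [smoothedSlope, radialProfile_eq_zero hv (le_max_of_le_left (by linarith)),
    radialProfile_eq_zero hv (le_max_of_le_left (by linarith)), sub_self, zero_div]

lemma smoothedProfile_eq_zero (hv : volume {x | 0 < f x} ≤ volume (ball (0 : 𝔼 n) ρ))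
    (hτ : 0 < τ) (hr : ρ ≤ r + τ) : smoothedProfile f ε τ r = 0 := by
  rw [smoothedProfile, intervalIntegral.integral_congr (g := fun _ => (0 : ℝ)),
    intervalIntegral.integral_zero, zero_div]
  intro u hu
  rw [uIcc_of_le (by linarith)] at hu
  exact radialProfile_eq_zero hv (le_max_of_le_left (hr.trans hu.1))

lemma smoothedProfile_eq_const (hτ : 0 < τ) (hr : r + τ + τ ≤ ε) :
    smoothedProfile f ε τ r = radialProfile f ε := by
  rw [smoothedProfile, intervalIntegral.integral_congr (g := fun _ => radialProfile f ε),
    intervalIntegral.integral_const, smul_eq_mul, add_sub_cancel_left,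
    mul_div_cancel_left₀ _ hτ.ne']
  intro u hu
  rw [uIcc_of_le (by linarith)] at hu
  simp only [max_eq_right (hu.2.trans hr)]

namespace HasBandIsoperimetry

lemma continuous_radialProfile_max (h : HasBandIsoperimetry f G) (hn : 0 < n) (hε : 0 < ε) :
    Continuous fun u => radialProfile f (max u ε) :=
  continuous_iff_continuousAt.2 fun _ => ContinuousAt.comp (f := fun u => max u ε)
    (h.continuousAt_radialProfile hn (lt_max_of_lt_right hε)) (by fun_prop)

lemma hasDerivAt_smoothedProfile (h : HasBandIsoperimetry f G) (hn : 0 < n) (hε : 0 < ε)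
    (τ r : ℝ) : HasDerivAt (smoothedProfile f ε τ) (smoothedSlope f ε τ r) r := by
  have cont := h.continuous_radialProfile_max hn hε
  have primitive (c : ℝ) : HasDerivAt (fun r => ∫ u in (0 : ℝ)..r + c, radialProfile f (max u ε))
      (radialProfile f (max (r + c) ε)) r :=
    (cont.integral_hasStrictDerivAt 0 (r + c)).hasDerivAt.comp_add_const r c
  have smoothed_eq : smoothedProfile f ε τ = fun r =>
      ((∫ u in (0 : ℝ)..r + (τ + τ), radialProfile f (max u ε)) -
        ∫ u in (0 : ℝ)..r + τ, radialProfile f (max u ε)) / τ := by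
    ext r
    rw [smoothedProfile, intervalIntegral.integral_interval_sub_left
      (cont.intervalIntegrable _ _) (cont.intervalIntegrable _ _), add_assoc]
  rw [smoothed_eq, smoothedSlope, add_assoc r]
  exact ((primitive (τ + τ)).sub (primitive τ)).div_const τ

lemma continuous_smoothedSlope (h : HasBandIsoperimetry f G) (hn : 0 < n) (hε : 0 < ε) (τ : ℝ) :
    Continuous (smoothedSlope f ε τ) := by
  have cont := h.continuous_radialProfile_max hn hε
  exact ((cont.comp (f := fun r => r + τ + τ) (by fun_prop)).sub
    (cont.comp (f := fun r => r + τ) (by fun_prop))).div_const τ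

lemma radialProfile_le_smoothedProfile (h : HasBandIsoperimetry f G) (hn : 0 < n) (hε : 0 < ε)
    (hτ : 0 < τ) (r : ℝ) :
    radialProfile f (max (r + τ + τ) ε) ≤ smoothedProfile f ε τ r := by
  rw [smoothedProfile, le_div_iff₀ hτ]
  calc radialProfile f (max (r + τ + τ) ε) * τ
      = ∫ _ in r + τ..r + τ + τ, radialProfile f (max (r + τ + τ) ε) := by
        rw [intervalIntegral.integral_const, smul_eq_mul, add_sub_cancel_left, mul_comm]
    _ ≤ _ := intervalIntegral.integral_mono_on (by linarith) intervalIntegrable_const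
        ((h.continuous_radialProfile_max hn hε).intervalIntegrable _ _)
        fun u hu => h.antitone_radialProfile (max_le_max hu.2 le_rfl)

lemma pow_mul_sq_sub_radialProfile_le (h : HasBandIsoperimetry f G) (hn : 0 < n) (hε : 0 < ε)
    (hτ : 0 < τ) {a b : ℝ} (hεa : ε ≤ a) (hab : a ≤ b) (hba : b ≤ a + τ) :
    n * unitBallVol n * (a ^ (n - 1) * (radialProfile f a - radialProfile f b) ^ 2) ≤
      (1 + τ / ε) ^ (n + 1) * τ * ∫ x in profileBand f a b, G x ^ 2 := by
  have ha : 0 < a := hε.trans_le hεa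
  have b_le : b ≤ (1 + τ / ε) * a := by
    have : τ ≤ τ / ε * a := by
      rw [div_mul_eq_mul_div, le_div_iff₀ hε]
      gcongr
    linarith
  refine le_of_mul_le_mul_right ?_ (pow_pos ha (n + 1))
  calc _ = n * unitBallVol n * a ^ (2 * n) * (radialProfile f a - radialProfile f b) ^ 2 := by
        rw [show 2 * n = n - 1 + (n + 1) by omega, pow_add]
        ring
    _ ≤ b ^ (n + 1) * (b - a) * ∫ x in profileBand f a b, G x ^ 2 :=
        h.mul_sq_sub_radialProfile_le hn ha hab
    _ ≤ ((1 + τ / ε) * a) ^ (n + 1) * τ * ∫ x in profileBand f a b, G x ^ 2 := by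
        have := sub_nonneg.2 hab
        have := ha.trans_le hab
        gcongr
        linarith
    _ = _ := by
        rw [mul_pow]
        ring

lemma pow_mul_sq_smoothedSlope_le (h : HasBandIsoperimetry f G) (hn : 0 < n) (hε : 0 < ε)
    (hτ : 0 < τ) (hr : 0 < r) :
    n * unitBallVol n * (r ^ (n - 1) * smoothedSlope f ε τ r ^ 2) ≤
      (1 + τ / ε) ^ (n + 1) / τ * ∫ x in profileBand f (r + τ) (r + τ + τ), G x ^ 2 := by
  have hω := unitBallVol_pos n
  rcases le_or_gt (r + τ + τ) ε with hle | hgt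
  · rw [smoothedSlope, max_eq_right hle, max_eq_right (by linarith), sub_self, zero_div,
      zero_pow two_ne_zero, mul_zero, mul_zero]
    positivity
  have le_a : r + τ ≤ max (r + τ) ε := le_max_left _ _
  have bound := h.pow_mul_sq_sub_radialProfile_le hn hε hτ (le_max_right (r + τ) ε)
    (max_le (by linarith) hgt.le) (by linarith)
  have band_mono : ∫ x in profileBand f (max (r + τ) ε) (r + τ + τ), G x ^ 2 ≤
      ∫ x in profileBand f (r + τ) (r + τ + τ), G x ^ 2 :=
    setIntegral_mono_set h.integrable_sq.integrableOn (Eventually.of_forall fun x => sq_nonneg _)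
      (Eventually.of_forall fun x hx => ⟨hx.1, hx.2.trans_le (h.antitone_radialProfile le_a)⟩)
  rw [smoothedSlope, max_eq_left hgt.le, div_pow, sub_sq_comm]
  set d := (radialProfile f (max (r + τ) ε) - radialProfile f (r + τ + τ)) ^ 2
  calc n * unitBallVol n * (r ^ (n - 1) * (d / τ ^ 2))
      ≤ n * unitBallVol n * (max (r + τ) ε ^ (n - 1) * (d / τ ^ 2)) := by
        gcongr
        linarith
    _ = n * unitBallVol n * (max (r + τ) ε ^ (n - 1) * d) / τ ^ 2 := by ring
    _ ≤ (1 + τ / ε) ^ (n + 1) * τ *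
          (∫ x in profileBand f (r + τ) (r + τ + τ), G x ^ 2) / τ ^ 2 := by
        have := bound.trans (mul_le_mul_of_nonneg_left band_mono (by positivity))
        gcongr
    _ = _ := by field_simp

lemma contDiff_smoothedProfile (h : HasBandIsoperimetry f G) (hn : 0 < n) (hε : 0 < ε) (τ : ℝ) :
    ContDiff ℝ 1 (smoothedProfile f ε τ) := by
  refine contDiff_one_iff_deriv.2
    ⟨fun r => (h.hasDerivAt_smoothedProfile hn hε τ r).differentiableAt, ?_⟩
  rw [funext fun r => (h.hasDerivAt_smoothedProfile hn hε τ r).deriv]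
  exact h.continuous_smoothedSlope hn hε τ

lemma norm_fderiv_smoothedProfile_norm_le (h : HasBandIsoperimetry f G) (hn : 0 < n) (hε : 0 < ε)
    (hτ : 0 < τ) (hτε : τ + τ < ε) (x : 𝔼 n) :
    ‖fderiv ℝ (fun x : 𝔼 n => smoothedProfile f ε τ ‖x‖) x‖ ≤ |smoothedSlope f ε τ ‖x‖| := by
  rw [← (h.hasDerivAt_smoothedProfile hn hε τ ‖x‖).deriv]
  exact norm_fderiv_comp_norm_le (h.contDiff_smoothedProfile hn hε τ) (sub_pos.2 hτε)
    (fun r hr => smoothedProfile_eq_const hτ (by linarith)) x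

lemma lintegral_integral_profileBand_le (h : HasBandIsoperimetry f G) (hτ : 0 ≤ τ) :
    ∫⁻ r, ENNReal.ofReal (∫ x in profileBand f (r + τ) (r + τ + τ), G x ^ 2) ≤
      ENNReal.ofReal (τ * ∫ x in {x | 0 < f x}, G x ^ 2) := by
  have sq_lintegral (S : Set (𝔼 n)) : ENNReal.ofReal (∫ x in S, G x ^ 2) =
      ∫⁻ x in S, ENNReal.ofReal (G x ^ 2) :=
    ofReal_integral_eq_lintegral_ofReal h.integrable_sq.integrableOn
      (Eventually.of_forall fun x => sq_nonneg _)
  simp_rw [ENNReal.ofReal_mul hτ, sq_lintegral]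
  exact lintegral_lintegral_antitone_band_le (V := fun r => radialProfile f (r + τ))
    (fun a b hab => h.antitone_radialProfile (add_le_add_left hab τ))
    (fun r => radialProfile_nonneg f _) h.continuous.measurable
    h.integrable_sq.aestronglyMeasurable.aemeasurable.ennreal_ofReal τ

lemma integral_sq_smoothedSlope_norm_le (h : HasBandIsoperimetry f G) (hn : 0 < n) (hε : 0 < ε)
    (hτ : 0 < τ) :
    ∫ x : 𝔼 n, smoothedSlope f ε τ ‖x‖ ^ 2 ≤
      (1 + τ / ε) ^ (n + 1) * ∫ x in {x | 0 < f x}, G x ^ 2 := by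
  have : Nonempty (Fin n) := ⟨⟨0, hn⟩⟩
  have hω := unitBallVol_pos n
  rw [integral_fun_norm_addHaar volume (fun r => smoothedSlope f ε τ r ^ 2),
    finrank_euclideanSpace_fin, nsmul_eq_mul, smul_eq_mul, ← mul_assoc]
  change n * unitBallVol n * (∫ r in Ioi (0 : ℝ), r ^ (n - 1) * smoothedSlope f ε τ r ^ 2) ≤ _
  rw [← integral_const_mul, integral_eq_lintegral_of_nonneg_ae]
  rotate_left
  · exact (ae_restrict_iff' measurableSet_Ioi).2 (Eventually.of_forall fun r (hr : 0 < r) =>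
      show 0 ≤ n * unitBallVol n * (r ^ (n - 1) * smoothedSlope f ε τ r ^ 2) by positivity)
  · exact (continuous_const.mul ((continuous_pow _).mul
      ((h.continuous_smoothedSlope hn hε τ).pow 2))).aestronglyMeasurable
  refine ENNReal.toReal_le_of_le_ofReal (by positivity) ?_
  calc _ ≤ ∫⁻ r in Ioi (0 : ℝ), ENNReal.ofReal ((1 + τ / ε) ^ (n + 1) / τ) *
        ENNReal.ofReal (∫ x in profileBand f (r + τ) (r + τ + τ), G x ^ 2) := by
        refine setLIntegral_mono' measurableSet_Ioi fun r hr => ?_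
        rw [← ENNReal.ofReal_mul (by positivity)]
        exact ENNReal.ofReal_le_ofReal (h.pow_mul_sq_smoothedSlope_le hn hε hτ hr)
    _ ≤ ENNReal.ofReal ((1 + τ / ε) ^ (n + 1) / τ) *
        ENNReal.ofReal (τ * ∫ x in {x | 0 < f x}, G x ^ 2) := by
        rw [lintegral_const_mul' _ _ ENNReal.ofReal_ne_top]
        gcongr
        exact (setLIntegral_le_lintegral _ _).trans (h.lintegral_integral_profileBand_le hτ.le)
    _ = _ := by
        rw [← ENNReal.ofReal_mul (by positivity)]
        congr 1
        field_simp

lemma integral_sq_fderiv_smoothedProfile_le (h : HasBandIsoperimetry f G) (hn : 0 < n)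
    (hε : 0 < ε) (hτ : 0 < τ) (hτε : τ + τ < ε)
    (hv : volume {x | 0 < f x} ≤ volume (ball (0 : 𝔼 n) ρ)) :
    ∫ x, ‖fderiv ℝ (fun x : 𝔼 n => smoothedProfile f ε τ ‖x‖) x‖ ^ 2 ≤
      (1 + τ / ε) ^ (n + 1) * ∫ x in {x | 0 < f x}, G x ^ 2 := by
  have slope_int : Integrable fun x : 𝔼 n => smoothedSlope f ε τ ‖x‖ ^ 2 := by
    refine (((h.continuous_smoothedSlope hn hε τ).comp
      continuous_norm).pow 2).integrable_of_hasCompactSupport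
      (HasCompactSupport.of_support_subset_isCompact (isCompact_closedBall (0 : 𝔼 n) ρ)
        fun x hx => ?_)
    by_contra hlt
    rw [mem_closedBall_zero_iff, not_le] at hlt
    exact hx (by simp [smoothedSlope_eq_zero hv hτ hlt.le])
  refine (integral_mono_of_nonneg (Eventually.of_forall fun x => sq_nonneg _) slope_int
    (Eventually.of_forall fun x => ?_)).trans (h.integral_sq_smoothedSlope_norm_le hn hε hτ)
  exact sq_le_sq.2 ((abs_norm _).trans_le
    (h.norm_fderiv_smoothedProfile_norm_le hn hε hτ hτε x))

end HasBandIsoperimetry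

end SmoothedProfile

/-! ### The Sobolev constant and its comparison with the ball -/

section Sobolev

variable {n : ℕ} {p : ℝ} {Ω : Set (𝔼 n)} {v : 𝔼 n → ℝ}

lemma sobolevQuotient_nonneg (p : ℝ) (Ω : Set (𝔼 n)) (v : 𝔼 n → ℝ) : 0 ≤ sobolevQuotient p Ω v :=
  div_nonneg (integral_nonneg fun _ => sq_nonneg _)
    (Real.rpow_nonneg (integral_nonneg fun _ => Real.rpow_nonneg (abs_nonneg _) _) _)

lemma sobolevConstant_nonneg (p : ℝ) (Ω : Set (𝔼 n)) : 0 ≤ sobolevConstant p Ω :=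
  Real.sInf_nonneg (forall_mem_image.2 fun v _ => sobolevQuotient_nonneg p Ω v)

lemma sobolevQuotient_eq (hp : p ≠ 0) (hv : tsupport v ⊆ Ω) :
    sobolevQuotient p Ω v = (∫ x, ‖fderiv ℝ v x‖ ^ 2) / (∫ x, |v x| ^ p) ^ (2 / p) := by
  have gradient_eq : ∫ x in Ω, ‖fderiv ℝ v x‖ ^ 2 = ∫ x, ‖fderiv ℝ v x‖ ^ 2 :=
    setIntegral_eq_integral_of_forall_compl_eq_zero fun x hx => by
      rw [fderiv_of_notMem_tsupport ℝ fun h => hx (hv h), norm_zero, zero_pow two_ne_zero]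
  have power_eq : ∫ x in Ω, |v x| ^ p = ∫ x, |v x| ^ p :=
    setIntegral_eq_integral_of_forall_compl_eq_zero fun x hx => by
      rw [image_eq_zero_of_notMem_tsupport fun h => hx (hv h), abs_zero, Real.zero_rpow hp]
  rw [sobolevQuotient, gradient_eq, power_eq]

lemma sobolevConstant_le_sobolevQuotient (hv : Admissible Ω v) :
    sobolevConstant p Ω ≤ sobolevQuotient p Ω v :=
  csInf_le ⟨0, forall_mem_image.2 fun v _ => sobolevQuotient_nonneg p Ω v⟩
    (mem_image_of_mem _ hv)

lemma sobolevConstant_mul_le (hp : 0 < p) (hv : ContDiff ℝ 1 v) (hvc : HasCompactSupport v)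
    (hvΩ : tsupport v ⊆ Ω) :
    sobolevConstant p Ω * (∫ x, |v x| ^ p) ^ (2 / p) ≤ ∫ x, ‖fderiv ℝ v x‖ ^ 2 := by
  by_cases hv0 : ∃ x, v x ≠ 0
  · have quotient_le := sobolevConstant_le_sobolevQuotient (p := p) ⟨hv, hvc, hvΩ, hv0⟩
    rw [sobolevQuotient_eq hp.ne' hvΩ] at quotient_le
    exact mul_le_of_le_div₀ (integral_nonneg fun _ => sq_nonneg _)
      (Real.rpow_nonneg (integral_nonneg fun _ => Real.rpow_nonneg (abs_nonneg _) _) _) quotient_le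
  · push Not at hv0
    simp only [hv0, abs_zero, Real.zero_rpow hp.ne', integral_zero]
    rw [Real.zero_rpow (by positivity), mul_zero]
    exact integral_nonneg fun _ => sq_nonneg _

end Sobolev

lemma exists_volume_ball_eq {n : ℕ} (hn : 0 < n) {v : ℝ≥0∞} (hv : v ≠ ⊤) :
    ∃ r, 0 ≤ r ∧ volume (ball (0 : 𝔼 n) r) = v := by
  have hω := unitBallVol_pos n
  rcases eq_or_ne v 0 with rfl | hv0
  · exact ⟨0, le_rfl, by simp⟩
  have pos : 0 < v.toReal / unitBallVol n := div_pos (ENNReal.toReal_pos hv0 hv) hω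
  refine ⟨(v.toReal / unitBallVol n) ^ (1 / (n : ℝ)), by positivity, ?_⟩
  rw [volume_ball_eq_unitBallVol 0 (by positivity), one_div,
    Real.rpow_inv_natCast_pow pos.le hn.ne', mul_div_cancel₀ _ hω.ne', ENNReal.ofReal_toReal hv]

lemma volume_ball_lt_volume_ball_iff {n : ℕ} (hn : 0 < n) {r s : ℝ} (hr : 0 ≤ r) (hs : 0 ≤ s) :
    volume (ball (0 : 𝔼 n) r) < volume (ball (0 : 𝔼 n) s) ↔ r < s := by
  have : Nonempty (Fin n) := ⟨⟨0, hn⟩⟩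
  rw [Measure.addHaar_ball _ _ hr, Measure.addHaar_ball _ _ hs,
    ENNReal.mul_lt_mul_iff_left (measure_ball_pos _ _ one_pos).ne' measure_ball_lt_top.ne,
    ENNReal.ofReal_lt_ofReal_iff_of_nonneg (by positivity), finrank_euclideanSpace_fin,
    pow_lt_pow_iff_left₀ hr hs hn.ne']

lemma tsupport_smoothedProfile_norm_subset {n : ℕ} {f : 𝔼 n → ℝ} {ε τ ρ : ℝ}
    (hv : volume {x | 0 < f x} ≤ volume (ball (0 : 𝔼 n) ρ)) (hτ : 0 < τ) :
    tsupport (fun x : 𝔼 n => smoothedProfile f ε τ ‖x‖) ⊆ closedBall 0 (ρ - τ) := by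
  refine closure_minimal (fun x hx => ?_) isClosed_closedBall
  by_contra hlt
  rw [mem_closedBall_zero_iff, not_le] at hlt
  exact hx (smoothedProfile_eq_zero hv hτ (by linarith))

namespace HasBandIsoperimetry

variable {n : ℕ} {f G : 𝔼 n → ℝ} {p ε ρ t : ℝ}

lemma sobolevConstant_ball_mul_shifted_le (h : HasBandIsoperimetry f G) (hn : 0 < n) (hp : 0 < p)
    (hε : 0 < ε) (hε' : ε < 1 / 2) (hv : volume {x | 0 < f x} ≤ volume (ball (0 : 𝔼 n) ρ)) :
    sobolevConstant p (ball (0 : 𝔼 n) ρ) *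
        (∫ x : 𝔼 n, radialProfile f (‖x‖ + 2 * ε) ^ p) ^ (2 / p) ≤
      (1 + ε) ^ (n + 1) * ∫ x in {x | 0 < f x}, G x ^ 2 := by
  have hτ : 0 < ε ^ 2 := by positivity
  have hτε : ε ^ 2 + ε ^ 2 < ε := by nlinarith
  let w : 𝔼 n → ℝ := fun x => smoothedProfile f ε (ε ^ 2) ‖x‖
  have w_contDiff : ContDiff ℝ 1 w := contDiff_comp_norm (h.contDiff_smoothedProfile hn hε _)
    (sub_pos.2 hτε) fun r hr => smoothedProfile_eq_const hτ (by linarith)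
  have w_tsupport : tsupport w ⊆ closedBall 0 (ρ - ε ^ 2) :=
    tsupport_smoothedProfile_norm_subset hv hτ
  have w_compact : HasCompactSupport w :=
    (isCompact_closedBall _ _).of_isClosed_subset (isClosed_tsupport _) w_tsupport
  have profile_le (x : 𝔼 n) : radialProfile f (‖x‖ + 2 * ε) ≤ w x :=
    (h.antitone_radialProfile (max_le (by linarith) (by linarith [norm_nonneg x]))).trans
      (h.radialProfile_le_smoothedProfile hn hε hτ ‖x‖)
  have integral_le : ∫ x : 𝔼 n, radialProfile f (‖x‖ + 2 * ε) ^ p ≤ ∫ x, |w x| ^ p := by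
    refine integral_mono_of_nonneg
      (Eventually.of_forall fun x => Real.rpow_nonneg (radialProfile_nonneg f _) _) ?_
      (Eventually.of_forall fun x => Real.rpow_le_rpow (radialProfile_nonneg f _)
        ((profile_le x).trans (le_abs_self _)) hp.le)
    exact (w_contDiff.continuous.abs.rpow_const fun x =>
      Or.inr hp.le).integrable_of_hasCompactSupport
        (w_compact.comp_left (g := fun u : ℝ => |u| ^ p) (by simp [hp.ne']))
  calc _ ≤ sobolevConstant p (ball (0 : 𝔼 n) ρ) * (∫ x, |w x| ^ p) ^ (2 / p) := by
        have := sobolevConstant_nonneg p (ball (0 : 𝔼 n) ρ)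
        have : 0 ≤ ∫ x : 𝔼 n, radialProfile f (‖x‖ + 2 * ε) ^ p :=
          integral_nonneg fun x => Real.rpow_nonneg (radialProfile_nonneg f _) _
        gcongr
    _ ≤ ∫ x, ‖fderiv ℝ w x‖ ^ 2 := sobolevConstant_mul_le hp w_contDiff w_compact
        (w_tsupport.trans (closedBall_subset_ball (by linarith)))
    _ ≤ (1 + ε ^ 2 / ε) ^ (n + 1) * ∫ x in {x | 0 < f x}, G x ^ 2 :=
        h.integral_sq_fderiv_smoothedProfile_le hn hε hτ hτε hv
    _ = _ := by rw [sq, mul_div_cancel_right₀ _ hε.ne']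

lemma volume_superlevel_radialProfile_norm (h : HasBandIsoperimetry f G) (hn : 0 < n)
    (ht : 0 ≤ t) : volume {x : 𝔼 n | t < radialProfile f ‖x‖} = volume {x | t < f x} := by
  obtain ⟨r, hr, volume_eq⟩ := exists_volume_ball_eq hn (measure_ne_top_of_subset
    (fun x hx => ht.trans_lt hx) h.volume_pos_superlevel_ne_top : volume {x | t < f x} ≠ ⊤)
  rw [← volume_eq]
  congr 1
  ext x
  rw [mem_ofPred_eq, lt_radialProfile_iff h.bddAbove_range ht, ← volume_eq, mem_ball_zero_iff,
    volume_ball_lt_volume_ball_iff hn (norm_nonneg x) hr]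

lemma integral_radialProfile_norm_rpow (h : HasBandIsoperimetry f G) (hn : 0 < n) (hp : 0 < p) :
    ∫ x : 𝔼 n, radialProfile f ‖x‖ ^ p = ∫ x, f x ^ p := by
  have profile_meas : Measurable fun x : 𝔼 n => radialProfile f ‖x‖ :=
    h.antitone_radialProfile.measurable.comp measurable_norm
  have profile_nonneg (x : 𝔼 n) : 0 ≤ radialProfile f ‖x‖ := radialProfile_nonneg f _
  rw [integral_eq_lintegral_of_nonneg_ae
      (Eventually.of_forall fun x => Real.rpow_nonneg (profile_nonneg x) _)
      (profile_meas.pow_const p).aestronglyMeasurable,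
    integral_eq_lintegral_of_nonneg_ae
      (Eventually.of_forall fun x => Real.rpow_nonneg (h.nonneg x) _)
      (h.continuous.measurable.pow_const p).aestronglyMeasurable,
    lintegral_rpow_eq_lintegral_meas_lt_mul volume (Eventually.of_forall profile_nonneg)
      profile_meas.aemeasurable hp,
    lintegral_rpow_eq_lintegral_meas_lt_mul volume (Eventually.of_forall h.nonneg)
      h.continuous.measurable.aemeasurable hp,
    setLIntegral_congr_fun measurableSet_Ioi fun t (ht : 0 < t) => by
      rw [h.volume_superlevel_radialProfile_norm hn ht.le]]

lemma tendsto_integral_shifted_radialProfile (h : HasBandIsoperimetry f G) (hn : 0 < n)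
    (hp : 0 < p) (hv : volume {x | 0 < f x} ≤ volume (ball (0 : 𝔼 n) ρ)) :
    Tendsto (fun ε => ∫ x : 𝔼 n, radialProfile f (‖x‖ + 2 * ε) ^ p) (𝓝[>] 0)
      (𝓝 (∫ x : 𝔼 n, radialProfile f ‖x‖ ^ p)) := by
  have : Nonempty (Fin n) := ⟨⟨0, hn⟩⟩
  obtain ⟨D, hD⟩ := h.bddAbove_range
  have f_le (x : 𝔼 n) : f x ≤ D := hD (mem_range_self x)
  refine tendsto_integral_filter_of_dominated_convergence
    ((ball (0 : 𝔼 n) ρ).indicator fun _ => D ^ p) ?_ ?_ ?_ ?_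
  · exact Eventually.of_forall fun ε => ((h.antitone_radialProfile.measurable.comp
      (measurable_norm.add_const _)).pow_const p).aestronglyMeasurable
  · filter_upwards [self_mem_nhdsWithin] with ε (hε : 0 < ε)
    refine Eventually.of_forall fun x => ?_
    rw [Real.norm_of_nonneg (Real.rpow_nonneg (radialProfile_nonneg f _) _)]
    by_cases hx : x ∈ ball (0 : 𝔼 n) ρ
    · rw [indicator_of_mem hx]
      exact Real.rpow_le_rpow (radialProfile_nonneg f _)
        (radialProfile_le_of_forall_le ((h.nonneg 0).trans (f_le 0)) f_le _) hp.le
    · rw [mem_ball_zero_iff, not_lt] at hx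
      rw [indicator_of_notMem (by simpa using hx), radialProfile_eq_zero hv (by linarith),
        Real.zero_rpow hp.ne']
  · rw [integrable_indicator_iff measurableSet_ball]
    exact integrableOn_const measure_ball_lt_top.ne
  · filter_upwards [Measure.ae_ne volume (0 : 𝔼 n)] with x hx
    have shift : Tendsto (fun ε : ℝ => ‖x‖ + 2 * ε) (𝓝[>] 0) (𝓝 ‖x‖) :=
      tendsto_nhdsWithin_of_tendsto_nhds (Continuous.tendsto' (by fun_prop) _ _ (by simp))
    exact ((h.continuousAt_radialProfile hn (norm_pos_iff.2 hx)).tendsto.comp shift).rpow_const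
      (Or.inr hp.le)

theorem sobolevConstant_ball_mul_le (h : HasBandIsoperimetry f G) (hn : 0 < n) (hp : 0 < p)
    (hv : volume {x | 0 < f x} ≤ volume (ball (0 : 𝔼 n) ρ)) :
    sobolevConstant p (ball (0 : 𝔼 n) ρ) * (∫ x, f x ^ p) ^ (2 / p) ≤
      ∫ x in {x | 0 < f x}, G x ^ 2 := by
  have left_tendsto := ((h.tendsto_integral_shifted_radialProfile hn hp hv).rpow_const
    (p := 2 / p) (Or.inr (by positivity))).const_mul (sobolevConstant p (ball (0 : 𝔼 n) ρ))
  rw [h.integral_radialProfile_norm_rpow hn hp] at left_tendsto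
  have right_tendsto : Tendsto (fun ε : ℝ => (1 + ε) ^ (n + 1) * ∫ x in {x | 0 < f x}, G x ^ 2)
      (𝓝[>] 0) (𝓝 (∫ x in {x | 0 < f x}, G x ^ 2)) :=
    tendsto_nhdsWithin_of_tendsto_nhds (Continuous.tendsto' (by fun_prop) _ _ (by simp))
  refine le_of_tendsto_of_tendsto left_tendsto right_tendsto ?_
  filter_upwards [self_mem_nhdsWithin, nhdsWithin_le_nhds (gt_mem_nhds one_half_pos)] with ε hε hε'
  exact h.sobolevConstant_ball_mul_shifted_le hn hp hε hε' hv

end HasBandIsoperimetry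

/-! ### Scaling and positivity of the Sobolev constant -/

section SobolevConstant

variable {n : ℕ} {p r : ℝ} {Ω : Set (𝔼 n)} {u : 𝔼 n → ℝ}

lemma exists_admissible (hΩ : IsOpen Ω) (hne : Ω.Nonempty) : ∃ u, Admissible Ω u := by
  obtain ⟨x, hx⟩ := hne
  obtain ⟨u, tsupport_subset, compact, contDiff, -, hux⟩ :=
    exists_contDiff_tsupport_subset (n := 1) (hΩ.mem_nhds hx)
  exact ⟨u, mod_cast contDiff, compact, tsupport_subset, x, by simp [hux]⟩

lemma integral_rpow_abs_nonneg (u : 𝔼 n → ℝ) (p : ℝ) : 0 ≤ ∫ x, |u x| ^ p :=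
  integral_nonneg fun _ => Real.rpow_nonneg (abs_nonneg _) _

lemma integral_rpow_abs_pos (hp : 0 < p) (hu : Admissible Ω u) : 0 < ∫ x, |u x| ^ p := by
  obtain ⟨contDiff, compact, -, x, hx⟩ := hu
  exact Continuous.integral_pos_of_hasCompactSupport_nonneg_nonzero (x := x)
    (contDiff.continuous.abs.rpow_const fun _ => Or.inr hp.le)
    (compact.comp_left (g := fun t : ℝ => |t| ^ p) (by simp [hp.ne']))
    (fun _ => Real.rpow_nonneg (abs_nonneg _) _) (Real.rpow_pos_of_pos (abs_pos.2 hx) p).ne'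

lemma le_sobolevConstant (hp : 0 < p) (hΩ : IsOpen Ω) (hne : Ω.Nonempty) {K : ℝ}
    (hK : ∀ u, Admissible Ω u → K * (∫ x, |u x| ^ p) ^ (2 / p) ≤ ∫ x, ‖fderiv ℝ u x‖ ^ 2) :
    K ≤ sobolevConstant p Ω := by
  refine le_csInf (Set.Nonempty.image _ (exists_admissible hΩ hne))
    (forall_mem_image.2 fun u hu => ?_)
  rw [sobolevQuotient_eq hp.ne' hu.2.2.1,
    le_div_iff₀ (Real.rpow_pos_of_pos (integral_rpow_abs_pos hp hu) _)]
  exact hK u hu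

lemma sobolevConstant_vadd_le (hp : 0 < p) (hΩ : IsOpen Ω) (hne : Ω.Nonempty) (c : 𝔼 n) :
    sobolevConstant p (c +ᵥ Ω) ≤ sobolevConstant p Ω := by
  refine le_sobolevConstant hp hΩ hne fun u ⟨contDiff, compact, subset, _⟩ => ?_
  let φ : 𝔼 n ≃ₜ 𝔼 n := Homeomorph.addLeft (-c)
  have φ_contDiff : ContDiff ℝ 1 φ := contDiff_const.add contDiff_id
  have comp_subset : tsupport (u ∘ φ) ⊆ c +ᵥ Ω := by
    rw [tsupport_comp_eq_preimage]
    exact fun x hx => mem_vadd_set_iff_neg_vadd_mem.2 (subset hx)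
  have fderiv_comp (x : 𝔼 n) : fderiv ℝ (u ∘ φ) x = fderiv ℝ u (-c + x) :=
    fderiv_comp_add_left (f := u) (-c)
  have comp_rpow (x : 𝔼 n) : |(u ∘ φ) x| ^ p = |u (-c + x)| ^ p := rfl
  have quotient_le :=
    sobolevConstant_mul_le hp (contDiff.comp φ_contDiff) (compact.comp_homeomorph φ) comp_subset
  simp only [fderiv_comp, comp_rpow] at quotient_le
  rwa [integral_add_left_eq_self (fun x => ‖fderiv ℝ u x‖ ^ 2),
    integral_add_left_eq_self (fun x => |u x| ^ p)] at quotient_le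

lemma sobolevConstant_smul_le (hp : 0 < p) (hΩ : IsOpen Ω) (hne : Ω.Nonempty) (hr : 0 < r) :
    sobolevConstant p (r • Ω) ≤ r ^ ((n : ℝ) - 2 - 2 * n / p) * sobolevConstant p Ω := by
  rw [← div_le_iff₀' (by positivity)]
  refine le_sobolevConstant hp hΩ hne fun u ⟨contDiff, compact, subset, _⟩ => ?_
  let φ : 𝔼 n ≃ₜ 𝔼 n := Homeomorph.smulOfNeZero r⁻¹ (inv_ne_zero hr.ne')
  have φ_contDiff : ContDiff ℝ 1 φ := contDiff_id.const_smul r⁻¹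
  have comp_subset : tsupport (u ∘ φ) ⊆ r • Ω := by
    rw [tsupport_comp_eq_preimage]
    exact fun x hx => (mem_smul_set_iff_inv_smul_mem₀ hr.ne' _ _).2 (subset hx)
  have norm_fderiv_comp (x : 𝔼 n) :
      ‖fderiv ℝ (u ∘ φ) x‖ ^ 2 = r⁻¹ ^ 2 * ‖fderiv ℝ u (r⁻¹ • x)‖ ^ 2 := by
    have fderiv_comp : fderiv ℝ (u ∘ φ) x = r⁻¹ • fderiv ℝ u (r⁻¹ • x) :=
      fderiv_comp_smul (f := u) r⁻¹
    rw [fderiv_comp, norm_smul, mul_pow, Real.norm_of_nonneg (by positivity)]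
  have comp_rpow (x : 𝔼 n) : |(u ∘ φ) x| ^ p = |u (r⁻¹ • x)| ^ p := rfl
  have exponent_eq : r⁻¹ ^ 2 * r ^ n = r ^ ((n : ℝ) - 2 - 2 * n / p) * (r ^ n) ^ (2 / p) := by
    rw [← Real.rpow_natCast r n, ← Real.rpow_mul hr.le, ← Real.rpow_add hr, inv_pow,
      ← Real.rpow_natCast r 2, ← Real.rpow_neg hr.le, ← Real.rpow_add hr]
    push_cast
    ring_nf
  have quotient_le :=
    sobolevConstant_mul_le hp (contDiff.comp φ_contDiff) (compact.comp_homeomorph φ) comp_subset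
  simp only [norm_fderiv_comp, comp_rpow] at quotient_le
  rw [integral_const_mul, Measure.integral_comp_inv_smul volume (fun x => ‖fderiv ℝ u x‖ ^ 2),
    Measure.integral_comp_inv_smul volume (fun x => |u x| ^ p), finrank_euclideanSpace_fin,
    abs_of_nonneg (by positivity), smul_eq_mul, smul_eq_mul,
    Real.mul_rpow (by positivity) (integral_rpow_abs_nonneg u p), ← mul_assoc (r⁻¹ ^ 2),
    exponent_eq] at quotient_le
  rw [div_mul_eq_mul_div, div_le_iff₀' (by positivity)]
  exact le_of_mul_le_mul_right (by linarith) (show 0 < (r ^ n) ^ (2 / p) by positivity)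

lemma sobolevConstant_ball_eq (hp : 0 < p) (c c' : 𝔼 n) (hr : 0 < r) :
    sobolevConstant p (ball c r) = sobolevConstant p (ball c' r) := by
  have le (c c' : 𝔼 n) : sobolevConstant p (ball c r) ≤ sobolevConstant p (ball c' r) := by
    have vadd_le := sobolevConstant_vadd_le hp (isOpen_ball (x := c')) (nonempty_ball.2 hr) (c - c')
    rwa [vadd_ball, vadd_eq_add, sub_add_cancel] at vadd_le
  exact (le c c').antisymm (le c' c)

lemma sobolevConstant_ball_mul_radius_le (hp : 0 < p) {R : ℝ} (hR : 0 < R) (hr : 0 < r) :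
    sobolevConstant p (ball (0 : 𝔼 n) (r * R)) ≤
      r ^ ((n : ℝ) - 2 - 2 * n / p) * sobolevConstant p (ball (0 : 𝔼 n) R) := by
  have smul_le := sobolevConstant_smul_le hp (isOpen_ball (x := (0 : 𝔼 n))) (nonempty_ball.2 hR) hr
  rwa [_root_.smul_ball hr.ne', smul_zero, Real.norm_of_nonneg hr.le] at smul_le

end SobolevConstant

section Positivity

variable {n : ℕ} {Ω : Set (𝔼 n)}

lemma exists_gradient_exponent (hn : 2 ≤ n) {p : ℝ} (hp : 0 < p)
    (hpn : (n : ℝ) - 2 < 2 * n / p) :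
    ∃ s : ℝ≥0, 1 ≤ s ∧ s ≤ 2 ∧ s < n ∧ (s : ℝ)⁻¹ - (n : ℝ)⁻¹ ≤ p⁻¹ := by
  have hn' : (2 : ℝ) ≤ n := mod_cast hn
  have hninv : (n : ℝ)⁻¹ ≤ 2⁻¹ := inv_anti₀ two_pos hn'
  have half_le : 2⁻¹ ≤ p⁻¹ + (n : ℝ)⁻¹ := by
    field_simp
    rw [lt_div_iff₀ hp] at hpn
    linarith
  let σ : ℝ := min 1 (p⁻¹ + (n : ℝ)⁻¹)
  have half_le_σ : 2⁻¹ ≤ σ := le_min (by norm_num) half_le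
  have σ_pos : 0 < σ := by linarith
  refine ⟨⟨σ⁻¹, by positivity⟩, ?_, ?_, ?_, ?_⟩
  · exact NNReal.coe_le_coe.1 ((one_le_inv₀ σ_pos).2 (min_le_left _ _))
  · exact NNReal.coe_le_coe.1 (inv_le_of_inv_le₀ two_pos half_le_σ)
  · refine NNReal.coe_lt_coe.1 (inv_lt_of_inv_lt₀ (by positivity) (lt_min ?_ ?_))
    · exact hninv.trans_lt (by norm_num)
    · exact lt_add_of_pos_left _ (inv_pos.2 hp)
  · change σ⁻¹⁻¹ - (n : ℝ)⁻¹ ≤ p⁻¹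
    rw [inv_inv]
    linarith [min_le_right 1 (p⁻¹ + (n : ℝ)⁻¹)]

lemma eLpNorm_le_eLpNorm_mul_volume {F : Type*} [NormedAddCommGroup F] {f : 𝔼 n → F}
    {s q : ℝ≥0∞} (hsq : s ≤ q) (hf : AEStronglyMeasurable f volume) (hfΩ : f.support ⊆ Ω) :
    eLpNorm f s volume ≤ eLpNorm f q volume * volume Ω ^ (1 / s.toReal - 1 / q.toReal) := by
  have restrict_eq (t : ℝ≥0∞) : eLpNorm f t (volume.restrict Ω) = eLpNorm f t volume :=
    eLpNorm_restrict_eq_of_support_subset hfΩ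
  simpa only [restrict_eq, Measure.restrict_apply_univ] using
    eLpNorm_le_eLpNorm_mul_rpow_measure_univ (μ := volume.restrict Ω) hsq hf.restrict

lemma exists_eLpNorm_le_eLpNorm_fderiv (hn : 2 ≤ n) {p : ℝ≥0} (hp : 0 < p)
    (hpn : (n : ℝ) - 2 < 2 * n / p) (hΩb : Bornology.IsBounded Ω) :
    ∃ K : ℝ≥0, ∀ u, Admissible Ω u →
      eLpNorm u p volume ≤ K * eLpNorm (fderiv ℝ u) 2 volume := by
  obtain ⟨s, one_le_s, s_le_two, s_lt_n, sobolev_exponent⟩ := exists_gradient_exponent hn hp hpn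
  have volume_rpow_ne_top : volume Ω ^ (1 / (s : ℝ) - 1 / 2) ≠ ⊤ := by
    refine ENNReal.rpow_ne_top_of_nonneg (sub_nonneg.2 ?_) hΩb.measure_lt_top.ne
    exact one_div_le_one_div_of_le (one_pos.trans_le one_le_s) s_le_two
  refine ⟨eLpNormLESNormFDerivOfLeConst ℝ volume Ω s p *
    (volume Ω ^ (1 / (s : ℝ) - 1 / 2)).toNNReal, fun u ⟨contDiff, _, subset, _⟩ => ?_⟩
  calc eLpNorm u p volume
      ≤ eLpNormLESNormFDerivOfLeConst ℝ volume Ω s p * eLpNorm (fderiv ℝ u) s volume :=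
        eLpNorm_le_eLpNorm_fderiv_of_le volume contDiff ((subset_tsupport u).trans subset) one_le_s
          (by rwa [finrank_euclideanSpace_fin]) (by rwa [finrank_euclideanSpace_fin]) hΩb
    _ ≤ eLpNormLESNormFDerivOfLeConst ℝ volume Ω s p *
          (eLpNorm (fderiv ℝ u) 2 volume * volume Ω ^ (1 / (s : ℝ) - 1 / 2)) := by
        gcongr
        exact eLpNorm_le_eLpNorm_mul_volume (s := s) (q := 2) (mod_cast s_le_two)
          (contDiff.continuous_fderiv one_ne_zero).aestronglyMeasurable
          ((support_fderiv_subset ℝ).trans subset)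
    _ = _ := by
        rw [ENNReal.coe_mul, ENNReal.coe_toNNReal volume_rpow_ne_top, mul_assoc,
          mul_comm (eLpNorm _ _ _)]

lemma exists_rpow_integral_le_integral_fderiv (hn : 2 ≤ n) {p : ℝ} (hp : 0 < p)
    (hpn : (n : ℝ) - 2 < 2 * n / p) (hΩb : Bornology.IsBounded Ω) :
    ∃ K : ℝ, ∀ u, Admissible Ω u →
      (∫ x, |u x| ^ p) ^ (2 / p) ≤ K * ∫ x, ‖fderiv ℝ u x‖ ^ 2 := by
  lift p to ℝ≥0 using hp.le
  obtain ⟨K, hK⟩ := exists_eLpNorm_le_eLpNorm_fderiv hn hp hpn hΩb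
  refine ⟨K ^ 2, fun u hu => ?_⟩
  have u_memLp : MemLp u p volume := hu.1.continuous.memLp_of_hasCompactSupport hu.2.1
  have fderiv_memLp : MemLp (fderiv ℝ u) 2 volume :=
    (hu.1.continuous_fderiv one_ne_zero).memLp_of_hasCompactSupport (hu.2.1.fderiv ℝ)
  have energy_nonneg : 0 ≤ ∫ x, ‖fderiv ℝ u x‖ ^ 2 := integral_nonneg fun _ => sq_nonneg _
  have root_le : (∫ x, |u x| ^ (p : ℝ)) ^ (p : ℝ)⁻¹ ≤
      K * (∫ x, ‖fderiv ℝ u x‖ ^ 2) ^ (2 : ℝ)⁻¹ := by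
    have eLpNorm_le := hK u hu
    rw [u_memLp.eLpNorm_eq_integral_rpow_norm (by simpa using hp.ne') (by simp),
      fderiv_memLp.eLpNorm_eq_integral_rpow_norm (by simp) (by simp)] at eLpNorm_le
    simp only [ENNReal.coe_toReal, ENNReal.toReal_ofNat, Real.norm_eq_abs, Real.rpow_ofNat]
      at eLpNorm_le
    rwa [← ENNReal.ofReal_coe_nnreal, ← ENNReal.ofReal_mul K.coe_nonneg,
      ENNReal.ofReal_le_ofReal_iff (by positivity)] at eLpNorm_le
  calc (∫ x, |u x| ^ (p : ℝ)) ^ (2 / (p : ℝ)) = ((∫ x, |u x| ^ (p : ℝ)) ^ (p : ℝ)⁻¹) ^ 2 := by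
        rw [← Real.rpow_mul_natCast (integral_rpow_abs_nonneg u p)]
        congr 1
        push_cast
        ring
    _ ≤ (K * (∫ x, ‖fderiv ℝ u x‖ ^ 2) ^ (2 : ℝ)⁻¹) ^ 2 := by
        have := integral_rpow_abs_nonneg u p
        gcongr
    _ = K ^ 2 * ∫ x, ‖fderiv ℝ u x‖ ^ 2 := by
        rw [mul_pow, ← Real.rpow_mul_natCast energy_nonneg]
        norm_num

lemma sobolevConstant_pos (hn : 2 ≤ n) {p : ℝ} (hp : 0 < p) (hpn : (n : ℝ) - 2 < 2 * n / p)
    (hΩ : IsOpen Ω) (hne : Ω.Nonempty) (hΩb : Bornology.IsBounded Ω) :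
    0 < sobolevConstant p Ω := by
  obtain ⟨K, hK⟩ := exists_rpow_integral_le_integral_fderiv hn hp hpn hΩb
  have K_pos : 0 < max K 1 := one_pos.trans_le (le_max_right _ _)
  refine (one_div_pos.2 K_pos).trans_le (le_sobolevConstant hp hΩ hne fun u hu => ?_)
  rw [div_mul_eq_mul_div, one_mul, div_le_iff₀' K_pos]
  exact (hK u hu).trans (mul_le_mul_of_nonneg_right (le_max_left _ _)
    (integral_nonneg fun _ => sq_nonneg _))

lemma sobolevConstant_ball_strictAntiOn (hn : 2 ≤ n) {p : ℝ} (hp : 0 < p)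
    (hpn : (n : ℝ) - 2 < 2 * n / p) :
    StrictAntiOn (fun r => sobolevConstant p (ball (0 : 𝔼 n) r)) (Ioi 0) := by
  intro r (hr : 0 < r) R (hR : 0 < R) hrR
  have scaling := sobolevConstant_ball_mul_radius_le (n := n) hp hr (div_pos hR hr)
  rw [div_mul_cancel₀ _ hr.ne'] at scaling
  have factor_lt_one : (R / r) ^ ((n : ℝ) - 2 - 2 * n / p) < 1 :=
    Real.rpow_lt_one_of_one_lt_of_neg ((one_lt_div hr).2 hrR) (sub_neg.2 hpn)
  exact scaling.trans_lt (mul_lt_of_lt_one_left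
    (sobolevConstant_pos hn hp hpn isOpen_ball (nonempty_ball.2 hr) isBounded_ball) factor_lt_one)

end Positivity

/-! ### The Faber–Krahn inequality -/

section Truncation

variable {n : ℕ} {f : 𝔼 n → ℝ} {p ρ r s t T : ℝ} {Ω : Set (𝔼 n)}

lemma memLp_norm_fderiv (hf : ContDiff ℝ 1 f) (hfc : HasCompactSupport f) :
    MemLp (fun x => ‖fderiv ℝ f x‖) 2 volume :=
  ((hf.continuous_fderiv one_ne_zero).memLp_of_hasCompactSupport (hfc.fderiv ℝ)).norm

lemma mul_volume_le_band_of_volume_le_ball (hf : ContDiff ℝ 1 f) (hfc : HasCompactSupport f)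
    (hs : 0 ≤ s) (hst : s < t) (hr : 0 < r)
    (hv : volume {x | s < |f x|} ≤ volume (ball (0 : 𝔼 n) r)) :
    n / r * (t - s) * volume.real {x | t ≤ |f x|} ≤
      ∫ x in {x | s < |f x| ∧ |f x| < t}, ‖fderiv ℝ f x‖ := by
  refine mul_volume_le_band hf hfc hs hst hr ?_
  rw [← volume_real_ball (0 : 𝔼 n) hr]
  exact ENNReal.toReal_mono measure_ball_lt_top.ne hv

lemma hasBandIsoperimetry_truncation (hf : ContDiff ℝ 1 f) (hfc : HasCompactSupport f)
    (hT : 0 ≤ T) :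
    HasBandIsoperimetry (fun x => max (|f x| - T) 0) fun x => ‖fderiv ℝ f x‖ where
  continuous := (hf.continuous.abs.sub continuous_const).max continuous_const
  nonneg _ := le_max_right _ _
  hasCompactSupport := hfc.comp_left (g := fun u : ℝ => max (|u| - T) 0) (by simpa using hT)
  memLp_bound := memLp_norm_fderiv hf hfc
  band_le r s t hr hs hst hv := by
    have lt_iff (x : 𝔼 n) : s < max (|f x| - T) 0 ↔ s + T < |f x| := by
      rw [lt_max_iff, or_iff_left hs.not_gt, lt_sub_iff_add_lt]
    have le_iff (x : 𝔼 n) : t ≤ max (|f x| - T) 0 ↔ t + T ≤ |f x| := by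
      rw [le_max_iff, or_iff_left (hs.trans_lt hst).not_ge, le_sub_iff_add_le]
    have gt_iff (x : 𝔼 n) : max (|f x| - T) 0 < t ↔ |f x| < t + T := by
      rw [← not_le, le_iff, not_le]
    simp only [lt_iff] at hv
    simpa only [lt_iff, le_iff, gt_iff, add_sub_add_right_eq_sub] using
      mul_volume_le_band_of_volume_le_ball hf hfc (add_nonneg hs hT) (add_lt_add_left hst T) hr hv

lemma sobolevConstant_ball_mul_truncation_le (hn : 0 < n) (hp : 0 < p) (hf : ContDiff ℝ 1 f)
    (hfc : HasCompactSupport f) (hT : 0 ≤ T)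
    (hv : volume {x | T < |f x|} ≤ volume (ball (0 : 𝔼 n) ρ)) :
    sobolevConstant p (ball (0 : 𝔼 n) ρ) * (∫ x, max (|f x| - T) 0 ^ p) ^ (2 / p) ≤
      ∫ x, ‖fderiv ℝ f x‖ ^ 2 := by
  refine ((hasBandIsoperimetry_truncation hf hfc hT).sobolevConstant_ball_mul_le hn hp ?_).trans
    (setIntegral_le_integral (memLp_norm_fderiv hf hfc).integrable_sq
      (ae_of_all _ fun _ => sq_nonneg _))
  simpa only [lt_max_iff, lt_irrefl, or_false, sub_pos] using hv

theorem sobolevConstant_ball_le (hn : 0 < n) (hp : 0 < p) (hΩ : IsOpen Ω) (hne : Ω.Nonempty)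
    (hv : volume Ω ≤ volume (ball (0 : 𝔼 n) ρ)) :
    sobolevConstant p (ball (0 : 𝔼 n) ρ) ≤ sobolevConstant p Ω := by
  refine le_sobolevConstant hp hΩ hne fun u ⟨contDiff, compact, subset, _⟩ => ?_
  have superlevel_subset : {x | 0 < |u x|} ⊆ Ω :=
    (superlevelSet_subset_tsupport u le_rfl).trans subset
  have max_abs (x : 𝔼 n) : max |u x| 0 = |u x| := max_eq_left (abs_nonneg _)
  simpa only [sub_zero, max_abs] using
    sobolevConstant_ball_mul_truncation_le hn hp contDiff compact le_rfl
      ((measure_mono superlevel_subset).trans hv)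

end Truncation

/-! ### Strictness of the Faber–Krahn inequality -/

/-- The `Lᵖ` mean of `f` over `Ω`, for `f` vanishing outside `Ω`. -/
def lpMean {n : ℕ} (p : ℝ) (Ω : Set (𝔼 n)) (f : 𝔼 n → ℝ) : ℝ :=
  ((∫ x, |f x| ^ p) / volume.real Ω) ^ (1 / p)

section SmallSuperlevel

variable {n : ℕ} {f : 𝔼 n → ℝ} {p ρ θ : ℝ} {Ω : Set (𝔼 n)}

lemma lpMean_nonneg (p : ℝ) (Ω : Set (𝔼 n)) (f : 𝔼 n → ℝ) : 0 ≤ lpMean p Ω f :=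
  Real.rpow_nonneg (div_nonneg (integral_rpow_abs_nonneg f p) measureReal_nonneg) _

lemma volume_mul_lpMean_rpow (hp : p ≠ 0) (hΩ : volume.real Ω ≠ 0) :
    volume.real Ω * lpMean p Ω f ^ p = ∫ x, |f x| ^ p := by
  rw [lpMean, ← Real.rpow_mul (div_nonneg (integral_rpow_abs_nonneg f p) measureReal_nonneg),
    one_div_mul_cancel hp, Real.rpow_one, mul_div_cancel₀ _ hΩ]

lemma lpMean_sq (p : ℝ) (Ω : Set (𝔼 n)) (f : 𝔼 n → ℝ) :
    lpMean p Ω f ^ 2 = (∫ x, |f x| ^ p) ^ (2 / p) / volume.real Ω ^ (2 / p) := by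
  have ratio_nonneg : 0 ≤ (∫ x, |f x| ^ p) / volume.real Ω :=
    div_nonneg (integral_rpow_abs_nonneg f p) measureReal_nonneg
  rw [lpMean, ← Real.rpow_mul_natCast ratio_nonneg,
    ← Real.div_rpow (integral_rpow_abs_nonneg f p) measureReal_nonneg]
  congr 1
  push_cast
  ring

lemma add_mul_rpow_le (hp : 1 ≤ p) (hθ : 0 ≤ θ) (hθ1 : θ < 1) {a g : ℝ} (ha : 0 ≤ a)
    (hg : 0 ≤ g) : (g + θ * a) ^ p ≤ (1 - θ) / (1 - θ) ^ p * g ^ p + θ * a ^ p := by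
  have one_sub_pos : 0 < 1 - θ := sub_pos.2 hθ1
  have convex := (convexOn_rpow hp).2 (mem_Ici.2 (div_nonneg hg one_sub_pos.le)) (mem_Ici.2 ha)
    one_sub_pos.le hθ (by ring)
  simp only [smul_eq_mul] at convex
  rw [mul_div_cancel₀ _ one_sub_pos.ne', Real.div_rpow hg one_sub_pos.le] at convex
  exact convex.trans_eq (by ring)

lemma rpow_abs_le_truncation_add_indicator (hp : 1 ≤ p) (hfΩ : tsupport f ⊆ Ω) (hθ : 0 ≤ θ)
    (hθ1 : θ < 1) {a : ℝ} (ha : 0 ≤ a) (x : 𝔼 n) :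
    |f x| ^ p ≤ (1 - θ) / (1 - θ) ^ p * max (|f x| - θ * a) 0 ^ p +
      Ω.indicator (fun _ => θ * a ^ p) x := by
  by_cases hx : x ∈ Ω
  · rw [indicator_of_mem hx]
    refine (Real.rpow_le_rpow (abs_nonneg _) ?_ (by linarith)).trans
      (add_mul_rpow_le hp hθ hθ1 ha (le_max_right _ _))
    linarith [le_max_left (|f x| - θ * a) 0]
  · have hfx : f x = 0 := image_eq_zero_of_notMem_tsupport fun h => hx (hfΩ h)
    rw [hfx, abs_zero, Real.zero_rpow (by linarith), indicator_of_notMem hx, add_zero]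
    have := sub_pos.2 hθ1
    exact mul_nonneg (by positivity) (Real.rpow_nonneg (le_max_right _ _) _)

lemma one_sub_rpow_mul_integral_le_truncation (hp : 1 ≤ p) (hf : Continuous f)
    (hfc : HasCompactSupport f) (hfΩ : tsupport f ⊆ Ω) (hΩm : MeasurableSet Ω)
    (hΩ : volume Ω ≠ 0) (hΩ' : volume Ω ≠ ⊤) (hθ : 0 ≤ θ) (hθ1 : θ < 1) :
    (1 - θ) ^ p * ∫ x, |f x| ^ p ≤ ∫ x, max (|f x| - θ * lpMean p Ω f) 0 ^ p := by
  have hp0 : 0 < p := by linarith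
  have one_sub_pos : 0 < 1 - θ := sub_pos.2 hθ1
  have mean_nonneg := lpMean_nonneg p Ω f
  set g : 𝔼 n → ℝ := fun x => max (|f x| - θ * lpMean p Ω f) 0
  have g_cont : Continuous g := (hf.abs.sub continuous_const).max continuous_const
  have g_integrable : Integrable fun x => g x ^ p :=
    (g_cont.rpow_const fun _ => Or.inr hp0.le).integrable_of_hasCompactSupport
      (hfc.comp_left (g := fun u : ℝ => max (|u| - θ * lpMean p Ω f) 0 ^ p)
        (by simp [hp0.ne', mul_nonneg hθ mean_nonneg]))
  have indicator_integrable : Integrable (Ω.indicator fun _ => θ * lpMean p Ω f ^ p) :=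
    (integrable_indicator_iff hΩm).2 (integrableOn_const hΩ')
  have integral_le : ∫ x, |f x| ^ p ≤
      (1 - θ) / (1 - θ) ^ p * (∫ x, g x ^ p) + θ * ∫ x, |f x| ^ p := calc
    _ ≤ ∫ x, ((1 - θ) / (1 - θ) ^ p * g x ^ p + Ω.indicator (fun _ => θ * lpMean p Ω f ^ p) x) :=
        integral_mono_of_nonneg (ae_of_all _ fun _ => Real.rpow_nonneg (abs_nonneg _) _)
          ((g_integrable.const_mul _).add indicator_integrable)
          (ae_of_all _ (rpow_abs_le_truncation_add_indicator hp hfΩ hθ hθ1 mean_nonneg))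
    _ = (1 - θ) / (1 - θ) ^ p * (∫ x, g x ^ p) + volume.real Ω * (θ * lpMean p Ω f ^ p) := by
        rw [integral_add (g_integrable.const_mul _) indicator_integrable, integral_const_mul,
          integral_indicator hΩm, setIntegral_const, smul_eq_mul]
    _ = _ := by
        rw [mul_left_comm, volume_mul_lpMean_rpow hp0.ne' (ENNReal.toReal_pos hΩ hΩ').ne']
  have scaled_le : (1 - θ) * ∫ x, |f x| ^ p ≤ (1 - θ) * ((∫ x, g x ^ p) / (1 - θ) ^ p) := by
    linear_combination integral_le
  exact (le_div_iff₀' (by positivity)).1 (le_of_mul_le_mul_left scaled_le one_sub_pos)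

lemma sobolevConstant_ball_mul_le_of_volume_superlevel_le (hn : 0 < n) (hp : 1 ≤ p)
    (hf : Admissible Ω f) (hΩm : MeasurableSet Ω) (hΩ : volume Ω ≠ 0) (hΩ' : volume Ω ≠ ⊤)
    (hθ : 0 ≤ θ) (hθ1 : θ < 1)
    (hv : volume {x | θ * lpMean p Ω f < |f x|} ≤ volume (ball (0 : 𝔼 n) ρ)) :
    sobolevConstant p (ball (0 : 𝔼 n) ρ) * (1 - θ) ^ 2 * (∫ x, |f x| ^ p) ^ (2 / p) ≤
      ∫ x, ‖fderiv ℝ f x‖ ^ 2 := by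
  obtain ⟨contDiff, compact, subset, -⟩ := hf
  have hp0 : 0 < p := by linarith
  have one_sub_pos : 0 < 1 - θ := sub_pos.2 hθ1
  have integral_nonneg := integral_rpow_abs_nonneg f p
  have sobolev_nonneg := sobolevConstant_nonneg p (ball (0 : 𝔼 n) ρ)
  calc _ = sobolevConstant p (ball (0 : 𝔼 n) ρ) * ((1 - θ) ^ p * ∫ x, |f x| ^ p) ^ (2 / p) := by
        rw [Real.mul_rpow (by positivity) integral_nonneg, ← Real.rpow_mul one_sub_pos.le,
          mul_div_cancel₀ _ hp0.ne', Real.rpow_ofNat, mul_assoc]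
    _ ≤ sobolevConstant p (ball (0 : 𝔼 n) ρ) *
          (∫ x, max (|f x| - θ * lpMean p Ω f) 0 ^ p) ^ (2 / p) := by
        gcongr
        exact one_sub_rpow_mul_integral_le_truncation hp contDiff.continuous compact subset hΩm hΩ
          hΩ' hθ hθ1
    _ ≤ _ := sobolevConstant_ball_mul_truncation_le hn hp0 contDiff compact
        (mul_nonneg hθ (lpMean_nonneg p Ω f)) hv

end SmallSuperlevel

/-- On every band of `|f|` below the height `T`, the isoperimetric estimate for the superlevel sets
of `|f|` holds with the right-hand side reduced by the factor `l`. -/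
def HasImprovedLowBands {n : ℕ} (f : 𝔼 n → ℝ) (T l : ℝ) : Prop :=
  ∀ ⦃r s t : ℝ⦄, 0 < r → 0 ≤ s → s < t → t ≤ T →
    volume {x | s < |f x|} ≤ volume (ball (0 : 𝔼 n) r) →
    n / r * (t - s) * volume.real {x | t ≤ |f x|} ≤
      l * ∫ x in {x | s < |f x| ∧ |f x| < t}, ‖fderiv ℝ f x‖

/-- The length of the gradient of `f`, damped by the factor `l` where `|f| < T`: the bound that
improved low bands allow in place of the gradient itself. -/
def dampedGradient {n : ℕ} (f : 𝔼 n → ℝ) (T l : ℝ) (x : 𝔼 n) : ℝ :=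
  (if |f x| < T then l else 1) * ‖fderiv ℝ f x‖

section DampedGradient

variable {n : ℕ} {f : 𝔼 n → ℝ} {p ρ r s t T l : ℝ}

lemma dampedGradient_of_lt {x : 𝔼 n} (hx : |f x| < T) :
    dampedGradient f T l x = l * ‖fderiv ℝ f x‖ := by
  rw [dampedGradient, if_pos hx]

lemma dampedGradient_of_le {x : 𝔼 n} (hx : T ≤ |f x|) :
    dampedGradient f T l x = ‖fderiv ℝ f x‖ := by
  rw [dampedGradient, if_neg hx.not_gt, one_mul]

lemma dampedGradient_nonneg (hl : 0 ≤ l) (x : 𝔼 n) : 0 ≤ dampedGradient f T l x :=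
  mul_nonneg (by split_ifs <;> simp [hl]) (norm_nonneg _)

lemma dampedGradient_le (hl : l ≤ 1) (x : 𝔼 n) : dampedGradient f T l x ≤ ‖fderiv ℝ f x‖ :=
  mul_le_of_le_one_left (norm_nonneg _) (by split_ifs <;> simp [hl])

lemma measurable_dampedGradient (hf : ContDiff ℝ 1 f) : Measurable (dampedGradient f T l) :=
  (Measurable.ite (isOpen_lt hf.continuous.abs continuous_const).measurableSet measurable_const
    measurable_const).mul (hf.continuous_fderiv one_ne_zero).norm.measurable

lemma norm_dampedGradient_le (hl : 0 ≤ l) (hl1 : l ≤ 1) (x : 𝔼 n) :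
    ‖dampedGradient f T l x‖ ≤ ‖fderiv ℝ f x‖ := by
  rw [Real.norm_of_nonneg (dampedGradient_nonneg hl x)]
  exact dampedGradient_le hl1 x

lemma memLp_dampedGradient (hf : ContDiff ℝ 1 f) (hfc : HasCompactSupport f) (hl : 0 ≤ l)
    (hl1 : l ≤ 1) : MemLp (dampedGradient f T l) 2 volume :=
  (memLp_norm_fderiv hf hfc).of_le (measurable_dampedGradient hf).aestronglyMeasurable
    (ae_of_all _ fun x => by rw [norm_norm]; exact norm_dampedGradient_le hl hl1 x)

lemma integrable_dampedGradient (hf : ContDiff ℝ 1 f) (hfc : HasCompactSupport f) (hl : 0 ≤ l)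
    (hl1 : l ≤ 1) : Integrable (dampedGradient f T l) :=
  ((hf.continuous_fderiv one_ne_zero).norm.integrable_of_hasCompactSupport
    (hfc.fderiv ℝ).norm).mono' (measurable_dampedGradient hf).aestronglyMeasurable
      (ae_of_all _ (norm_dampedGradient_le hl hl1))

lemma setIntegral_dampedGradient_of_le (hf : Continuous f) (htT : t ≤ T) :
    ∫ x in {x | s < |f x| ∧ |f x| < t}, dampedGradient f T l x =
      l * ∫ x in {x | s < |f x| ∧ |f x| < t}, ‖fderiv ℝ f x‖ := by
  rw [← integral_const_mul]
  exact setIntegral_congr_fun (measurableSet_band hf s t)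
    fun _ hx => dampedGradient_of_lt (hx.2.trans_le htT)

lemma setIntegral_dampedGradient_of_ge (hf : Continuous f) (hTs : T ≤ s) :
    ∫ x in {x | s < |f x| ∧ |f x| < t}, dampedGradient f T l x =
      ∫ x in {x | s < |f x| ∧ |f x| < t}, ‖fderiv ℝ f x‖ :=
  setIntegral_congr_fun (measurableSet_band hf s t)
    fun _ hx => dampedGradient_of_le (hTs.trans hx.1.le)

lemma add_setIntegral_dampedGradient_le (hf : ContDiff ℝ 1 f) (hfc : HasCompactSupport f)
    (hl : 0 ≤ l) (hl1 : l ≤ 1) (hsT : s < T) (hTt : T < t) :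
    (∫ x in {x | s < |f x| ∧ |f x| < T}, dampedGradient f T l x) +
        ∫ x in {x | T < |f x| ∧ |f x| < t}, dampedGradient f T l x ≤
      ∫ x in {x | s < |f x| ∧ |f x| < t}, dampedGradient f T l x := by
  have integrable := integrable_dampedGradient (T := T) hf hfc hl hl1
  have disjoint : Disjoint {x | s < |f x| ∧ |f x| < T} {x | T < |f x| ∧ |f x| < t} :=
    disjoint_left.2 fun _ low high => low.2.not_gt high.1
  rw [← setIntegral_union disjoint (measurableSet_band hf.continuous _ _) integrable.integrableOn
    integrable.integrableOn]
  refine setIntegral_mono_set integrable.integrableOn (ae_of_all _ (dampedGradient_nonneg hl))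
    (ae_of_all _ ?_)
  rintro _ (low | high)
  · exact ⟨low.1, low.2.trans hTt⟩
  · exact ⟨hsT.trans high.1, high.2⟩

lemma HasImprovedLowBands.le_setIntegral_dampedGradient_of_lt_of_lt
    (h : HasImprovedLowBands f T l) (hf : ContDiff ℝ 1 f) (hfc : HasCompactSupport f)
    (hl : 0 ≤ l) (hl1 : l ≤ 1) (hr : 0 < r) (hs : 0 ≤ s) (hsT : s < T) (hTt : T < t)
    (hv : volume {x | s < |f x|} ≤ volume (ball (0 : 𝔼 n) r)) :
    n / r * (t - s) * volume.real {x | t ≤ |f x|} ≤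
      ∫ x in {x | s < |f x| ∧ |f x| < t}, dampedGradient f T l x := by
  have low := h hr hs hsT le_rfl hv
  have high := mul_volume_le_band_of_volume_le_ball hf hfc (hs.trans hsT.le) hTt hr
    ((measure_mono fun _ => hsT.trans).trans hv)
  have level_mono : volume.real {x | t ≤ |f x|} ≤ volume.real {x | T ≤ |f x|} :=
    measureReal_mono (fun _ => hTt.le.trans) (ne_top_of_le_ne_top
      (volume_superlevelSet_ne_top hfc hs) (measure_mono fun _ => hsT.trans_le))
  have : 0 ≤ T - s := sub_nonneg.2 hsT.le
  calc n / r * (t - s) * volume.real {x | t ≤ |f x|}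
      = n / r * (T - s) * volume.real {x | t ≤ |f x|} +
          n / r * (t - T) * volume.real {x | t ≤ |f x|} := by ring
    _ ≤ n / r * (T - s) * volume.real {x | T ≤ |f x|} +
          n / r * (t - T) * volume.real {x | t ≤ |f x|} := by gcongr
    _ ≤ (∫ x in {x | s < |f x| ∧ |f x| < T}, dampedGradient f T l x) +
          ∫ x in {x | T < |f x| ∧ |f x| < t}, dampedGradient f T l x := by
        rw [setIntegral_dampedGradient_of_le hf.continuous le_rfl,
          setIntegral_dampedGradient_of_ge hf.continuous le_rfl]
        exact add_le_add low high
    _ ≤ _ := add_setIntegral_dampedGradient_le hf hfc hl hl1 hsT hTt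

lemma HasImprovedLowBands.hasBandIsoperimetry (h : HasImprovedLowBands f T l)
    (hf : ContDiff ℝ 1 f) (hfc : HasCompactSupport f) (hl : 0 ≤ l) (hl1 : l ≤ 1) :
    HasBandIsoperimetry (fun x => |f x|) (dampedGradient f T l) where
  continuous := hf.continuous.abs
  nonneg _ := abs_nonneg _
  hasCompactSupport := hfc.comp_left (g := fun u : ℝ => |u|) abs_zero
  memLp_bound := memLp_dampedGradient hf hfc hl hl1
  band_le r s t hr hs hst hv := by
    rcases le_or_gt t T with htT | hTt
    · rw [setIntegral_dampedGradient_of_le hf.continuous htT]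
      exact h hr hs hst htT hv
    rcases le_or_gt T s with hTs | hsT
    · rw [setIntegral_dampedGradient_of_ge hf.continuous hTs]
      exact mul_volume_le_band_of_volume_le_ball hf hfc hs hst hr hv
    · exact h.le_setIntegral_dampedGradient_of_lt_of_lt hf hfc hl hl1 hr hs hsT hTt hv

lemma integral_dampedGradient_sq_add_le (hf : ContDiff ℝ 1 f) (hfc : HasCompactSupport f)
    (hl : 0 ≤ l) (hl1 : l ≤ 1) :
    (∫ x, dampedGradient f T l x ^ 2) +
        (1 - l ^ 2) * ∫ x in {x | 0 < |f x| ∧ |f x| < T}, ‖fderiv ℝ f x‖ ^ 2 ≤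
      ∫ x, ‖fderiv ℝ f x‖ ^ 2 := by
  have band_meas := measurableSet_band hf.continuous 0 T
  have damped_integrable := (memLp_dampedGradient (T := T) hf hfc hl hl1).integrable_sq
  have integrable := (memLp_norm_fderiv hf hfc).integrable_sq
  have indicator_integrable := (integrable.const_mul (1 - l ^ 2)).indicator band_meas
  rw [← integral_const_mul, ← integral_indicator band_meas,
    ← integral_add damped_integrable indicator_integrable]
  refine integral_mono (damped_integrable.add indicator_integrable) integrable fun x => ?_
  by_cases hx : x ∈ {x | 0 < |f x| ∧ |f x| < T}
  · rw [indicator_of_mem hx, dampedGradient_of_lt hx.2]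
    exact le_of_eq (by ring)
  · rw [indicator_of_notMem hx, add_zero]
    exact pow_le_pow_left₀ (dampedGradient_nonneg hl x) (dampedGradient_le hl1 x) 2

lemma HasImprovedLowBands.sobolevConstant_ball_mul_add_le (h : HasImprovedLowBands f T l)
    (hn : 0 < n) (hp : 0 < p) (hf : ContDiff ℝ 1 f) (hfc : HasCompactSupport f) (hl : 0 ≤ l)
    (hl1 : l ≤ 1) (hv : volume {x | 0 < |f x|} ≤ volume (ball (0 : 𝔼 n) ρ)) :
    sobolevConstant p (ball (0 : 𝔼 n) ρ) * (∫ x, |f x| ^ p) ^ (2 / p) +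
        (1 - l ^ 2) * ∫ x in {x | 0 < |f x| ∧ |f x| < T}, ‖fderiv ℝ f x‖ ^ 2 ≤
      ∫ x, ‖fderiv ℝ f x‖ ^ 2 := by
  refine le_trans (add_le_add_left ?_ _) (integral_dampedGradient_sq_add_le (T := T) hf hfc hl hl1)
  exact ((h.hasBandIsoperimetry hf hfc hl hl1).sobolevConstant_ball_mul_le hn hp hv).trans
    (setIntegral_le_integral (memLp_dampedGradient hf hfc hl hl1).integrable_sq
      (ae_of_all _ fun _ => sq_nonneg _))

end DampedGradient

section ImprovedIsoperimetry

variable {n : ℕ} {f : 𝔼 n → ℝ} {ρ s t T κ : ℝ} {Ω E : Set (𝔼 n)}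

lemma IsIsoperimetricWeight.mono {U V : Set (𝔼 n)} {w : 𝔼 n → ℝ} (hw : IsIsoperimetricWeight V w)
    (hUV : U ⊆ V) : IsIsoperimetricWeight U w := fun h hh =>
  hw h ⟨hh.contDiff, hh.hasCompactSupport, hh.nonneg, hh.tsupport_subset.trans hUV⟩

lemma measureReal_add_le_add_inter {α : Type*} [MeasurableSpace α] {μ : Measure α}
    {S E Ω : Set α} (hS : S ⊆ Ω) (hE : E ⊆ Ω) (hEm : MeasurableSet E) (hΩ : μ Ω ≠ ⊤) :
    μ.real S + μ.real E ≤ μ.real Ω + μ.real (S ∩ E) := by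
  rw [← measureReal_union_add_inter hEm (ne_top_of_le_ne_top hΩ (measure_mono hS))
    (ne_top_of_le_ne_top hΩ (measure_mono hE))]
  gcongr
  exact union_subset hS hE

lemma IsIsoperimetricWeight.mul_add_le_band {δ : ℝ}
    (hw : IsIsoperimetricWeight Ω fun x => n / ρ + E.indicator (fun _ => δ) x) (hδ : 0 ≤ δ)
    (hρ : 0 ≤ ρ) (hE : MeasurableSet E) (hf : ContDiff ℝ 1 f) (hfc : HasCompactSupport f)
    (hfΩ : tsupport f ⊆ Ω) (hs : 0 ≤ s) (hst : s < t) :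
    (t - s) * (n / ρ * volume.real {x | t ≤ |f x|} + δ * volume.real ({x | t ≤ |f x|} ∩ E)) ≤
      ∫ x in {x | s < |f x| ∧ |f x| < t}, ‖fderiv ℝ f x‖ := by
  have level_finite : volume {x | t ≤ |f x|} ≠ ⊤ :=
    ne_top_of_le_ne_top (volume_superlevelSet_ne_top hfc hs) (measure_mono fun _ => hst.trans_le)
  have weight_integral : ∫ x in {x | t ≤ |f x|}, ((n / ρ : ℝ) + E.indicator (fun _ => δ) x) =
      n / ρ * volume.real {x | t ≤ |f x|} + δ * volume.real ({x | t ≤ |f x|} ∩ E) := by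
    have const_integrable (c : ℝ) : IntegrableOn (fun _ => c) {x | t ≤ |f x|} :=
      integrableOn_const level_finite
    rw [integral_add (const_integrable _) ((const_integrable δ).indicator hE), setIntegral_const,
      setIntegral_indicator hE, setIntegral_const, smul_eq_mul, smul_eq_mul, mul_comm,
      mul_comm δ]
  rw [← weight_integral]
  exact (hw.mono ((superlevelSet_subset_tsupport f hs).trans hfΩ)).mul_setIntegral_le_band hf hfc
    (measurable_const.add (measurable_const.indicator hE))
    (fun x => add_nonneg (by positivity) (indicator_nonneg (fun _ _ => hδ) x))
    (fun x => add_le_add_right (indicator_le_self' (fun _ _ => hδ) x) _) hs hst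

lemma HasImprovedIsoperimetry.exists_gain (h : HasImprovedIsoperimetry Ω ρ) (hρ : 0 ≤ ρ)
    (hΩ : volume Ω ≠ ⊤) :
    ∃ κ > n / ρ, ∃ v < volume.real Ω, ∀ (f : 𝔼 n → ℝ) (s t : ℝ), ContDiff ℝ 1 f →
      HasCompactSupport f → tsupport f ⊆ Ω → 0 ≤ s → s < t → v ≤ volume.real {x | t ≤ |f x|} →
      κ * (t - s) * volume.real {x | t ≤ |f x|} ≤
        ∫ x in {x | s < |f x| ∧ |f x| < t}, ‖fderiv ℝ f x‖ := by
  obtain ⟨δ, δ_pos, E, E_sub, E_meas, E_pos, weight⟩ := h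
  have e_pos : 0 < volume.real E :=
    ENNReal.toReal_pos E_pos.ne' (ne_top_of_le_ne_top hΩ (measure_mono E_sub))
  have V_pos : 0 < volume.real Ω := e_pos.trans_le (measureReal_mono E_sub hΩ)
  refine ⟨n / ρ + δ * (volume.real E / 2) / volume.real Ω, lt_add_of_pos_right _ (by positivity),
    volume.real Ω - volume.real E / 2, sub_lt_self _ (half_pos e_pos), ?_⟩
  intro f s t hf hfc hfΩ hs hst level_large
  have level_sub : {x | t ≤ |f x|} ⊆ Ω := fun x hx =>
    hfΩ (superlevelSet_subset_tsupport f hs (hst.trans_le hx))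
  have overlap : volume.real E / 2 ≤ volume.real ({x | t ≤ |f x|} ∩ E) := by
    linarith [measureReal_add_le_add_inter level_sub E_sub E_meas hΩ]
  have level_le : volume.real {x | t ≤ |f x|} / volume.real Ω ≤ 1 :=
    div_le_one_of_le₀ (measureReal_mono level_sub hΩ) V_pos.le
  have sub_nonneg : 0 ≤ t - s := sub_nonneg.2 hst.le
  calc _ = (t - s) * (n / ρ * volume.real {x | t ≤ |f x|} +
          δ * (volume.real E / 2) * (volume.real {x | t ≤ |f x|} / volume.real Ω)) := by ring
    _ ≤ (t - s) * (n / ρ * volume.real {x | t ≤ |f x|} +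
          δ * volume.real ({x | t ≤ |f x|} ∩ E)) := by
        refine mul_le_mul_of_nonneg_left (add_le_add_right ?_ _) sub_nonneg
        exact (mul_le_of_le_one_right (by positivity) level_le).trans (by gcongr)
    _ ≤ _ := weight.mul_add_le_band δ_pos.le hρ E_meas hf hfc hfΩ hs hst

lemma exists_radius_lt {v : ℝ} (hρ : 0 < ρ) (hκ : n / ρ < κ)
    (hv : v < volume.real (ball (0 : 𝔼 n) ρ)) :
    ∃ r, 0 < r ∧ r < ρ ∧ n / r < κ ∧ v < volume.real (ball (0 : 𝔼 n) r) := by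
  rw [volume_real_ball 0 hρ] at hv
  have pos : ∀ᶠ r in 𝓝[<] ρ, 0 < r := nhdsWithin_le_nhds (lt_mem_nhds hρ)
  have slope : ∀ᶠ r : ℝ in 𝓝[<] ρ, n / r < κ := nhdsWithin_le_nhds
    ((continuousAt_const.div continuousAt_id hρ.ne').eventually_lt continuousAt_const hκ)
  have mass : ∀ᶠ r in 𝓝[<] ρ, v < unitBallVol n * r ^ n := nhdsWithin_le_nhds
    (continuousAt_const.eventually_lt (by fun_prop) hv)
  obtain ⟨r, ⟨⟨hr, slope⟩, mass⟩, hrρ⟩ :=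
    (((pos.and slope).and mass).and self_mem_nhdsWithin).exists
  exact ⟨r, hr, hrρ, slope, by rwa [volume_real_ball 0 hr]⟩

lemma HasImprovedIsoperimetry.exists_hasImprovedLowBands (h : HasImprovedIsoperimetry Ω ρ)
    (hn : 0 < n) (hρ : 0 < ρ) (hv : volume Ω = volume (ball (0 : 𝔼 n) ρ)) :
    ∃ r l, 0 < r ∧ r < ρ ∧ 0 ≤ l ∧ l < 1 ∧ ∀ (f : 𝔼 n → ℝ) (T : ℝ), ContDiff ℝ 1 f →
      HasCompactSupport f → tsupport f ⊆ Ω → volume (ball (0 : 𝔼 n) r) < volume {x | T < |f x|} →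
      HasImprovedLowBands f T l := by
  have hΩ : volume Ω ≠ ⊤ := hv ▸ measure_ball_lt_top.ne
  obtain ⟨κ, hκ, v, hvΩ, gain⟩ := h.exists_gain hρ.le hΩ
  rw [Measure.real, hv] at hvΩ
  obtain ⟨r₁, hr₁, hr₁ρ, slope, mass⟩ := exists_radius_lt hρ hκ hvΩ
  have κ_pos : 0 < κ := hκ.trans' (by positivity)
  refine ⟨r₁, n / r₁ / κ, hr₁, hr₁ρ, by positivity, (div_lt_one κ_pos).2 slope, ?_⟩
  intro f T hf hfc hfΩ large r s t hr hs hst htT hvs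
  have r₁_le : r₁ ≤ r := by
    refine ((volume_ball_lt_volume_ball_iff hn hr₁.le hr.le).1 (large.trans_le ?_)).le
    exact (measure_mono fun _ => (hst.trans_le htT).trans).trans hvs
  have v_le : v ≤ volume.real {x | t ≤ |f x|} := by
    refine mass.le.trans (ENNReal.toReal_mono ?_ (large.le.trans
      (measure_mono fun _ hx => htT.trans (le_of_lt hx))))
    exact ne_top_of_le_ne_top (volume_superlevelSet_ne_top hfc hs)
      (measure_mono fun _ => hst.trans_le)
  have : 0 ≤ t - s := sub_nonneg.2 hst.le
  calc _ ≤ n / r₁ * (t - s) * volume.real {x | t ≤ |f x|} := by gcongr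
    _ = n / r₁ / κ * (κ * (t - s) * volume.real {x | t ≤ |f x|}) := by field_simp
    _ ≤ _ := mul_le_mul_of_nonneg_left (gain f s t hf hfc hfΩ hs hst v_le) (by positivity)

lemma sq_mul_volume_le_volume_mul_energy (hf : ContDiff ℝ 1 f) (hfc : HasCompactSupport f)
    (hT : 0 < T) (hρ : 0 < ρ) (hv : volume {x | 0 < |f x|} ≤ volume (ball (0 : 𝔼 n) ρ)) :
    (n / ρ * T * volume.real {x | T ≤ |f x|}) ^ 2 ≤ volume.real (ball (0 : 𝔼 n) ρ) *
      ∫ x in {x | 0 < |f x| ∧ |f x| < T}, ‖fderiv ℝ f x‖ ^ 2 := by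
  have band_le : volume {x | 0 < |f x| ∧ |f x| < T} ≤ volume (ball (0 : 𝔼 n) ρ) :=
    (measure_mono fun _ hx => hx.1).trans hv
  have : IsFiniteMeasure (volume.restrict {x | 0 < |f x| ∧ |f x| < T}) :=
    ⟨by simpa using band_le.trans_lt measure_ball_lt_top⟩
  calc _ ≤ (∫ x in {x | 0 < |f x| ∧ |f x| < T}, ‖fderiv ℝ f x‖) ^ 2 := by
        gcongr
        simpa only [sub_zero] using mul_volume_le_band_of_volume_le_ball hf hfc le_rfl hT hρ hv
    _ ≤ volume.real {x | 0 < |f x| ∧ |f x| < T} *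
          ∫ x in {x | 0 < |f x| ∧ |f x| < T}, ‖fderiv ℝ f x‖ ^ 2 := by
        simpa only [measureReal_restrict_apply_univ] using
          sq_integral_le_measureReal_mul ((memLp_norm_fderiv hf hfc).restrict _)
    _ ≤ _ := mul_le_mul_of_nonneg_right (ENNReal.toReal_mono measure_ball_lt_top.ne band_le)
        (integral_nonneg fun _ => sq_nonneg _)

end ImprovedIsoperimetry

section Strictness

variable {n : ℕ} {f : 𝔼 n → ℝ} {p ρ r l θ : ℝ} {Ω : Set (𝔼 n)}

lemma lpMean_pos (hp : 0 < p) (hf : Admissible Ω f) (hΩ : 0 < volume.real Ω) :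
    0 < lpMean p Ω f :=
  Real.rpow_pos_of_pos (div_pos (integral_rpow_abs_pos hp hf) hΩ) _

lemma sobolevConstant_ball_add_mul_le_of_volume_lt_superlevel (hn : 0 < n) (hp : 0 < p)
    (hf : Admissible Ω f) (hρ : 0 < ρ) (hv : volume Ω = volume (ball (0 : 𝔼 n) ρ)) (hθ : 0 < θ)
    (hl : 0 ≤ l) (hl1 : l ≤ 1) (hlow : HasImprovedLowBands f (θ * lpMean p Ω f) l)
    (hr : volume (ball (0 : 𝔼 n) r) < volume {x | θ * lpMean p Ω f < |f x|}) :
    (sobolevConstant p (ball (0 : 𝔼 n) ρ) + (1 - l ^ 2) *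
        (n / ρ * θ * volume.real (ball (0 : 𝔼 n) r)) ^ 2 /
          (volume.real Ω * volume.real Ω ^ (2 / p))) * (∫ x, |f x| ^ p) ^ (2 / p) ≤
      ∫ x, ‖fderiv ℝ f x‖ ^ 2 := by
  have V_pos : 0 < volume.real Ω :=
    ENNReal.toReal_pos (hv ▸ (measure_ball_pos _ _ hρ).ne') (hv ▸ measure_ball_lt_top.ne)
  have V_eq : volume.real Ω = volume.real (ball (0 : 𝔼 n) ρ) := congrArg ENNReal.toReal hv
  have mean_pos := lpMean_pos hp hf V_pos
  have mean_sq := lpMean_sq p Ω f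
  obtain ⟨contDiff, compact, subset, -⟩ := hf
  set T := θ * lpMean p Ω f with hT
  have T_pos : 0 < T := mul_pos hθ mean_pos
  have support_le : volume {x | 0 < |f x|} ≤ volume (ball (0 : 𝔼 n) ρ) :=
    hv ▸ measure_mono ((superlevelSet_subset_tsupport f le_rfl).trans subset)
  have level_large : volume.real (ball (0 : 𝔼 n) r) ≤ volume.real {x | T ≤ |f x|} :=
    ENNReal.toReal_mono (ne_top_of_le_ne_top (volume_superlevelSet_ne_top compact le_rfl)
      (measure_mono fun _ => T_pos.trans_le))
      (hr.le.trans (measure_mono fun _ (hx : T < _) => hx.le))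
  have low_energy : (n / ρ * T * volume.real (ball (0 : 𝔼 n) r)) ^ 2 / volume.real Ω ≤
      ∫ x in {x | 0 < |f x| ∧ |f x| < T}, ‖fderiv ℝ f x‖ ^ 2 := by
    rw [div_le_iff₀' V_pos, V_eq]
    refine le_trans ?_ (sq_mul_volume_le_volume_mul_energy contDiff compact T_pos hρ support_le)
    gcongr
  have one_sub_nonneg : 0 ≤ 1 - l ^ 2 := sub_nonneg.2 (pow_le_one₀ hl hl1)
  refine le_trans ?_
    (hlow.sobolevConstant_ball_mul_add_le hn hp contDiff compact hl hl1 support_le)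
  rw [add_mul]
  refine add_le_add_right (Eq.trans_le ?_ (mul_le_mul_of_nonneg_left low_energy one_sub_nonneg)) _
  rw [hT, show ∀ a b c : ℝ, (a * (θ * b) * c) ^ 2 = (a * θ * c) ^ 2 * b ^ 2 by intros; ring,
    mean_sq]
  ring

lemma exists_lt_mul_one_sub_sq {C D : ℝ} (h : C < D) :
    ∃ θ, 0 < θ ∧ θ < 1 ∧ C < D * (1 - θ) ^ 2 := by
  have below : ∀ᶠ θ in 𝓝[>] (0 : ℝ), C < D * (1 - θ) ^ 2 := nhdsWithin_le_nhds
    (continuousAt_const.eventually_lt (by fun_prop) (by simpa using h))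
  obtain ⟨θ, below, hθ, hθ1⟩ := (below.and (Ioo_mem_nhdsGT one_pos)).exists
  exact ⟨θ, hθ, hθ1, below⟩

theorem sobolevConstant_ball_lt_of_hasImprovedIsoperimetry (hn : 2 ≤ n) (hp : 1 ≤ p)
    (hpn : (n : ℝ) - 2 < 2 * n / p) (hΩ : IsOpen Ω) (hρ : 0 < ρ)
    (hv : volume Ω = volume (ball (0 : 𝔼 n) ρ)) (h : HasImprovedIsoperimetry Ω ρ) :
    sobolevConstant p (ball (0 : 𝔼 n) ρ) < sobolevConstant p Ω := by
  have hp0 : 0 < p := by linarith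
  have hn0 : 0 < n := by lia
  have V_ne_zero : volume Ω ≠ 0 := hv ▸ (measure_ball_pos _ _ hρ).ne'
  have V_ne_top : volume Ω ≠ ⊤ := hv ▸ measure_ball_lt_top.ne
  have V_pos : 0 < volume.real Ω := ENNReal.toReal_pos V_ne_zero V_ne_top
  obtain ⟨r, l, hr, hrρ, hl, hl1, low_bands⟩ := h.exists_hasImprovedLowBands hn0 hρ hv
  obtain ⟨θ, hθ, hθ1, lt_truncated⟩ := exists_lt_mul_one_sub_sq
    (sobolevConstant_ball_strictAntiOn hn hp0 hpn hr hρ hrρ)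
  have W_pos : 0 < volume.real (ball (0 : 𝔼 n) r) :=
    ENNReal.toReal_pos (measure_ball_pos _ _ hr).ne' measure_ball_lt_top.ne
  have one_sub_pos : 0 < 1 - l ^ 2 := sub_pos.2 (pow_lt_one₀ hl hl1 two_ne_zero)
  have lt_damped := lt_add_of_pos_right (sobolevConstant p (ball (0 : 𝔼 n) ρ))
    (show 0 < (1 - l ^ 2) * (n / ρ * θ * volume.real (ball (0 : 𝔼 n) r)) ^ 2 /
      (volume.real Ω * volume.real Ω ^ (2 / p)) by positivity)
  refine (lt_min lt_damped lt_truncated).trans_le (le_sobolevConstant hp0 hΩ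
    (nonempty_of_measure_ne_zero V_ne_zero) fun f hf => ?_)
  have norm_nonneg : 0 ≤ (∫ x, |f x| ^ p) ^ (2 / p) :=
    Real.rpow_nonneg (integral_rpow_abs_nonneg f p) _
  rcases le_or_gt (volume {x | θ * lpMean p Ω f < |f x|}) (volume (ball (0 : 𝔼 n) r))
    with small | large
  · exact (mul_le_mul_of_nonneg_right (min_le_right _ _) norm_nonneg).trans
      (sobolevConstant_ball_mul_le_of_volume_superlevel_le hn0 hp hf hΩ.measurableSet V_ne_zero
        V_ne_top hθ.le hθ1 small)
  · exact (mul_le_mul_of_nonneg_right (min_le_left _ _) norm_nonneg).trans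
      (sobolevConstant_ball_add_mul_le_of_volume_lt_superlevel hn0 hp0 hf hρ hv hθ hl hl1.le
        (low_bands f _ hf.1 hf.2.1 hf.2.2.1 large) large)

theorem sobolevConstant_ball_eq_iff (hn : 2 ≤ n) (hp : 1 ≤ p) (hpn : (n : ℝ) - 2 < 2 * n / p)
    (hΩ : interior (closure Ω) = Ω) (hΩc : IsConnected Ω) (hΩb : Bornology.IsBounded Ω)
    (hρ : 0 < ρ) (hv : volume Ω = volume (ball (0 : 𝔼 n) ρ)) :
    sobolevConstant p (ball (0 : 𝔼 n) ρ) = sobolevConstant p Ω ↔ ∃ c, Ω = ball c ρ := by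
  refine ⟨fun h_eq => ?_, ?_⟩
  · have volume_real : volume.real Ω = unitBallVol n * ρ ^ n := by
      rw [Measure.real, hv, ← Measure.real, volume_real_ball 0 hρ]
    exact (exists_eq_ball_or_hasImprovedIsoperimetry hn hΩ hΩb hΩc hρ volume_real).resolve_right
      fun improved => (sobolevConstant_ball_lt_of_hasImprovedIsoperimetry hn hp hpn
        (hΩ ▸ isOpen_interior) hρ hv improved).ne h_eq
  · rintro ⟨c, rfl⟩
    exact sobolevConstant_ball_eq (by linarith) 0 c hρ

end Strictness

lemma sub_two_lt_two_mul_div {n : ℕ} (hn : 2 ≤ n) {p : ℝ} (hp : 0 < p)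
    (hpn : 3 ≤ n → p < 2 * (n : ℝ) / ((n : ℝ) - 2)) : (n : ℝ) - 2 < 2 * n / p := by
  rcases hn.eq_or_lt with rfl | hn3
  · rw [Nat.cast_ofNat, sub_self]
    positivity
  · have sub_pos : 0 < (n : ℝ) - 2 := sub_pos.2 (by exact_mod_cast hn3)
    exact (lt_div_comm₀ sub_pos hp).2 (hpn hn3)

theorem ball_inclusion_faber_krahn_general {n : ℕ} (hn : 2 ≤ n) {Ω : Set (𝔼 n)}
    (hΩ : interior (closure Ω) = Ω) (hΩc : IsConnected Ω) (hΩb : Bornology.IsBounded Ω) {p : ℝ}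
    (hp1 : 1 ≤ p) (hp2 : 3 ≤ n → p < 2 * (n : ℝ) / ((n : ℝ) - 2)) {R ρ : ℝ} (hR : 0 < R)
    (hρ : 0 < ρ) (hCp : sobolevConstant p (ball (0 : 𝔼 n) R) = sobolevConstant p Ω)
    (hvol : volume (ball (0 : 𝔼 n) ρ) = volume Ω) :
    ball (0 : 𝔼 n) R ⊆ ball (0 : 𝔼 n) ρ ∧
      (ball (0 : 𝔼 n) R = ball (0 : 𝔼 n) ρ ↔ ∃ c, Ω = ball c ρ) := by
  have hp0 : 0 < p := by linarith
  have hpn := sub_two_lt_two_mul_div hn hp0 hp2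
  have strictAnti := sobolevConstant_ball_strictAntiOn hn hp0 hpn
  have faber_krahn : sobolevConstant p (ball (0 : 𝔼 n) ρ) ≤ sobolevConstant p Ω :=
    sobolevConstant_ball_le (by lia) hp0 (hΩ ▸ isOpen_interior) hΩc.nonempty hvol.ge
  have hRρ : R ≤ ρ := (strictAnti.le_iff_ge hρ hR).1 (faber_krahn.trans_eq hCp.symm)
  refine ⟨ball_subset_ball hRρ, ?_⟩
  rw [← sobolevConstant_ball_eq_iff hn hp1 hpn hΩ hΩc hΩb hρ hvol.symm, ← hCp]
  exact ⟨fun ball_eq => by rw [ball_eq], fun h_eq => by rw [strictAnti.injOn hρ hR h_eq]⟩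

/-- Faber–Krahn comparison of the two balls. Let `Ω*` be the ball centered at
the origin with `|Ω*| = |Ω|` and `B*` the ball with `C_p(B*) = C_p(Ω)`. Then `B* ⊆ Ω*`, with
equality if and only if `Ω` is a ball. -/
theorem ball_inclusion_faber_krahn (n : ℕ) (hn : 2 ≤ n)
    (Ω : Set (EuclideanSpace ℝ (Fin n)))
    (hΩo : IsOpen Ω) (hΩc : IsConnected Ω) (hΩb : Bornology.IsBounded Ω)
    (hΩbd : HasC1Boundary Ω)
    (p : ℝ) (hp1 : 1 ≤ p) (hp2 : 3 ≤ n → p < 2 * (n : ℝ) / ((n : ℝ) - 2))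
    (R ρ : ℝ) (hR : 0 < R) (hρ : 0 < ρ)
    (hCp : sobolevConstant p (ball (0 : EuclideanSpace ℝ (Fin n)) R) = sobolevConstant p Ω)
    (hvol : volume (ball (0 : EuclideanSpace ℝ (Fin n)) ρ) = volume Ω) :
    ball (0 : EuclideanSpace ℝ (Fin n)) R ⊆ ball (0 : EuclideanSpace ℝ (Fin n)) ρ ∧
      (ball (0 : EuclideanSpace ℝ (Fin n)) R = ball (0 : EuclideanSpace ℝ (Fin n)) ρ ↔
        ∃ c : EuclideanSpace ℝ (Fin n), Ω = ball c ρ) :=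
  ball_inclusion_faber_krahn_general hn (hΩbd.interior_closure_eq hΩo) hΩc hΩb hp1 hp2 hR hρ hCp
    hvol
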